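/- arXiv:2102.00285 — 3 statements merged into one kernel-verified Lean document; each statement's English description precedes it below -/
import Mathlib

section
/- Let F be a free group with basis X, and let r be a cyclically reduced element of F that contains a basis element x ∈ X. Then the subgroup of F/⟨⟨r⟩⟩ generated by the images of X \ {x} is free on those images; equivalently, the free group on X \ {x} embeds canonically into F/⟨⟨r⟩⟩. -/
/-- An element of a free group is cyclically reduced if the first and last letters of its
reduced word are not inverse to each other. -/
def CyclicallyReduced {X : Type} [DecidableEq X] (r : FreeGroup X) : Prop :=
  ∀ (x : X) (b : Bool), r.toWord.head? = some (x, b) → r.toWord.getLast? ≠ some (x, !b)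

namespace Frei

/-- The subgroup of a free group generated by a set of basis elements. -/
def FS {X : Type} (S : Set X) : Subgroup (FreeGroup X) :=
  Subgroup.closure (FreeGroup.of '' S)

lemma of_mem_FS {X : Type} {S : Set X} {y : X} (h : y ∈ S) : FreeGroup.of y ∈ FS S :=
  Subgroup.subset_closure ⟨y, h, rfl⟩

lemma FS_mono {X : Type} {S T : Set X} (h : S ⊆ T) : FS S ≤ FS T :=
  Subgroup.closure_mono (Set.image_mono h)

lemma map_mem_of_FS {X : Type} {G : Type*} [Group G] {S : Set X} (f : FreeGroup X →* G)
    (K : Subgroup G) (h : ∀ y ∈ S, f (FreeGroup.of y) ∈ K) {u : FreeGroup X} (hu : u ∈ FS S) :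
    f u ∈ K := by
  have : FS S ≤ K.comap f := by
    rw [FS, Subgroup.closure_le]
    rintro _ ⟨y, hy, rfl⟩
    exact h y hy
  exact this hu

lemma hom_eq_on_FS {X : Type} {G : Type*} [Group G] {S : Set X} (f g : FreeGroup X →* G)
    (h : ∀ y ∈ S, f (FreeGroup.of y) = g (FreeGroup.of y)) {u : FreeGroup X} (hu : u ∈ FS S) :
    f u = g u := by
  have : FS S ≤ f.eqLocus g := by
    rw [FS, Subgroup.closure_le]
    rintro _ ⟨y, hy, rfl⟩
    exact h y hy
  exact this hu

lemma mk_mem_FS {X : Type} (L : List (X × Bool)) (S : Set X) (h : ∀ p ∈ L, p.1 ∈ S) :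
    FreeGroup.mk L ∈ FS S := by
  induction L with
  | nil => exact (FS S).one_mem
  | cons a L ih =>
    have : FreeGroup.mk (a :: L) = FreeGroup.mk [a] * FreeGroup.mk L := by
      rw [FreeGroup.mul_mk]; rfl
    rw [this]
    refine mul_mem ?_ (ih fun p hp => h p (List.mem_cons_of_mem _ hp))
    have ha := of_mem_FS (h a List.mem_cons_self)
    obtain ⟨a, b⟩ := a
    cases b
    · have h2 := inv_mem ha
      rwa [FreeGroup.of, FreeGroup.inv_mk] at h2
    · exact ha

lemma mem_FS_of_toWord {X : Type} [DecidableEq X] (r : FreeGroup X) (S : Set X)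
    (h : ∀ p ∈ r.toWord, p.1 ∈ S) : r ∈ FS S := by
  rw [← FreeGroup.mk_toWord (x := r)]
  exact mk_mem_FS _ _ h

/-- `r` is not conjugate into the subgroup generated by the basis elements other than `x`. -/
def NC {X : Type} (r : FreeGroup X) (x : X) : Prop :=
  ∀ g, g * r * g⁻¹ ∉ FS {y | y ≠ x}

/-- The conclusion of the Freiheitssatz for `r` and `x`. -/
def FH {X : Type} (r : FreeGroup X) (x : X) : Prop :=
  ∀ u ∈ FS {y | y ≠ x}, u ∈ Subgroup.normalClosure {r} → u = 1

/-- Shifting the indices. -/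
def shift (X : Type) (k : ℤ) : X × ℤ ≃ X × ℤ :=
  (Equiv.refl X).prodCongr (Equiv.addRight k)

/-- The shift action on the free group. -/
def sg (X : Type) : Multiplicative ℤ →* MulAut (FreeGroup (X × ℤ)) where
  toFun k := FreeGroup.freeGroupCongr (shift X k.toAdd)
  map_one' := by
    ext u
    change FreeGroup.map _ u = u
    have : (shift X (Multiplicative.toAdd 1) : X × ℤ → X × ℤ) = id := by
      ext p <;> simp [shift]
    rw [this, FreeGroup.map.id]
  map_mul' a b := by
    ext u
    change FreeGroup.map _ u = FreeGroup.map _ (FreeGroup.map _ u)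
    rw [FreeGroup.map.comp]
    congr 2
    ext p <;> simp [shift] ; ring

lemma sg_of {X : Type} (k : Multiplicative ℤ) (c : X) (i : ℤ) :
    sg X k (FreeGroup.of (c, i)) = FreeGroup.of (c, i + k.toAdd) := by
  change FreeGroup.map (shift X k.toAdd) (FreeGroup.of (c, i)) = _
  simp [shift]

lemma conj_key {N G : Type*} [Group N] [Group G] (P : N →* G)
    (σ : Multiplicative ℤ →* MulAut N) (t : G)
    (hsh : ∀ v, P (σ (Multiplicative.ofAdd 1) v) = t * P v * t⁻¹) (n : Multiplicative ℤ) :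
    P.comp (σ n).toMonoidHom = (MulAut.conj (zpowersHom G t n)).toMonoidHom.comp P := by
  have key : ∀ n : ℤ, ∀ v, P (σ (Multiplicative.ofAdd n) v) = t ^ n * P v * (t ^ n)⁻¹ := by
    intro n
    induction n using Int.induction_on with
    | zero => simp
    | succ n ih =>
      intro v
      rw [add_comm, ofAdd_add, _root_.map_mul, MulAut.mul_apply, hsh, ih, zpow_add, zpow_one,
        mul_inv_rev]
      simp only [mul_assoc]
    | pred n ih =>
      intro v
      have h3 := hsh (σ (Multiplicative.ofAdd (-(n:ℤ) - 1)) v)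
      rw [← MulAut.mul_apply, ← _root_.map_mul, ← ofAdd_add, add_sub_cancel, ih] at h3
      have h4 : P (σ (Multiplicative.ofAdd (-(n:ℤ) - 1)) v) =
          t⁻¹ * (t ^ (-(n:ℤ)) * P v * (t ^ (-(n:ℤ)))⁻¹) * t := by
        rw [h3]; group
      rw [h4]
      group
  ext v
  exact key n.toAdd v

open SemidirectProduct in
theorem core {X : Type} (s : FreeGroup (X × ℤ)) (d : X) (m M : ℤ)
    (hsW : s ∈ FS {p : X × ℤ | p.1 = d → m ≤ p.2 ∧ p.2 ≤ M})
    (hm : FH s (d, m)) (hM : FH s (d, M)) (g : X × ℤ) (hg : FH s g)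
    (u : FreeGroup (X × ℤ)) (huW : u ∈ FS {p : X × ℤ | p.1 = d → m ≤ p.2 ∧ p.2 ≤ M})
    (hug : u ∈ FS {p : X × ℤ | p ≠ g})
    (hu : (inl u : FreeGroup (X × ℤ) ⋊[sg X] Multiplicative ℤ) ∈
      Subgroup.normalClosure {inl s}) : u = 1 := by
  classical
  let q := QuotientGroup.mk' (Subgroup.normalClosure {s})
  have hq : ∀ v, q v = 1 → v ∈ Subgroup.normalClosure {s} := fun v hv =>
    (QuotientGroup.eq_one_iff v).1 hv
  let V : Set (X × ℤ) := {p | p.1 = d → m ≤ p.2 ∧ p.2 < M}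
  let f1 : FreeGroup V →* FreeGroup (X × ℤ) := FreeGroup.map Subtype.val
  let f2 : FreeGroup V →* FreeGroup (X × ℤ) := FreeGroup.map (fun p => (p.1.1, p.1.2 + 1))
  have h1 : Function.Injective (q.comp f1) := by
    rw [injective_iff_map_eq_one]
    intro v hv
    have hv1 := hM (f1 v) (map_mem_of_FS (S := Set.univ) f1 _ (by
      rintro ⟨⟨c, i⟩, hy⟩ -
      simp only [f1, FreeGroup.map.of]
      apply of_mem_FS
      intro h
      simp only [Prod.mk.injEq] at h
      have := hy h.1
      simp only at this
      omega) (by rw [FS, Set.image_univ, FreeGroup.closure_range_of]; trivial)) (hq _ hv)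
    exact FreeGroup.map_injective Subtype.val_injective (by rw [_root_.map_one]; exact hv1)
  have h2 : Function.Injective (q.comp f2) := by
    rw [injective_iff_map_eq_one]
    intro v hv
    have hv1 := hm (f2 v) (map_mem_of_FS (S := Set.univ) f2 _ (by
      rintro ⟨⟨c, i⟩, hy⟩ -
      simp only [f2, FreeGroup.map.of]
      apply of_mem_FS
      intro h
      simp only [Prod.mk.injEq] at h
      have := hy h.1
      simp only at this
      omega) (by rw [FS, Set.image_univ, FreeGroup.closure_range_of]; trivial)) (hq _ hv)
    refine FreeGroup.map_injective (f := fun p : V => (p.1.1, p.1.2 + 1)) ?_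
      (by rw [_root_.map_one]; exact hv1)
    rintro ⟨⟨c, i⟩, h⟩ ⟨⟨c', i'⟩, h'⟩ hh
    simpa using hh
  let e1 := MonoidHom.ofInjective h1
  let e2 := MonoidHom.ofInjective h2
  let φ : (q.comp f1).range ≃* (q.comp f2).range := e1.symm.trans e2
  let G := HNNExtension _ _ _ φ
  let o : _ →* G := HNNExtension.of
  let t : G := HNNExtension.t
  have ho : Function.Injective o := HNNExtension.of_injective φ
  have ht : ∀ p ∈ V, o (q (FreeGroup.of (p.1, p.2 + 1))) = t * o (q (FreeGroup.of p)) * t⁻¹ := by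
    intro p hp
    have h3 := HNNExtension.equiv_eq_conj (φ := φ) (e1 (FreeGroup.of ⟨p, hp⟩))
    have h4 : φ (e1 (FreeGroup.of ⟨p, hp⟩)) = e2 (FreeGroup.of ⟨p, hp⟩) := by simp [φ]
    rw [h4] at h3
    exact h3
  let P : FreeGroup (X × ℤ) →* G := FreeGroup.lift fun p =>
    if p.1 = d then t ^ (p.2 - m) * o (q (FreeGroup.of (d, m))) * (t ^ (p.2 - m))⁻¹
    else o (q (FreeGroup.of p))
  have hP : ∀ p : X × ℤ, (p.1 = d → m ≤ p.2 ∧ p.2 ≤ M) →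
      P (FreeGroup.of p) = o (q (FreeGroup.of p)) := by
    rintro ⟨c, i⟩ hp
    by_cases hc : c = d
    · subst hc
      obtain ⟨hi1, hi2⟩ := hp rfl
      simp only at hi1 hi2
      simp only [P, FreeGroup.lift_apply_of, if_true]
      induction i, hi1 using Int.leInduction with
      | base => simp
      | succ i hi ih =>
        have h3 := ht (c, i) (fun _ => ⟨hi, by simp only; omega⟩)
        simp only at h3
        rw [h3, ← ih (fun _ => ⟨hi, by simp only; omega⟩) (by omega)]
        rw [show i + 1 - m = 1 + (i - m) by ring, zpow_add]
        simp [mul_assoc]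
    · simp [P, hc]
  have hPs : ∀ v ∈ FS {p : X × ℤ | p.1 = d → m ≤ p.2 ∧ p.2 ≤ M}, P v = o (q v) := fun v hv =>
    hom_eq_on_FS P (o.comp q) hP hv
  have hsh : ∀ v, P (sg X (Multiplicative.ofAdd 1) v) = t * P v * t⁻¹ := by
    intro v
    have : P.comp (sg X (Multiplicative.ofAdd 1)).toMonoidHom = (MulAut.conj t).toMonoidHom.comp P := by
      ext ⟨c, i⟩
      simp only [MonoidHom.comp_apply, MulEquiv.toMonoidHom_eq_coe, MonoidHom.coe_coe, sg_of,
        MulAut.conj_apply, toAdd_ofAdd]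
      by_cases hc : c = d
      · simp only [P, FreeGroup.lift_apply_of, hc, if_true]
        rw [show i + 1 - m = 1 + (i - m) by ring, zpow_add]
        simp [mul_assoc]
      · simp only [P, FreeGroup.lift_apply_of, hc, if_false]
        exact ht (c, i) (fun h => absurd h hc)
    exact DFunLike.congr_fun this v
  let Q : FreeGroup (X × ℤ) ⋊[sg X] Multiplicative ℤ →* G :=
    SemidirectProduct.lift P (zpowersHom G t) (by
      exact conj_key P (sg X) t hsh)
  have hQ : Subgroup.normalClosure {(inl s : FreeGroup (X × ℤ) ⋊[sg X] Multiplicative ℤ)} ≤ Q.ker := by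
    apply Subgroup.normalClosure_le_normal
    rintro _ rfl
    simp only [SetLike.mem_coe, MonoidHom.mem_ker, Q, lift_inl]
    rw [hPs s hsW]
    have : q s = 1 := (QuotientGroup.eq_one_iff s).2 (Subgroup.subset_normalClosure rfl)
    rw [this, _root_.map_one]
  have h5 := hQ hu
  simp only [MonoidHom.mem_ker, Q, lift_inl] at h5
  rw [hPs u huW] at h5
  exact hg u hug (hq u (ho (by rw [h5, _root_.map_one])))

/-- Total weight homomorphism. -/
def phi {X : Type} (w : X → ℤ) : FreeGroup X →* Multiplicative ℤ :=
  FreeGroup.lift fun y => Multiplicative.ofAdd (w y)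

open Classical in
/-- The Magnus rewriting homomorphism, with stable letter `b`. -/
noncomputable def psi {X : Type} (b : X) (w : X → ℤ) :
    FreeGroup X →* FreeGroup (X × ℤ) ⋊[sg X] Multiplicative ℤ :=
  FreeGroup.lift fun y => if y = b then SemidirectProduct.inr (Multiplicative.ofAdd (w b))
    else SemidirectProduct.inl (FreeGroup.of (y, 0)) *
      SemidirectProduct.inr (Multiplicative.ofAdd (w y))

/-- The partial inverse of the rewriting. -/
def theta {X : Type} (b : X) (w : X → ℤ) : FreeGroup (X × ℤ) →* FreeGroup X :=
  FreeGroup.lift fun p => FreeGroup.of b ^ (p.2 / w b) * FreeGroup.of p.1 *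
    (FreeGroup.of b ^ ((p.2 + w p.1) / w b))⁻¹

lemma psi_right {X : Type} (b : X) (w : X → ℤ) (g : FreeGroup X) :
    (psi b w g).right = phi w g := by
  have : SemidirectProduct.rightHom.comp (psi b w) = phi w := by
    ext y
    by_cases h : y = b <;> simp [psi, phi, h]
  exact DFunLike.congr_fun this g

lemma theta_psi {X : Type} (b : X) (w : X → ℤ) (hb : w b ≠ 0) (g : FreeGroup X) :
    ∀ k : ℤ, theta b w (sg X (Multiplicative.ofAdd k) (psi b w g).left) =
      FreeGroup.of b ^ (k / w b) * g * (FreeGroup.of b ^ ((k + (phi w g).toAdd) / w b))⁻¹ := by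
  have hmul : ∀ x y : FreeGroup X,
    (∀ k : ℤ, theta b w (sg X (Multiplicative.ofAdd k) (psi b w x).left) =
      FreeGroup.of b ^ (k / w b) * x * (FreeGroup.of b ^ ((k + (phi w x).toAdd) / w b))⁻¹) →
    (∀ k : ℤ, theta b w (sg X (Multiplicative.ofAdd k) (psi b w y).left) =
      FreeGroup.of b ^ (k / w b) * y * (FreeGroup.of b ^ ((k + (phi w y).toAdd) / w b))⁻¹) →
    (∀ k : ℤ, theta b w (sg X (Multiplicative.ofAdd k) (psi b w (x * y)).left) =
      FreeGroup.of b ^ (k / w b) * (x * y) *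
        (FreeGroup.of b ^ ((k + (phi w (x * y)).toAdd) / w b))⁻¹) := by
    intro x y hx hy k
    rw [_root_.map_mul, SemidirectProduct.mul_left, _root_.map_mul, _root_.map_mul, hx, psi_right,
      ← MulAut.mul_apply, ← _root_.map_mul]
    have := hy (k + (phi w x).toAdd)
    rw [ofAdd_add, ofAdd_toAdd] at this
    rw [this, _root_.map_mul, toAdd_mul, add_assoc]
    group
  have hof : ∀ y : X, ∀ k : ℤ,
      theta b w (sg X (Multiplicative.ofAdd k) (psi b w (FreeGroup.of y)).left) =
      FreeGroup.of b ^ (k / w b) * FreeGroup.of y *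
        (FreeGroup.of b ^ ((k + (phi w (FreeGroup.of y)).toAdd) / w b))⁻¹ := by
    intro y k
    by_cases h : y = b
    · subst h
      have h1 : (k + w y) / w y = k / w y + 1 := by
        rw [Int.add_ediv_of_dvd_right (dvd_refl _), Int.ediv_self hb]
      simp [psi, phi, h1, zpow_add]
    · simp [psi, phi, h, sg_of, theta]
  induction g using FreeGroup.induction_on with
  | C1 => simp
  | of y => exact hof y
  | inv_of y _ =>
    intro k
    have h1 := hof y (k - w y)
    have h2 : (psi b w (FreeGroup.of y)⁻¹).left =
        sg X (Multiplicative.ofAdd (- w y)) ((psi b w (FreeGroup.of y)).left)⁻¹ := by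
      rw [map_inv, SemidirectProduct.inv_left, psi_right]
      simp [phi]
    rw [h2, ← MulAut.mul_apply, ← _root_.map_mul, ← ofAdd_add, ← sub_eq_add_neg, map_inv, map_inv,
      h1]
    simp [phi, mul_assoc, sub_eq_add_neg]
  | mul x y hx hy => exact hmul x y hx hy

lemma norm_map_le {X Y : Type} [DecidableEq X] [DecidableEq Y] (f : X → Y) (g : FreeGroup X) :
    (FreeGroup.map f g).norm ≤ g.norm := by
  conv_lhs => rw [← FreeGroup.mk_toWord (x := g), FreeGroup.map.mk]
  refine FreeGroup.norm_mk_le.trans ?_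
  simp [FreeGroup.norm]

lemma norm_sg_le {X : Type} [DecidableEq X] (k : Multiplicative ℤ) (g : FreeGroup (X × ℤ)) :
    (sg X k g).norm ≤ g.norm := norm_map_le _ g

lemma mk_cons {X : Type} (a : X × Bool) (L : List (X × Bool)) :
    FreeGroup.mk (a :: L) = FreeGroup.mk [a] * FreeGroup.mk L := by
  rw [FreeGroup.mul_mk]; rfl

lemma mk_false {X : Type} (a : X) : FreeGroup.mk [(a, false)] = (FreeGroup.of a)⁻¹ := by
  rw [FreeGroup.of, FreeGroup.inv_mk]; rfl

lemma mk_true {X : Type} (a : X) : FreeGroup.mk [(a, true)] = FreeGroup.of a := rfl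

lemma norm_psi {X : Type} [DecidableEq X] (b : X) (w : X → ℤ) (L : List (X × Bool)) :
    (psi b w (FreeGroup.mk L)).left.norm ≤ L.countP (fun p => p.1 ≠ b) := by
  induction L with
  | nil => 
    rw [show FreeGroup.mk ([] : List (X × Bool)) = 1 from rfl]
    simp
  | cons a L ih =>
    rw [mk_cons, _root_.map_mul, SemidirectProduct.mul_left, List.countP_cons]
    refine (FreeGroup.norm_mul_le _ _).trans ?_
    rw [add_comm]
    refine add_le_add ((norm_sg_le _ _).trans ih) ?_
    obtain ⟨a, c⟩ := a
    by_cases h : a = b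
    · cases c <;> simp [h, mk_false, mk_true, psi]
    · cases c
      · simp only [mk_false, psi, map_inv, FreeGroup.lift_apply_of, h, if_false,
          SemidirectProduct.inv_left]
        rw [FreeGroup.norm_inv_eq, ← map_inv]
        refine (norm_sg_le (X := X) _ _).trans ?_
        simp [h]
      · simp [h, mk_true, psi]

open Classical in
/-- Killing one generator. -/
noncomputable def kill {X : Type} (b : X) : FreeGroup X →* FreeGroup X :=
  FreeGroup.lift fun y => if y = b then 1 else FreeGroup.of y

lemma kill_eq {X : Type} (b : X) {u : FreeGroup X} (hu : u ∈ FS {y | y ≠ b}) : kill b u = u :=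
  hom_eq_on_FS (kill b) (MonoidHom.id _) (by intro y (hy : y ≠ b); simp [kill, hy]) hu

lemma norm_kill {X : Type} [DecidableEq X] (b : X) (L : List (X × Bool)) :
    (kill b (FreeGroup.mk L)).norm ≤ L.countP (fun p => p.1 ≠ b) := by
  induction L with
  | nil => 
    rw [show FreeGroup.mk ([] : List (X × Bool)) = 1 from rfl]
    simp
  | cons a L ih =>
    rw [mk_cons, _root_.map_mul, List.countP_cons]
    refine (FreeGroup.norm_mul_le _ _).trans ?_
    rw [add_comm]
    refine add_le_add ih ?_
    obtain ⟨a, c⟩ := a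
    by_cases h : a = b
    · cases c <;> simp [h, mk_false, mk_true, kill]
    · cases c <;> simp [h, mk_false, mk_true, kill]

lemma countP_lt {X : Type} [DecidableEq X] (b : X) (L : List (X × Bool)) (p : X × Bool)
    (hp : p ∈ L) (h : p.1 = b) : L.countP (fun p => p.1 ≠ b) < L.length := by
  refine lt_of_le_of_ne List.countP_le_length fun h2 => ?_
  rw [List.countP_eq_length] at h2
  simpa [h] using h2 p hp

lemma exists_min {X : Type} [DecidableEq X] (s : FreeGroup X) :
    ∃ g : FreeGroup X, (g * s * g⁻¹).norm ≤ s.norm ∧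
      ∀ p ∈ (g * s * g⁻¹).toWord, NC (g * s * g⁻¹) p.1 := by
  let f : FreeGroup X → ℕ := fun g => (g * s * g⁻¹).norm
  obtain ⟨g, hg⟩ : ∃ g, ∀ h, f g ≤ f h := ⟨Function.argmin f, fun h => Function.argmin_le f h⟩
  refine ⟨g, ?_, ?_⟩
  · simpa [f] using hg 1
  · intro p hp h hh
    have h1 := kill_eq p.1 hh
    have h2 := norm_kill p.1 (g * s * g⁻¹).toWord
    have h3 := countP_lt p.1 _ p hp rfl
    rw [FreeGroup.mk_toWord] at h2
    have h4 := h2.trans_lt h3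
    change _ < f g at h4
    rw [_root_.map_mul, _root_.map_mul, map_inv] at h1
    have h5 : kill p.1 (g * s * g⁻¹) =
        ((kill p.1 h)⁻¹ * h * g) * s * ((kill p.1 h)⁻¹ * h * g)⁻¹ := by
      rw [show kill p.1 (g * s * g⁻¹) = (kill p.1 h)⁻¹ * (kill p.1 h * kill p.1 (g * s * g⁻¹) *
        (kill p.1 h)⁻¹) * kill p.1 h by group, h1]
      group
    rw [h5] at h4
    exact absurd (hg _) (not_le.2 h4)

lemma psi_mem {X : Type} (b : X) (w : X → ℤ) (r : FreeGroup X) (hr : phi w r = 1)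
    (g : FreeGroup (X × ℤ)) (u : FreeGroup X) (hu : u ∈ Subgroup.normalClosure {r}) :
    SemidirectProduct.inl (psi b w u).left ∈ Subgroup.normalClosure
      {(SemidirectProduct.inl (g * (psi b w r).left * g⁻¹) :
        FreeGroup (X × ℤ) ⋊[sg X] Multiplicative ℤ)} ∧ phi w u = 1 := by
  have h0 : ∀ v, phi w v = 1 → psi b w v = SemidirectProduct.inl (psi b w v).left := by
    intro v hv
    ext
    · simp
    · rw [psi_right, hv]; simp
  have hu1 : phi w u = 1 := by
    have : Subgroup.normalClosure {r} ≤ (phi w).ker := by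
      apply Subgroup.normalClosure_le_normal
      rintro _ rfl
      exact hr
    exact this hu
  refine ⟨?_, hu1⟩
  rw [← h0 u hu1]
  set N := Subgroup.normalClosure
      {(SemidirectProduct.inl (g * (psi b w r).left * g⁻¹) :
        FreeGroup (X × ℤ) ⋊[sg X] Multiplicative ℤ)} with hN
  have : Subgroup.normalClosure {r} ≤ N.comap (psi b w) := by
    apply Subgroup.normalClosure_le_normal
    intro r' (hr' : r' = r)
    rw [hr']
    change psi b w r ∈ N
    rw [h0 _ hr]
    have h1 : SemidirectProduct.inl (g * (psi b w r).left * g⁻¹) ∈ N :=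
      Subgroup.subset_normalClosure rfl
    have h2 := (Subgroup.normalClosure_normal : N.Normal).conj_mem _ h1 (SemidirectProduct.inl g⁻¹)
    rw [← map_inv, ← _root_.map_mul, ← _root_.map_mul] at h2
    convert h2 using 2
    group
  exact this hu

lemma window {X : Type} [DecidableEq X] (s : FreeGroup (X × ℤ)) (d : X) (i : ℤ) (c : Bool)
    (h : ((d, i), c) ∈ s.toWord) : ∃ m M : ℤ, m ≤ i ∧ i ≤ M ∧
      (∃ c, ((d, m), c) ∈ s.toWord) ∧ (∃ c, ((d, M), c) ∈ s.toWord) ∧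
      s ∈ FS {p : X × ℤ | p.1 = d → m ≤ p.2 ∧ p.2 ≤ M} := by
  let I : Finset ℤ := ((s.toWord.toFinset.filter (fun p => p.1.1 = d)).image (fun p => p.1.2))
  have hI : ∀ j, j ∈ I ↔ ∃ c, ((d, j), c) ∈ s.toWord := by
    intro j
    simp only [I, Finset.mem_image, Finset.mem_filter, List.mem_toFinset]
    constructor
    · rintro ⟨⟨⟨d', j'⟩, c⟩, ⟨h1, rfl⟩, rfl⟩
      exact ⟨c, h1⟩
    · rintro ⟨c, h1⟩
      exact ⟨_, ⟨h1, rfl⟩, rfl⟩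
  have hi : i ∈ I := (hI i).2 ⟨c, h⟩
  refine ⟨I.min' ⟨i, hi⟩, I.max' ⟨i, hi⟩, I.min'_le _ hi, I.le_max' _ hi,
    (hI _).1 (I.min'_mem _), (hI _).1 (I.max'_mem _), mem_FS_of_toWord _ _ ?_⟩
  rintro ⟨⟨d', j⟩, c⟩ h1 h2
  simp only at h2
  subst h2
  have : j ∈ I := (hI j).2 ⟨c, h1⟩
  exact ⟨I.min'_le _ this, I.le_max' _ this⟩

lemma phi_comb {X : Type} (b x : X) (hbx : b ≠ x) [DecidableEq X] (α β : ℤ) (g : FreeGroup X) :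
    (phi (fun z => if z = b then α else if z = x then -β else 0) g).toAdd =
      α * (phi (fun z => if z = b then 1 else 0) g).toAdd -
      β * (phi (fun z => if z = x then 1 else 0) g).toAdd := by
  have hof : ∀ y, (phi (fun z => if z = b then α else if z = x then -β else 0)
      (FreeGroup.of y)).toAdd =
      α * (phi (fun z => if z = b then 1 else 0) (FreeGroup.of y)).toAdd -
      β * (phi (fun z => if z = x then 1 else 0) (FreeGroup.of y)).toAdd := by
    intro y
    simp only [phi, FreeGroup.lift_apply_of, toAdd_ofAdd]
    by_cases h1 : y = b
    · subst h1; simp [hbx]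
    · by_cases h2 : y = x
      · subst h2; simp [h1]
      · simp [h1, h2]
  induction g using FreeGroup.induction_on with
  | C1 => simp
  | of y => exact hof y
  | inv_of y _ => simp only [map_inv, toAdd_inv, hof]; ring
  | mul x y hx hy => simp only [_root_.map_mul, toAdd_mul, hx, hy]; ring

theorem main (n : ℕ) : ∀ (X : Type) [DecidableEq X] (r : FreeGroup X) (x : X), r.norm = n →
    NC r x → FH r x := by
  induction n using Nat.strong_induction_on with
  | _ n IH =>
  intro X _ r x hn hNC u huF hu
  have hxr : ∃ c, (x, c) ∈ r.toWord := by
    by_contra! h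
    refine hNC 1 ?_
    simp only [one_mul, inv_one, mul_one]
    refine mem_FS_of_toWord _ _ ?_
    rintro ⟨y, c⟩ hy (rfl : y = x)
    exact h c hy
  -- common facts about the rewriting
  have rewr : ∀ (b : X) (w : X → ℤ), w b ≠ 0 → phi w r = 1 → (∃ c, (b, c) ∈ r.toWord) →
      ∃ g s, s = g * (psi b w r).left * g⁻¹ ∧ (∀ p c, (p, c) ∈ s.toWord → FH s p) := by
    rintro b w hb hr ⟨c, hc⟩
    obtain ⟨g, hg1, hg2⟩ := exists_min (psi b w r).left
    refine ⟨g, _, rfl, fun p c hp => IH _ ?_ (X × ℤ) _ p rfl (hg2 (p, c) hp)⟩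
    have h1 := norm_psi b w r.toWord
    have h2 := countP_lt b r.toWord _ hc rfl
    rw [FreeGroup.mk_toWord] at h1
    rw [← hn]
    exact hg1.trans_lt (h1.trans_lt h2)
  have theta0 : ∀ (b : X) (w : X → ℤ) (v : FreeGroup X), w b ≠ 0 → phi w v = 1 →
      theta b w (psi b w v).left = v := by
    intro b w v hb hv
    simpa [hv] using theta_psi b w hb v 0
  by_cases hα : (phi (fun z => if z = x then 1 else 0) r).toAdd = 0
  · -- the stable letter is `x`
    set w : X → ℤ := fun z => if z = x then 1 else 0 with hw
    have hwx : w x ≠ 0 := by simp [hw]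
    have hr : phi w r = 1 := hα
    obtain ⟨g, s, hs, hFH⟩ := rewr x w hwx hr hxr
    have hth : theta x w g * r * (theta x w g)⁻¹ = theta x w s := by
      rw [hs, _root_.map_mul, _root_.map_mul, map_inv, theta0 x w r hwx hr]
    have hidx : ∀ i : ℤ, s ∉ FS {p : X × ℤ | p.2 = i} := by
      intro i hi
      have h1 : (MulAut.conj (FreeGroup.of x ^ (-i))).toMonoidHom.comp (theta x w) s ∈
          FS {y | y ≠ x} := by
        refine map_mem_of_FS _ _ ?_ hi
        rintro ⟨c, j⟩ (rfl : j = i)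
        by_cases hc : c = x
        · subst hc
          have : FreeGroup.of c ^ j * FreeGroup.of c * (FreeGroup.of c ^ (j + 1))⁻¹ = 1 := by group
          simp [theta, hw, this]
        · have h2 : (MulAut.conj (FreeGroup.of x ^ (-j))).toMonoidHom.comp (theta x w)
              (FreeGroup.of (c, j)) = FreeGroup.of c := by
            simp only [MonoidHom.comp_apply, MulEquiv.toMonoidHom_eq_coe, MonoidHom.coe_coe,
              MulAut.conj_apply, theta, FreeGroup.lift_apply_of, hw, hc, if_true, if_false,
              Int.ediv_one, add_zero]
            group
          rw [h2]
          exact of_mem_FS hc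
      refine hNC (FreeGroup.of x ^ (-i) * theta x w g) ?_
      convert h1 using 1
      simp only [MonoidHom.comp_apply, MulEquiv.toMonoidHom_eq_coe, MonoidHom.coe_coe,
        MulAut.conj_apply, ← hth]
      group
    obtain ⟨d, i, c, hd⟩ : ∃ d i c, ((d, i), c) ∈ s.toWord := by
      by_contra! h
      refine hidx 0 (mem_FS_of_toWord _ _ ?_)
      rintro ⟨⟨d, i⟩, c⟩ h1
      exact absurd h1 (h d i c)
    obtain ⟨e, he, hei⟩ : ∃ e ∈ s.toWord, e.1.2 ≠ i := by
      by_contra! h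
      exact hidx i (mem_FS_of_toWord _ _ h)
    obtain ⟨m, M, hmi, hiM, ⟨_, hm⟩, ⟨_, hM⟩, hW⟩ := window s d i c hd
    obtain ⟨hpu, hphu⟩ := psi_mem x w r hr g u hu
    rw [← hs] at hpu
    have hu0 : (psi x w u).left ∈ FS {p : X × ℤ | p.2 = 0} ∧ (psi x w u).right = 1 := by
      let K : Subgroup (FreeGroup (X × ℤ) ⋊[sg X] Multiplicative ℤ) :=
        (FS {p : X × ℤ | p.2 = 0}).map SemidirectProduct.inl
      have : psi x w u ∈ K := by
        refine map_mem_of_FS _ _ ?_ huF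
        intro y (hy : y ≠ x)
        refine ⟨FreeGroup.of (y, 0), of_mem_FS rfl, ?_⟩
        simp [psi, hy, hw]
      obtain ⟨v, hv, hv2⟩ := this
      rw [← hv2]
      exact ⟨hv, rfl⟩
    have hui : sg X (Multiplicative.ofAdd i) (psi x w u).left ∈ FS {p : X × ℤ | p.2 = i} := by
      refine map_mem_of_FS (sg X (Multiplicative.ofAdd i)).toMonoidHom _ ?_ hu0.1
      rintro ⟨c, j⟩ (rfl : j = 0)
      change sg X _ _ ∈ _
      rw [sg_of]
      apply of_mem_FS
      simp
    have hm' : FH s (d, m) := hFH _ _ hm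
    have hM' : FH s (d, M) := hFH _ _ hM
    have hW' : sg X (Multiplicative.ofAdd i) (psi x w u).left ∈
        FS {p : X × ℤ | p.1 = d → m ≤ p.2 ∧ p.2 ≤ M} := by
      refine FS_mono ?_ hui
      rintro ⟨c, j⟩ (hj : j = i) _
      simp only [hj]
      exact ⟨hmi, hiM⟩
    have hg' : sg X (Multiplicative.ofAdd i) (psi x w u).left ∈ FS {p : X × ℤ | p ≠ e.1} := by
      refine FS_mono ?_ hui
      intro p (hp : p.2 = i) hpe
      exact hei (hpe ▸ hp)
    have hN' : (SemidirectProduct.inl (sg X (Multiplicative.ofAdd i) (psi x w u).left) :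
        FreeGroup (X × ℤ) ⋊[sg X] Multiplicative ℤ) ∈
        Subgroup.normalClosure {SemidirectProduct.inl s} := by
      rw [SemidirectProduct.inl_aut, map_inv]
      exact Subgroup.normalClosure_normal.conj_mem _ hpu _
    have hcore := core s d m M hW hm' hM' e.1 (hFH e.1 e.2 he) _ hW' hg' hN'
    have h6 : (psi x w u).left = 1 := by simpa using hcore
    rw [← theta0 x w u hwx hphu, h6, _root_.map_one]
  · by_cases hb : ∃ p ∈ r.toWord, p.1 ≠ x
    · obtain ⟨⟨b, cb⟩, hb, hbx⟩ := hb
      simp only at hbx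
      set α := (phi (fun z => if z = x then 1 else 0) r).toAdd with hαd
      set β := (phi (fun z => if z = b then 1 else 0) r).toAdd with hβd
      set w : X → ℤ := fun z => if z = b then α else if z = x then -β else 0 with hw
      have hwb : w b ≠ 0 := by simpa [hw] using hα
      have hr : phi w r = 1 := by
        have := phi_comb b x hbx α β r
        rw [← hαd, ← hβd, ← hw] at this
        rw [← toAdd_eq_zero, this]
        ring
      obtain ⟨g, s, hs, hFH⟩ := rewr b w hwb hr ⟨cb, hb⟩
      have hth : theta b w g * r * (theta b w g)⁻¹ = theta b w s := by
        rw [hs, _root_.map_mul, _root_.map_mul, map_inv, theta0 b w r hwb hr]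
      have hidx : s ∉ FS {p : X × ℤ | p.1 ≠ x} := by
        intro hi
        refine hNC (theta b w g) ?_
        rw [hth]
        refine map_mem_of_FS _ _ ?_ hi
        rintro ⟨c, j⟩ (hc : c ≠ x)
        simp only [theta, FreeGroup.lift_apply_of]
        have hb' := of_mem_FS (S := {y | y ≠ x}) hbx
        exact mul_mem (mul_mem (zpow_mem hb' _) (of_mem_FS hc)) (inv_mem (zpow_mem hb' _))
      obtain ⟨i, c, hd⟩ : ∃ i c, ((x, i), c) ∈ s.toWord := by
        by_contra! h
        refine hidx (mem_FS_of_toWord _ _ ?_)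
        rintro ⟨⟨d, i⟩, c⟩ h1 (rfl : d = x)
        exact absurd h1 (h i c)
      obtain ⟨m, M, hmi, hiM, ⟨_, hm⟩, ⟨_, hM⟩, hW⟩ := window s x i c hd
      obtain ⟨hpu, hphu⟩ := psi_mem b w r hr g u hu
      rw [← hs] at hpu
      have hsgm : ∀ (k : Multiplicative ℤ) (v : FreeGroup (X × ℤ)),
          v ∈ FS {p : X × ℤ | p.1 ≠ x} → sg X k v ∈ FS {p : X × ℤ | p.1 ≠ x} := by
        intro k v hv
        refine map_mem_of_FS (sg X k).toMonoidHom _ ?_ hv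
        rintro ⟨c, j⟩ (hc : c ≠ x)
        change sg X _ _ ∈ _
        rw [sg_of]
        exact of_mem_FS hc
      have hu0 : (psi b w u).left ∈ FS {p : X × ℤ | p.1 ≠ x} := by
        let K : Subgroup (FreeGroup (X × ℤ) ⋊[sg X] Multiplicative ℤ) :=
          { carrier := {v | v.left ∈ FS {p : X × ℤ | p.1 ≠ x}}
            one_mem' := (FS {p : X × ℤ | p.1 ≠ x}).one_mem
            mul_mem' := fun {a c} ha hc => mul_mem ha (hsgm _ _ hc)
            inv_mem' := fun {a} ha => hsgm _ _ (inv_mem ha) }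
        have : psi b w u ∈ K := by
          refine map_mem_of_FS _ _ ?_ huF
          intro y (hy : y ≠ x)
          change (psi b w (FreeGroup.of y)).left ∈ FS {p : X × ℤ | p.1 ≠ x}
          by_cases hyb : y = b
          · simp [psi, hyb, one_mem]
          · simp only [psi, FreeGroup.lift_apply_of, hyb, if_false, SemidirectProduct.mul_left,
              SemidirectProduct.left_inl, SemidirectProduct.left_inr, _root_.map_one, mul_one]
            exact of_mem_FS hy
        exact this
      have hm' : FH s (x, m) := hFH _ _ hm
      have hM' : FH s (x, M) := hFH _ _ hM
      have hW' : (psi b w u).left ∈ FS {p : X × ℤ | p.1 = x → m ≤ p.2 ∧ p.2 ≤ M} := by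
        refine FS_mono ?_ hu0
        intro p (hp : p.1 ≠ x) h
        exact absurd h hp
      have hg' : (psi b w u).left ∈ FS {p : X × ℤ | p ≠ (x, m)} := by
        refine FS_mono ?_ hu0
        rintro p (hp : p.1 ≠ x) h
        exact hp (by rw [h])
      have h6 := core s x m M hW hm' hM' (x, m) hm' _ hW' hg' hpu
      rw [← theta0 b w u hwb hphu, h6, _root_.map_one]
    · push Not at hb
      have h1 : kill x r = 1 := hom_eq_on_FS (S := {y | y = x}) (kill x) 1
        (by rintro y (rfl : y = x); simp [kill]) (mem_FS_of_toWord _ _ hb)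
      have h2 : Subgroup.normalClosure {r} ≤ (kill x).ker := by
        apply Subgroup.normalClosure_le_normal
        rintro _ rfl
        exact h1
      rw [← kill_eq x huF]
      exact h2 hu

lemma NC_of_cyclicallyReduced {X : Type} [DecidableEq X] (r : FreeGroup X) (x : X)
    (hcr : FreeGroup.IsCyclicallyReduced r.toWord) (hx : ∃ b : Bool, (x, b) ∈ r.toWord) :
    NC r x := by
  intro g hg
  let cnt : FreeGroup X → ℕ := fun v => v.toWord.countP (fun p => p.1 = x)
  have hmul : ∀ a b, cnt (a * b) ≤ cnt a + cnt b := by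
    intro a b
    have := (FreeGroup.toWord_mul_sublist a b).countP_le (p := fun p => decide (p.1 = x))
    rwa [List.countP_append] at this
  have h0 : ∀ v ∈ FS {y | y ≠ x}, cnt v = 0 := by
    intro v hv
    have h1 : v ∈ (FreeGroup.map (Subtype.val : {y // y ≠ x} → X)).range := by
      have : Set.range (Subtype.val : {y // y ≠ x} → X) = {y | y ≠ x} := by ext; simp
      rw [FreeGroup.range_map, this]
      exact hv
    obtain ⟨v', rfl⟩ := h1
    have h2 : FreeGroup.map (Subtype.val : {y // y ≠ x} → X) v' =
        FreeGroup.mk (v'.toWord.map fun p => (p.1.1, p.2)) := by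
      conv_lhs => rw [← FreeGroup.mk_toWord (x := v'), FreeGroup.map.mk]
    simp only [cnt, List.countP_eq_zero, decide_eq_true_eq]
    intro p hp
    rw [h2, FreeGroup.toWord_mk] at hp
    have h3 := (FreeGroup.Red.sublist FreeGroup.reduce.red).subset hp
    simp only [List.mem_map] at h3
    obtain ⟨q, _, rfl⟩ := h3
    exact q.1.2
  have h1 : ∀ n : ℕ, n ≤ cnt (r ^ n) := by
    intro n
    have h2 : (r ^ n).toWord = (List.replicate n r.toWord).flatten := by
      rw [FreeGroup.toWord_pow]
      exact (hcr.flatten_replicate n).isReduced.reduce_eq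
    simp only [cnt, h2, List.countP_flatten, List.map_replicate, List.sum_replicate, smul_eq_mul]
    obtain ⟨b, hb⟩ := hx
    have : 0 < r.toWord.countP (fun p => p.1 = x) := List.countP_pos_iff.2 ⟨_, hb, by simp⟩
    exact Nat.le_mul_of_pos_right _ this
  have h3 : ∀ n : ℕ, cnt (r ^ n) ≤ cnt g⁻¹ + cnt g := by
    intro n
    have h4 : r ^ n = g⁻¹ * (g * r * g⁻¹) ^ n * g := by
      rw [conj_pow]; group
    rw [h4]
    have h5 := h0 _ (pow_mem hg n)
    have h6 := hmul (g⁻¹ * (g * r * g⁻¹) ^ n) g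
    have h7 := hmul g⁻¹ ((g * r * g⁻¹) ^ n)
    omega
  have := h1 (cnt g⁻¹ + cnt g + 1)
  have := h3 (cnt g⁻¹ + cnt g + 1)
  omega

end Frei

/-- **Magnus' Freiheitssatz.** If `r` is cyclically reduced and contains the basis element `x`,
then the free group on `X \ {x}` embeds canonically into `F/⟨⟨r⟩⟩`. -/
theorem freiheitssatz {X : Type} [DecidableEq X] (r : FreeGroup X) (x : X)
    (hcr : CyclicallyReduced r) (hx : ∃ b : Bool, (x, b) ∈ r.toWord) :
    Function.Injective
      ((QuotientGroup.mk' (Subgroup.normalClosure {r})).comp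
        (FreeGroup.lift (fun y : {y : X // y ≠ x} => FreeGroup.of y.1))) := by

  have hc : FreeGroup.IsCyclicallyReduced r.toWord := by
    refine ⟨FreeGroup.isReduced_toWord, ?_⟩
    rintro ⟨a, c⟩ ha ⟨a', c'⟩ ha' h
    simp only at h
    subst h
    have := hcr a c' ha'
    by_contra h2
    simp only at h2
    apply this
    rw [Option.mem_def] at ha
    rw [ha]
    cases c <;> cases c' <;> simp_all
  have hNC := Frei.NC_of_cyclicallyReduced r x hc hx
  have hFH := Frei.main _ X r x rfl hNC
  rw [injective_iff_map_eq_one]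
  intro v hv
  have h1 : FreeGroup.lift (fun y : {y : X // y ≠ x} => FreeGroup.of y.1) v ∈
      Subgroup.normalClosure {r} := (QuotientGroup.eq_one_iff _).1 hv
  have h2 : FreeGroup.lift (fun y : {y : X // y ≠ x} => FreeGroup.of y.1) v =
      FreeGroup.map Subtype.val v := by
    rw [FreeGroup.map_eq_lift]; rfl
  rw [h2] at h1
  have h3 := hFH _ (by
    rw [Frei.FS]
    have hr : Set.range (Subtype.val : {y // y ≠ x} → X) = {y | y ≠ x} := by ext; simp
    have : FreeGroup.map (Subtype.val : {y // y ≠ x} → X) v ∈ (FreeGroup.map Subtype.val).range :=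
      ⟨v, rfl⟩
    rwa [FreeGroup.range_map, hr] at this) h1
  exact FreeGroup.map_injective Subtype.val_injective (by rw [_root_.map_one]; exact h3)
end

section
/- Let G = ⟨a,b,c,d,z | [a,b][c,d] = z⁴⟩. Then for every homomorphism φ from G to a free group F, φ(z) = 1. Consequently G is not residually free and hence not a limit group. -/
/-- The single relator `[a,b][c,d]z⁻⁴` in the free group on five generators
`a,b,c,d,z` (indexed `0,1,2,3,4`). -/
def surfaceLikeRel : Set (FreeGroup (Fin 5)) :=
  { (FreeGroup.of 0)⁻¹ * (FreeGroup.of 1)⁻¹ * FreeGroup.of 0 * FreeGroup.of 1 *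
    ((FreeGroup.of 2)⁻¹ * (FreeGroup.of 3)⁻¹ * FreeGroup.of 2 * FreeGroup.of 3) *
    ((FreeGroup.of 4) ^ 4)⁻¹ }

section

namespace FourthPower

open Polynomial

/-- The nilpotent operator `D_x` on functions on words: prepend `x` (zero if already headed by `x`). -/
noncomputable def dOp {β : Type} (x : β) : Module.End ℤ (List β → ℤ) where
  toFun f w := by
    classical
    exact match w with
      | [] => 0
      | y :: w' => if y = x ∧ w'.head? ≠ some x then f w' else 0
  map_add' f g := by
    funext w
    rcases w with _ | ⟨y, w'⟩
    · simp
    · simp only [Pi.add_apply]; split_ifs <;> simp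
  map_smul' c f := by
    funext w
    rcases w with _ | ⟨y, w'⟩
    · simp
    · simp

lemma dOp_nil {β : Type} (x : β) (f : List β → ℤ) : dOp x f [] = 0 := rfl

open Classical in
lemma dOp_cons {β : Type} (x y : β) (w : List β) (f : List β → ℤ) :
    dOp x f (y :: w) = if y = x ∧ w.head? ≠ some x then f w else 0 := rfl

lemma dOp_of_head {β : Type} (x : β) (w : List β) (hw : w.head? ≠ some x) (f : List β → ℤ) :
    dOp x f w = 0 := by
  rcases w with _ | ⟨y, w⟩
  · rfl
  · rw [dOp_cons, if_neg]
    rintro ⟨rfl, _⟩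
    simp at hw

lemma dOp_sq {β : Type} (x : β) : dOp x * dOp x = 0 := by
  ext f w
  rcases w with _ | ⟨y, w⟩
  · rfl
  · simp only [Module.End.mul_apply, LinearMap.zero_apply, Pi.zero_apply]
    rw [dOp_cons]
    split_ifs with h
    · exact dOp_of_head x w h.2 f
    · rfl

/-- The unit `1 + D_x T`. -/
noncomputable def magU {β : Type} (x : β) : (Module.End ℤ (List β → ℤ))[X]ˣ where
  val := 1 + C (dOp x) * X
  inv := 1 - C (dOp x) * X
  val_inv := by
    have : C (dOp x) * X * (C (dOp x) * X) = 0 := by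
      rw [mul_assoc, ← mul_assoc X, X_mul_C, mul_assoc, ← mul_assoc, ← C_mul, dOp_sq]; simp
    rw [mul_sub, mul_one, add_mul, this]; simp
  inv_val := by
    have : C (dOp x) * X * (C (dOp x) * X) = 0 := by
      rw [mul_assoc, ← mul_assoc X, X_mul_C, mul_assoc, ← mul_assoc, ← C_mul, dOp_sq]; simp
    rw [mul_add, mul_one, sub_mul, this]; simp

/-- Magnus-type homomorphism. -/
noncomputable def mag (β : Type) : FreeGroup β →* (Module.End ℤ (List β → ℤ))[X]ˣ :=
  FreeGroup.lift magU

/-- Evaluation at `T = 1`. -/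
noncomputable def ev (β : Type) : (Module.End ℤ (List β → ℤ))[X] →+* Module.End ℤ (List β → ℤ) :=
  eval₂RingHom' (RingHom.id _) 1 (fun a => Commute.one_right a)

lemma ev_letter {β : Type} (x : β) (b : Bool) (f : List β → ℤ) (w : List β) :
    ev β (mag β (FreeGroup.mk [(x, b)]) : (Module.End ℤ (List β → ℤ))[X]ˣ) f w
      = f w + (if b then 1 else -1) * dOp x f w := by
  have h : mag β (FreeGroup.mk [(x, b)]) = cond b (magU x) (magU x)⁻¹ := by
    simp [mag]
  rw [h]
  cases b
  · have : (((magU x)⁻¹ : (Module.End ℤ (List β → ℤ))[X]ˣ) : (Module.End ℤ (List β → ℤ))[X])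
      = 1 - C (dOp x) * X := rfl
    simp [this, ev, sub_eq_add_neg]
  · have : ((magU x : (Module.End ℤ (List β → ℤ))[X]ˣ) : (Module.End ℤ (List β → ℤ))[X])
      = 1 + C (dOp x) * X := rfl
    simp [this, ev]

open Classical in
/-- the delta function at the empty word -/
noncomputable def delta (β : Type) : List β → ℤ := fun w => if w = [] then 1 else 0

/-- the vector associated with a word -/
noncomputable def vec {β : Type} (L : List (β × Bool)) : List β → ℤ :=
  ev β (mag β (FreeGroup.mk L) : (Module.End ℤ (List β → ℤ))[X]ˣ) (delta β)

lemma vec_cons {β : Type} (x : β) (b : Bool) (L : List (β × Bool)) (w : List β) :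
    vec ((x, b) :: L) w = vec L w + (if b then 1 else -1) * dOp x (vec L) w := by
  have : FreeGroup.mk ((x, b) :: L) = FreeGroup.mk [(x, b)] * FreeGroup.mk L := by
    simp [FreeGroup.mul_mk]
  unfold vec
  rw [this, map_mul, Units.val_mul, map_mul, Module.End.mul_apply, ev_letter]

lemma vec_nil {β : Type} : vec ([] : List (β × Bool)) = delta β := by
  unfold vec
  rw [← FreeGroup.one_eq_mk]; simp

lemma dOp_cons_self {β : Type} (x : β) (w : List β) (hw : w.head? ≠ some x) (f : List β → ℤ) :
    dOp x f (x :: w) = f w := by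
  rw [dOp_cons, if_pos ⟨rfl, hw⟩]

lemma dOp_eq_zero {β : Type} (x : β) (f : List β → ℤ) (w : List β)
    (h : ∀ w', w = x :: w' → w'.head? ≠ some x → f w' = 0) : dOp x f w = 0 := by
  by_cases hw : w.head? = some x
  · rcases w with _ | ⟨y, w⟩
    · rfl
    · obtain rfl : y = x := by simpa using hw
      by_cases hw' : w.head? = some y
      · rw [dOp_cons, if_neg]
        rintro ⟨_, h'⟩
        exact h' hw'
      · rw [dOp_cons_self y w hw']
        exact h w rfl hw'
  · exact dOp_of_head x w hw f

lemma vec_reduced {β : Type} (L : List (β × Bool)) : ∀ x b, FreeGroup.IsReduced ((x, b) :: L) →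
    ∃ (w : List β) (c k : ℤ), w.head? ≠ some x ∧ c ≠ 0 ∧ 0 < k ∧
      vec ((x, b) :: L) w = c ∧ vec ((x, b) :: L) (x :: w) = (if b then 1 else -1) * k * c ∧
      (∀ w', w.length + 1 < w'.length → vec ((x, b) :: L) w' = 0) ∧
      (∀ w', w.length + 1 ≤ w'.length → w'.head? ≠ some x → vec ((x, b) :: L) w' = 0) := by
  induction L with
  | nil =>
    intro x b _
    have hd : ∀ w : List β, 1 ≤ w.length → delta β w = 0 := by
      intro w hw
      unfold delta
      rw [if_neg]
      rintro rfl
      simp at hw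
    refine ⟨[], 1, 1, by simp, by simp, by simp, ?_, ?_, ?_, ?_⟩
    · rw [vec_cons, vec_nil, dOp_nil]; simp [delta]
    · rw [vec_cons, vec_nil, dOp_cons_self x [] (by simp)]; simp [delta]
    · intro w' hw'
      rw [vec_cons, vec_nil, hd w' (by simp at hw'; omega), dOp_eq_zero]
      · simp
      · rintro w'' rfl _
        exact hd _ (by simp at hw'; omega)
    · intro w' hw' hh
      rw [vec_cons, vec_nil, hd w' (by simp at hw'; omega), dOp_of_head x w' hh]
      simp
  | cons a L ih =>
    obtain ⟨y, b'⟩ := a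
    intro x b hred
    have hred' : FreeGroup.IsReduced ((y, b') :: L) := hred.infix ⟨[(x, b)], [], by simp⟩
    obtain ⟨w, c, k, hw, hc, hk, h1, h2, h3, h4⟩ := ih y b' hred'
    by_cases hxy : x = y
    · subst hxy
      have hb : b = b' := by
        have := hred
        rw [FreeGroup.isReduced_cons_cons] at this
        exact this.1 rfl
      subst hb
      refine ⟨w, c, k + 1, hw, hc, by omega, ?_, ?_, ?_, ?_⟩
      · rw [vec_cons, h1, dOp_of_head x w hw]; simp
      · rw [vec_cons, h2, dOp_cons_self x w hw, h1]; ring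
      · intro w' hw'
        rw [vec_cons, h3 w' hw', dOp_eq_zero]
        · simp
        · rintro w'' rfl hh
          exact h4 w'' (by simp at hw'; omega) hh
      · intro w' hw' hh
        rw [vec_cons, h4 w' hw' hh, dOp_of_head x w' hh]
        simp
    · have hh0 : (y :: w).head? ≠ some x := by
        simpa using fun h : y = x => hxy h.symm
      refine ⟨y :: w, vec ((y, b') :: L) (y :: w), 1, hh0, ?_, by omega, ?_, ?_, ?_, ?_⟩
      · rw [h2]
        have : (if b' then (1 : ℤ) else -1) ≠ 0 := by split_ifs <;> simp
        exact mul_ne_zero (mul_ne_zero this hk.ne') hc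
      · rw [vec_cons, dOp_of_head x _ hh0]; simp
      · rw [vec_cons, dOp_cons_self x _ hh0, h3 (x :: y :: w) (by simp)]; ring
      · intro w' hw'
        simp only [List.length_cons] at hw'
        rw [vec_cons, h3 w' (by omega), dOp_eq_zero]
        · simp
        · rintro w'' rfl _
          exact h3 w'' (by simp at hw'; omega)
      · intro w' hw' hh
        simp only [List.length_cons] at hw'
        rw [vec_cons, h3 w' (by omega), dOp_of_head x w' hh]
        simp

lemma mag_injective (β : Type) : Function.Injective (mag β) := by
  classical
  rw [injective_iff_map_eq_one]
  intro g hg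
  by_contra hne
  have hw : g.toWord ≠ [] := by simpa using hne
  have hvec : vec g.toWord = delta β := by
    unfold vec
    rw [FreeGroup.mk_toWord, hg]; simp
  have hred : FreeGroup.IsReduced g.toWord := FreeGroup.isReduced_toWord
  rcases hL : g.toWord with _ | ⟨⟨x, b⟩, L⟩
  · exact hw hL
  · rw [hL] at hvec hred
    obtain ⟨w, c, k, hw, hc, hk, h1, h2, h3, h4⟩ := vec_reduced L x b hred
    rw [hvec] at h2
    have : (if b then (1 : ℤ) else -1) ≠ 0 := by split_ifs <;> simp
    exact mul_ne_zero (mul_ne_zero this hk.ne') hc (by rw [← h2]; simp [delta])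

lemma mag_coeff_zero {β : Type} (g : FreeGroup β) :
    constantCoeff (mag β g : (Module.End ℤ (List β → ℤ))[X]ˣ).val = 1 := by
  have : (Units.map (constantCoeff : (Module.End ℤ (List β → ℤ))[X] →+* _).toMonoidHom).comp
      (mag β) = 1 := by
    ext x : 1
    apply Units.ext
    simp [mag, magU]
  have h2 := congrArg Units.val (DFunLike.congr_fun this g)
  simpa using h2

/-- A conjugation-invariant linear order on a free group. -/
lemma exists_conj_order (β : Type) : ∃ (Ω : Type) (_ : LinearOrder Ω) (l : FreeGroup β → Ω),
    Function.Injective l ∧ ∀ g x y, l x < l y → l (g * x * g⁻¹) < l (g * y * g⁻¹) := by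
  obtain ⟨hI, hwf⟩ := exists_wellOrder ((List β → ℤ) × List β)
  let Ω := Lex (ℕ → Lex (((List β → ℤ) × List β) → ℤ))
  let l : FreeGroup β → Ω := fun g => toLex (fun n => toLex (fun i =>
    ((mag β g : (Module.End ℤ (List β → ℤ))[X]ˣ) : (Module.End ℤ (List β → ℤ))[X]).coeff n i.1 i.2))
  refine ⟨Ω, inferInstance, l, ?_, ?_⟩
  · intro g h hgh
    apply mag_injective
    apply Units.ext
    ext n f w
    have := congrFun (congrFun hgh n) (f, w)
    exact this
  · rintro g x y ⟨n, hn, i, hi, hlt⟩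
    set G := mag β g
    set a := (mag β x : (Module.End ℤ (List β → ℤ))[X]ˣ).val with ha
    set b := (mag β y : (Module.End ℤ (List β → ℤ))[X]ˣ).val with hb
    have hdiv : X ^ n ∣ b - a := by
      rw [X_pow_dvd_iff]
      intro d hd
      rw [coeff_sub, sub_eq_zero]
      ext f w
      have := congrFun (hn d hd) (f, w)
      exact this.symm
    obtain ⟨q, hq⟩ := hdiv
    have hconj : ((mag β (g * y * g⁻¹) : (Module.End ℤ (List β → ℤ))[X]ˣ)).val
        = ((mag β (g * x * g⁻¹) : (Module.End ℤ (List β → ℤ))[X]ˣ)).val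
          + X ^ n * (G.val * q * (G⁻¹).val) := by
      have : b = a + X ^ n * q := by rw [← hq]; abel
      simp only [map_mul, map_inv, Units.val_mul]
      rw [← ha, ← hb, this, mul_add, add_mul, ← mul_assoc, ← mul_assoc, ← mul_assoc,
        X_pow_mul (p := G.val)]
    have hc0 : (G.val * q * (G⁻¹).val).coeff 0 = q.coeff 0 := by
      have h1 : constantCoeff G.val = 1 := mag_coeff_zero g
      have h2 : constantCoeff (G⁻¹).val = 1 := by
        have := mag_coeff_zero g⁻¹
        rwa [map_inv] at this
      have : constantCoeff (G.val * q * (G⁻¹).val) = constantCoeff q := by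
        rw [map_mul, map_mul, h1, h2]; simp
      simpa using this
    have hbn : ∀ m, m < n → b.coeff m = a.coeff m := by
      intro d hd
      ext f w
      exact (congrFun (hn d hd) (f, w)).symm
    have hcn : b.coeff n = a.coeff n + q.coeff 0 := by
      have : b = a + X ^ n * q := by rw [← hq]; abel
      rw [this, coeff_add, coeff_X_pow_mul']; simp
    refine ⟨n, ?_, i, ?_, ?_⟩
    · intro m hm
      funext j
      have : (X ^ n * (G.val * q * (G⁻¹).val)).coeff m = 0 := by
        rw [coeff_X_pow_mul', if_neg (by omega)]
      show ((mag β (g * x * g⁻¹)).val.coeff m) j.1 j.2 = ((mag β (g * y * g⁻¹)).val.coeff m) j.1 j.2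
      rw [hconj, coeff_add, this, add_zero]
    · intro j hj
      have h := hi j hj
      change a.coeff n j.1 j.2 = b.coeff n j.1 j.2 at h
      show ((mag β (g * x * g⁻¹)).val.coeff n) j.1 j.2 = ((mag β (g * y * g⁻¹)).val.coeff n) j.1 j.2
      rw [hconj, coeff_add, coeff_X_pow_mul', if_pos le_rfl, Nat.sub_self, hc0]
      rw [hcn] at h
      simpa using h
    · change a.coeff n i.1 i.2 < b.coeff n i.1 i.2 at hlt
      show ((mag β (g * x * g⁻¹)).val.coeff n) i.1 i.2 < ((mag β (g * y * g⁻¹)).val.coeff n) i.1 i.2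
      rw [hconj, coeff_add, coeff_X_pow_mul', if_pos le_rfl, Nat.sub_self, hc0]
      rw [hcn] at hlt
      simpa using hlt

end FourthPower
end
section
namespace FourthPower

/-- A word lifts to a quadratic word which is a product of two commutators. -/
def LiftP {β : Type} (w : List (β × Bool)) : Prop :=
  ∃ (W : List ((β × ℕ) × Bool)) (a b c d : FreeGroup (β × ℕ)),
    W.map (fun l => (l.1.1, l.2)) = w ∧ W.Nodup ∧ (∀ e t, (e, t) ∈ W → (e, !t) ∈ W) ∧
    FreeGroup.mk W = a⁻¹ * b⁻¹ * a * b * (c⁻¹ * d⁻¹ * c * d)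

lemma LiftP.step {β : Type} {w w' : List (β × Bool)} (hs : FreeGroup.Red.Step w w')
    (h : LiftP w) : LiftP w' := by
  classical
  obtain ⟨W, a, b, c, d, hW, hnd, hsym, hprod⟩ := h
  cases hs with
  | @not L₁ L₂ x t =>
  rw [List.map_eq_append_iff] at hW
  obtain ⟨P, Q', rfl, hP, hQ'⟩ := hW
  rw [List.map_eq_cons_iff] at hQ'
  obtain ⟨⟨⟨x1, i⟩, t1⟩, Q'', rfl, h1, hQ''⟩ := hQ'
  rw [List.map_eq_cons_iff] at hQ''
  obtain ⟨⟨⟨x2, j⟩, t2⟩, Q, rfl, h2, hQ⟩ := hQ''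
  simp only [Prod.mk.injEq] at h1 h2
  obtain ⟨rfl, rfl⟩ := h1
  obtain ⟨rfl, rfl⟩ := h2
  let s : β × ℕ → β × ℕ := fun e => if e = (x2, j) then (x2, i) else e
  have hs1 : ∀ e, (s e).1 = e.1 := by
    intro e
    simp only [s]
    split_ifs with h
    · rw [h]
    · rfl
  let S : (β × ℕ) × Bool → (β × ℕ) × Bool := fun l => (s l.1, l.2)
  -- facts on membership
  have hmid : ∀ l, l ∈ P ++ Q → l ≠ ((x2, i), t1) ∧ l ≠ ((x2, j), !t1) := by
    intro l hl
    have hp : (P ++ ((x2, i), t1) :: ((x2, j), !t1) :: Q).Perm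
        (((x2, i), t1) :: ((x2, j), !t1) :: (P ++ Q)) := by
      refine List.perm_middle.trans (List.Perm.cons _ List.perm_middle)
    have h3 := hp.nodup_iff.1 hnd
    rw [List.nodup_cons, List.nodup_cons] at h3
    constructor
    · rintro rfl
      exact h3.1 (List.mem_cons_of_mem _ hl)
    · rintro rfl
      exact h3.2.1 hl
  have hndPQ : (P ++ Q).Nodup := by
    refine hnd.sublist ?_
    refine List.Sublist.append_left ?_ _
    exact ((List.Sublist.refl Q).cons _).cons _
  have hmem : ∀ l, l ∈ P ++ ((x2, i), t1) :: ((x2, j), !t1) :: Q ↔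
      l = ((x2, i), t1) ∨ l = ((x2, j), !t1) ∨ l ∈ P ++ Q := by
    intro l
    simp only [List.mem_append, List.mem_cons]
    tauto
  refine ⟨(P ++ Q).map S, FreeGroup.map s a, FreeGroup.map s b, FreeGroup.map s c,
    FreeGroup.map s d, ?_, ?_, ?_, ?_⟩
  · rw [← hP, ← hQ, ← List.map_append, List.map_map]
    apply List.map_congr_left
    intro l _
    simp [S, hs1]
  · refine hndPQ.map_on ?_
    rintro ⟨e, t⟩ he ⟨e', t'⟩ he' hee
    simp only [S, s, Prod.mk.injEq] at hee
    have m1 := hmid _ he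
    have m2 := hmid _ he'
    obtain ⟨hee, rfl⟩ := hee
    rw [Prod.mk.injEq]
    refine ⟨?_, rfl⟩
    split_ifs at hee with g1 g2 g2
    · rw [g1, g2]
    · exfalso
      subst g1
      subst hee
      cases t <;> cases t1 <;> simp_all
    · exfalso
      subst g2
      subst hee
      cases t <;> cases t1 <;> simp_all
    · exact hee
  · intro e t he
    rw [List.mem_map] at he ⊢
    obtain ⟨⟨e', t'⟩, hm, heq⟩ := he
    simp only [S, Prod.mk.injEq] at heq
    obtain ⟨rfl, rfl⟩ := heq
    have h5 := hsym e' t' ((hmem _).2 (Or.inr (Or.inr hm)))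
    rw [hmem] at h5
    rcases h5 with h5 | h5 | h5
    · -- partner is removed letter i
      simp only [Prod.mk.injEq] at h5
      obtain ⟨rfl, rfl⟩ := h5
      have h6 := hsym (x2, j) (!!t') ((hmem _).2 (Or.inr (Or.inl rfl)))
      rw [hmem] at h6
      rcases h6 with h6 | h6 | h6
      · exfalso
        simp only [Prod.mk.injEq, true_and, Bool.not_not] at h6
        obtain ⟨rfl, -⟩ := h6
        exact (hmid _ hm).2 (by simp)
      · simp at h6
      · refine ⟨_, h6, ?_⟩
        simp [S, s]
    · simp only [Prod.mk.injEq] at h5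
      obtain ⟨rfl, h5⟩ := h5
      have h5' : t' = t1 := by simpa using h5
      subst h5'
      have h6 := hsym (x2, i) t' ((hmem _).2 (Or.inl rfl))
      rw [hmem] at h6
      rcases h6 with h6 | h6 | h6
      · simp at h6
      · exfalso
        simp only [Prod.mk.injEq, true_and, and_true] at h6
        subst h6
        exact (hmid _ hm).1 rfl
      · refine ⟨_, h6, ?_⟩
        simp [S, s]
    · exact ⟨_, h5, rfl⟩
  · have h7 := congrArg (FreeGroup.map s) hprod
    simp only [map_mul, map_inv] at h7
    rw [← h7, FreeGroup.map.mk]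
    simp only [List.map_append, List.map_cons]
    have hsi : s (x2, i) = (x2, i) := by simp [s]
    have hsj : s (x2, j) = (x2, i) := by simp [s]
    rw [hsi, hsj]
    symm
    apply Quot.sound
    exact FreeGroup.Red.Step.not

lemma LiftP.red {β : Type} {w w' : List (β × Bool)} (hs : FreeGroup.Red w w')
    (h : LiftP w) : LiftP w' := by
  induction hs with
  | refl => exact h
  | tail _ h2 ih => exact ih.step h2

/-- give letters distinct names -/
def lft {β : Type} : ℕ → List (β × Bool) → List ((β × ℕ) × Bool)
  | _, [] => []
  | n, l :: L => ((l.1, n), l.2) :: lft (n + 4) L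

lemma lft_map {β : Type} (L : List (β × Bool)) : ∀ n,
    (lft n L).map (fun l => (l.1.1, l.2)) = L := by
  induction L with
  | nil => intro n; rfl
  | cons l L ih => intro n; simp [lft, ih]

lemma lft_mem {β : Type} (L : List (β × Bool)) : ∀ n, ∀ l ∈ lft n L,
    n ≤ l.1.2 ∧ l.1.2 % 4 = n % 4 := by
  induction L with
  | nil => intro n; simp [lft]
  | cons l L ih =>
    intro n l' hl'
    simp only [lft, List.mem_cons] at hl'
    rcases hl' with rfl | hl'
    · simp
    · have := ih _ _ hl'
      omega

lemma lft_nodup {β : Type} (L : List (β × Bool)) : ∀ n, ((lft n L).map Prod.fst).Nodup := by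
  induction L with
  | nil => intro n; simp [lft]
  | cons l L ih =>
    intro n
    simp only [lft, List.map_cons, List.nodup_cons]
    refine ⟨?_, ih _⟩
    intro h
    rw [List.mem_map] at h
    obtain ⟨l', hl', h⟩ := h
    have := lft_mem _ _ _ hl'
    rw [h] at this
    simp at this

lemma mem_invRev {γ : Type} (A : List (γ × Bool)) (l : γ × Bool) :
    l ∈ FreeGroup.invRev A ↔ (l.1, !l.2) ∈ A := by
  simp only [FreeGroup.invRev, List.mem_reverse, List.mem_map]
  constructor
  · rintro ⟨a, ha, rfl⟩
    simpa using ha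
  · intro h
    exact ⟨_, h, by simp⟩

lemma nodup_invRev {γ : Type} {A : List (γ × Bool)} (h : A.Nodup) : (FreeGroup.invRev A).Nodup := by
  rw [FreeGroup.invRev, List.nodup_reverse]
  refine h.map ?_
  rintro ⟨a, b⟩ ⟨c, d⟩ h
  simpa using h

lemma not_both {γ : Type} {A : List (γ × Bool)} (h : (A.map Prod.fst).Nodup) (l : γ × Bool)
    (h1 : l ∈ A) (h2 : (l.1, !l.2) ∈ A) : False := by
  have := List.inj_on_of_nodup_map h h1 h2 rfl
  obtain ⟨a, b⟩ := l
  simp at this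

lemma invRev_map {γ δ : Type} (f : γ → δ) (A : List (γ × Bool)) :
    (FreeGroup.invRev A).map (fun l => (f l.1, l.2)) =
      FreeGroup.invRev (A.map (fun l => (f l.1, l.2))) := by
  simp [FreeGroup.invRev, List.map_map, Function.comp_def]

lemma LiftP.ofWords {β : Type} (a b c d : List (β × Bool)) :
    LiftP (FreeGroup.invRev a ++ FreeGroup.invRev b ++ a ++ b ++
      (FreeGroup.invRev c ++ FreeGroup.invRev d ++ c ++ d)) := by
  have key : ∀ (k : ℕ) (L : List (β × Bool)), ∃ A : List ((β × ℕ) × Bool),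
      A.map (fun l => (l.1.1, l.2)) = L ∧ (A.map Prod.fst).Nodup ∧ A.Nodup ∧
        ∀ l ∈ A, l.1.2 % 4 = k % 4 := fun k L =>
    ⟨lft k L, lft_map L k, lft_nodup L k, (lft_nodup L k).of_map, fun l hl => (lft_mem L k l hl).2⟩
  obtain ⟨A, hA, nA, nA', mA⟩ := key 0 a
  obtain ⟨B, hB, nB, nB', mB⟩ := key 1 b
  obtain ⟨C, hC, nC, nC', mC⟩ := key 2 c
  obtain ⟨D, hD, nD, nD', mD⟩ := key 3 d
  have iA := nodup_invRev nA'
  have iB := nodup_invRev nB'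
  have iC := nodup_invRev nC'
  have iD := nodup_invRev nD'
  refine ⟨FreeGroup.invRev A ++ FreeGroup.invRev B ++ A ++ B ++
      (FreeGroup.invRev C ++ FreeGroup.invRev D ++ C ++ D), FreeGroup.mk A, FreeGroup.mk B,
      FreeGroup.mk C, FreeGroup.mk D, ?_, ?_, ?_, ?_⟩
  · simp only [List.map_append]
    rw [invRev_map Prod.fst, invRev_map Prod.fst, invRev_map Prod.fst, invRev_map Prod.fst,
      hA, hB, hC, hD]
  · have bA := not_both nA
    have bB := not_both nB
    have bC := not_both nC
    have bD := not_both nD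
    simp only [List.nodup_append', List.disjoint_left, List.mem_append, mem_invRev, iA, iB, iC, iD,
      nA', nB', nC', nD', true_and, and_true]
    refine ⟨⟨⟨?_, ?_⟩, ?_⟩, ⟨⟨?_, ?_⟩, ?_⟩, ?_⟩ <;> intro l <;>
      have h1 := mA l <;> have h2 := mB l <;> have h3 := mC l <;> have h4 := mD l <;>
      have h5 := mA (l.1, !l.2) <;> have h6 := mB (l.1, !l.2) <;>
      have h7 := mC (l.1, !l.2) <;> have h8 := mD (l.1, !l.2) <;>
      have h9 := bA l <;> have h10 := bB l <;> have h11 := bC l <;> have h12 := bD l <;>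
      clear mA mB mC mD bA bB bC bD iA iB iC iD <;> simp only at * <;> grind
  · intro e t
    simp only [List.mem_append, mem_invRev, Bool.not_not]
    tauto
  · simp only [← FreeGroup.mul_mk, FreeGroup.inv_mk]

end FourthPower
end
section
namespace FourthPower

/-- signed sum of `h` along a word -/
def hs {E : Type} (h : E → ℚ) : List (E × Bool) → ℚ
  | [] => 0
  | l :: L => (if l.2 then h l.1 else - h l.1) + hs h L

lemma hs_append {E : Type} (h : E → ℚ) (L L' : List (E × Bool)) :
    hs h (L ++ L') = hs h L + hs h L' := by
  induction L with
  | nil => simp [hs]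
  | cons l L ih => simp [hs, ih, add_assoc]

/-- the homomorphism induced by `h` -/
def psi {E : Type} (h : E → ℚ) : FreeGroup E →* Multiplicative ℚ :=
  FreeGroup.lift (fun e => Multiplicative.ofAdd (h e))

lemma psi_mk {E : Type} (h : E → ℚ) (L : List (E × Bool)) :
    psi h (FreeGroup.mk L) = Multiplicative.ofAdd (hs h L) := by
  induction L with
  | nil => rw [← FreeGroup.one_eq_mk]; simp [hs]
  | cons l L ih =>
    obtain ⟨x, b⟩ := l
    have : FreeGroup.mk ((x, b) :: L) = FreeGroup.mk [(x, b)] * FreeGroup.mk L := by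
      simp [FreeGroup.mul_mk]
    rw [this, map_mul, ih, hs, ofAdd_add]
    congr 1
    cases b <;> simp [psi]

/-- the shear permutation attached to a generator -/
def shear (p q : ℚ) : Equiv.Perm (ℚ × ℚ) where
  toFun s := (s.1 + p, s.2 + q * s.1)
  invFun s := (s.1 - p, s.2 - q * (s.1 - p))
  left_inv s := by simp
  right_inv s := by simp

/-- Heisenberg-type action -/
def theta {E : Type} (h k : E → ℚ) : FreeGroup E →* Equiv.Perm (ℚ × ℚ) :=
  FreeGroup.lift (fun e => shear (h e) (k e))

lemma theta_form {E : Type} (h k : E → ℚ) (g : FreeGroup E) :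
    ∃ f : ℚ → ℚ, ∀ s, theta h k g s = (s.1 + (psi h g).toAdd, s.2 + f s.1) := by
  induction g using FreeGroup.induction_on with
  | C1 => exact ⟨fun _ => 0, by simp⟩
  | of x => exact ⟨fun H => k x * H, by simp [theta, psi, shear]⟩
  | inv_of x _ => 
    refine ⟨fun H => - (k x * (H - h x)), fun s => ?_⟩
    have : theta h k (FreeGroup.of x)⁻¹ = (shear (h x) (k x))⁻¹ := by simp [theta]
    erw [this]
    have h2 : ((shear (h x) (k x))⁻¹ : Equiv.Perm (ℚ × ℚ)) s
      = (s.1 - h x, s.2 - k x * (s.1 - h x)) := rfl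
    rw [h2]
    simp [psi, sub_eq_add_neg]
  | mul x y hx hy =>
    obtain ⟨f, hf⟩ := hx
    obtain ⟨f', hf'⟩ := hy
    refine ⟨fun H => f' H + f (H + (psi h y).toAdd), fun s => ?_⟩
    rw [map_mul, Equiv.Perm.mul_apply, hf', hf, map_mul, toAdd_mul]
    ext
    · simp; ring
    · simp; ring

lemma theta_comm {E : Type} (h k : E → ℚ) (a b : FreeGroup E) (ha : psi h a = 1)
    (hb : psi h b = 1) : theta h k (a⁻¹ * b⁻¹ * a * b) = 1 := by
  have hc : theta h k a * theta h k b = theta h k b * theta h k a := by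
    obtain ⟨f, hf⟩ := theta_form h k a
    obtain ⟨f', hf'⟩ := theta_form h k b
    ext1 s
    rw [Equiv.Perm.mul_apply, Equiv.Perm.mul_apply, hf, hf', hf, hf', ha, hb]
    ext
    · simp
    · simp; ring
  simp only [map_mul, map_inv]
  rw [mul_assoc, hc]
  group

open Classical in
/-- contribution of positive letters -/
noncomputable def areaT {E : Type} (h : E → ℚ) (e : E) : List (E × Bool) → ℚ
  | [] => 0
  | l :: L => areaT h e L + if l = (e, true) then hs h L else 0

open Classical in
/-- contribution of negative letters -/
noncomputable def areaF {E : Type} (h : E → ℚ) (e : E) : List (E × Bool) → ℚ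
  | [] => 0
  | l :: L => areaF h e L + if l = (e, false) then hs h (l :: L) else 0

open Classical in
lemma theta_mk {E : Type} (h : E → ℚ) (e : E) (L : List (E × Bool)) :
    theta h (fun x => if x = e then 1 else 0) (FreeGroup.mk L) (0, 0) =
      (hs h L, areaT h e L - areaF h e L) := by
  induction L with
  | nil => rw [← FreeGroup.one_eq_mk]; simp [hs, areaT, areaF]
  | cons l L ih =>
    obtain ⟨x, b⟩ := l
    have : FreeGroup.mk ((x, b) :: L) = FreeGroup.mk [(x, b)] * FreeGroup.mk L := by
      simp [FreeGroup.mul_mk]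
    rw [this, map_mul, Equiv.Perm.mul_apply, ih]
    cases b
    · have h1 : theta h (fun x => if x = e then 1 else 0) (FreeGroup.mk [(x, false)]) =
        (shear (h x) (if x = e then 1 else 0))⁻¹ := by simp [theta]
      rw [h1]
      have h2 : ∀ s p q, ((shear p q)⁻¹ : Equiv.Perm (ℚ × ℚ)) s
        = (s.1 - p, s.2 - q * (s.1 - p)) := fun _ _ _ => rfl
      rw [h2]
      ext
      · simp [hs]; ring
      · simp [hs, areaT, areaF]
        split_ifs <;> ring
    · have h1 : theta h (fun x => if x = e then 1 else 0) (FreeGroup.mk [(x, true)]) =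
        (shear (h x) (if x = e then 1 else 0)) := by simp [theta]
      rw [h1]
      have h2 : ∀ s p q, (shear p q : Equiv.Perm (ℚ × ℚ)) s
        = (s.1 + p, s.2 + q * s.1) := fun _ _ _ => rfl
      rw [h2]
      ext
      · simp [hs]; ring
      · simp [hs, areaT, areaF]
        split_ifs <;> ring

lemma areaT_zero {E : Type} (h : E → ℚ) (e : E) (L : List (E × Bool)) (hL : (e, true) ∉ L) :
    areaT h e L = 0 := by
  induction L with
  | nil => rfl
  | cons l L ih =>
    rw [List.mem_cons, not_or] at hL
    rw [areaT, ih hL.2, if_neg (Ne.symm hL.1)]; simp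

lemma areaF_zero {E : Type} (h : E → ℚ) (e : E) (L : List (E × Bool)) (hL : (e, false) ∉ L) :
    areaF h e L = 0 := by
  induction L with
  | nil => rfl
  | cons l L ih =>
    rw [List.mem_cons, not_or] at hL
    rw [areaF, ih hL.2, if_neg (Ne.symm hL.1)]; simp

lemma areaT_eq {E : Type} (h : E → ℚ) (e : E) (L : List (E × Bool)) (hL : L.Nodup) : ∀ i,
    L[i]? = some (e, true) → areaT h e L = hs h (L.drop (i + 1)) := by
  induction L with
  | nil => intro i hi; simp at hi
  | cons l L ih =>
    intro i hi
    rw [List.nodup_cons] at hL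
    rcases i with _ | i
    · obtain rfl : l = (e, true) := by simpa using hi
      rw [areaT, areaT_zero h e L hL.1]; simp
    · have hi' : L[i]? = some (e, true) := by simpa using hi
      have hne : l ≠ (e, true) := by
        rintro rfl
        exact hL.1 (List.mem_of_getElem? hi')
      rw [areaT, ih hL.2 i hi', if_neg hne]; simp

lemma areaF_eq {E : Type} (h : E → ℚ) (e : E) (L : List (E × Bool)) (hL : L.Nodup) : ∀ i,
    L[i]? = some (e, false) → areaF h e L = hs h (L.drop i) := by
  induction L with
  | nil => intro i hi; simp at hi
  | cons l L ih =>
    intro i hi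
    rw [List.nodup_cons] at hL
    rcases i with _ | i
    · obtain rfl : l = (e, false) := by simpa using hi
      rw [areaF, areaF_zero h e L hL.1]; simp
    · have hi' : L[i]? = some (e, false) := by simpa using hi
      have hne : l ≠ (e, false) := by
        rintro rfl
        exact hL.1 (List.mem_of_getElem? hi')
      rw [areaF, ih hL.2 i hi', if_neg hne]; simp

lemma area_lemma {E : Type} (h : E → ℚ) (W : List (E × Bool)) (hnd : W.Nodup)
    (a b c d : FreeGroup E) (ha : psi h a = 1) (hb : psi h b = 1) (hc : psi h c = 1)
    (hd : psi h d = 1) (hW : FreeGroup.mk W = a⁻¹ * b⁻¹ * a * b * (c⁻¹ * d⁻¹ * c * d)) :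
    hs h W = 0 ∧ ∀ (e : E) (i j : ℕ), W[i]? = some (e, true) → W[j]? = some (e, false) →
      hs h (W.take (i + 1)) = hs h (W.take j) := by
  classical
  have h0 : hs h W = 0 := by
    have h1 := psi_mk h W
    rw [hW] at h1
    simp only [map_mul, map_inv, ha, hb, hc, hd] at h1
    simpa using h1.symm
  refine ⟨h0, fun e i j hi hj => ?_⟩
  have h1 := theta_mk h e W
  rw [hW, map_mul, theta_comm h _ a b ha hb, theta_comm h _ c d hc hd] at h1
  have h2 : areaT h e W = areaF h e W := by
    have := congrArg Prod.snd h1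
    simp at this
    linarith
  rw [areaT_eq h e W hnd i hi, areaF_eq h e W hnd j hj] at h2
  have h3 := hs_append h (W.take (i + 1)) (W.drop (i + 1))
  have h4 := hs_append h (W.take j) (W.drop j)
  rw [List.take_append_drop, h0] at h3 h4
  linarith

end FourthPower
end
section
namespace FourthPower

lemma core_zero {N : ℕ} [NeZero N] {Ω : Type} [LinearOrder Ω] (τ : Fin N → Fin N)
    (hτ : ∀ i, τ (τ i) = i) (l : Fin N → Ω) (H1 : ∀ i, l (τ i + 1) ≠ l i)
    (H2 : ∀ i, l i < l (τ i + 1) ↔ l (i + 1) < l (τ i)) (u : Fin N → ℚ)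
    (hu : ∀ i, u (τ i + 1) = u i)
    (hv : ∀ i, l i < l (τ i + 1) → l (i - 1) < l (τ (i - 1) + 1) → u i = 0) : ∀ i, u i = 0 := by
  classical
  by_contra! hne
  let S : Finset (Fin N) := Finset.univ.filter (fun i => u i ≠ 0)
  have hS : S.Nonempty := by
    obtain ⟨i, hi⟩ := hne
    exact ⟨i, by simp [S, hi]⟩
  obtain ⟨i, hiS, hmin⟩ := S.exists_min_image l hS
  have hi : u i ≠ 0 := by simpa [S] using hiS
  have hmin' : ∀ j, u j ≠ 0 → l i ≤ l j := fun j hj => hmin j (by simp [S, hj])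
  apply hi
  apply hv
  · exact lt_of_le_of_ne (hmin' _ (by rw [hu]; exact hi)) (H1 i).symm
  · rw [H2]
    have h1 : i - 1 + 1 = i := sub_add_cancel i 1
    rw [h1]
    have h2 := hu (τ (i - 1))
    rw [hτ, h1] at h2
    have h3 := H1 (τ (i - 1))
    rw [hτ, h1] at h3
    exact lt_of_le_of_ne (hmin' _ (by rw [← h2]; exact hi)) h3

lemma half_count {N : ℕ} (τ : Fin N → Fin N) (hτ : ∀ i, τ (τ i) = i) (s : Fin N → Prop)
    [DecidablePred s] (hs : ∀ i, s (τ i) ↔ ¬ s i) :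
    2 * (Finset.univ.filter s).card = N := by
  have h1 : (Finset.univ.filter s).card = (Finset.univ.filter (fun i => ¬ s i)).card := by
    refine Finset.card_bij' (fun i _ => τ i) (fun i _ => τ i) ?_ ?_ ?_ ?_
    · intro i hi
      simp only [Finset.mem_filter, Finset.mem_univ, true_and] at hi ⊢
      rw [hs]; exact not_not.2 hi
    · intro i hi
      simp only [Finset.mem_filter, Finset.mem_univ, true_and] at hi ⊢
      rw [hs]; exact hi
    · intro i _; exact hτ i
    · intro i _; exact hτ i
  have h2 := Finset.card_filter_add_card_filter_not (s := (Finset.univ : Finset (Fin N))) s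
  rw [Finset.card_univ, Fintype.card_fin] at h2
  omega

lemma exists_transition (p : ℕ) (hp : 0 < p) (s : ℕ → Prop) (i0 j0 : ℕ)
    (hi : ∀ n, n % p = i0 % p → s n) (hj : ∀ n, n % p = j0 % p → ¬ s n) (k : ℕ) :
    ∃ t, j0 + k * p < t ∧ t ≤ j0 + k * p + p ∧ s t ∧ ¬ s (t - 1) := by
  classical
  set q := j0 + k * p with hq
  have hq' : ¬ s q := hj q (by simp [hq])
  have hex : ∃ m, q < m ∧ s m ∧ m ≤ q + p := by
    have hlt : q % p < p := Nat.mod_lt _ hp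
    have hlt2 : i0 % p < p := Nat.mod_lt _ hp
    refine ⟨q + (i0 % p + p - q % p) % p, ?_, ?_, ?_⟩
    · have hs : s (q + (i0 % p + p - q % p) % p) := by
        apply hi
        rw [Nat.add_mod_mod, Nat.add_mod]
        rw [Nat.add_mod_mod, show q % p + (i0 % p + p - q % p) = i0 % p + p by omega]
        simp
      rcases Nat.eq_zero_or_pos ((i0 % p + p - q % p) % p) with h | h
      · rw [h] at hs; exact absurd hs hq'
      · omega
    · apply hi
      rw [Nat.add_mod_mod, Nat.add_mod]
      rw [Nat.add_mod_mod, show q % p + (i0 % p + p - q % p) = i0 % p + p by omega]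
      simp
    · have := Nat.mod_lt (i0 % p + p - q % p) hp
      omega
  obtain ⟨h1, h2, h3⟩ := Nat.find_spec hex
  refine ⟨Nat.find hex, h1, h3, h2, ?_⟩
  intro hs
  rcases Nat.lt_or_ge q (Nat.find hex - 1) with h | h
  · exact Nat.find_min hex (m := Nat.find hex - 1) (by omega) ⟨h, hs, by omega⟩
  · have : Nat.find hex - 1 = q := by omega
    rw [this] at hs
    exact hq' hs

lemma core_count {p : ℕ} (hp : 0 < p) [NeZero (4 * p)] (s : Fin (4 * p) → Prop) [DecidablePred s]
    (i0 j0 : ℕ) (hi : ∀ n : ℕ, n % p = i0 % p → s (Fin.ofNat (4 * p) n))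
    (hj : ∀ n : ℕ, n % p = j0 % p → ¬ s (Fin.ofNat (4 * p) n)) :
    (Finset.univ.filter (fun i => s i ∧ s (i - 1))).card + 4 ≤ (Finset.univ.filter s).card := by
  choose t ht1 ht2 ht3 ht4 using
    exists_transition p hp (fun n => s (Fin.ofNat (4 * p) n)) i0 j0 hi hj
  have hinj : Function.Injective (fun k : Fin 4 => Fin.ofNat (4 * p) (t k)) := by
    have key : ∀ k k' : Fin 4, k < k' → Fin.ofNat (4 * p) (t k) ≠ Fin.ofNat (4 * p) (t k') := by
      intro k k' hkk h
      have h1 : t k % (4 * p) = t k' % (4 * p) := by simpa [Fin.ext_iff] using h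
      have a1 := ht1 k
      have a2 := ht2 k
      have a3 := ht1 k'
      have a4 := ht2 k'
      have hk : (k : ℕ) + 1 ≤ k' := hkk
      have hk4 : (k' : ℕ) ≤ 3 := by omega
      have b1 : ((k : ℕ) + 1) * p ≤ k' * p := Nat.mul_le_mul_right _ hk
      have b2 : (k' : ℕ) * p ≤ 3 * p := Nat.mul_le_mul_right _ hk4
      rw [add_mul] at b1
      have h2 : (4 * p) ∣ t k' - t k := (Nat.modEq_iff_dvd' (by omega)).1 h1
      have := Nat.le_of_dvd (by omega) h2
      omega
    intro k k' h
    by_contra hne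
    rcases lt_or_gt_of_ne hne with h' | h'
    · exact key _ _ h' h
    · exact key _ _ h' h.symm
  have hsub : (Finset.univ.filter (fun i => s i ∧ s (i - 1))) ∪
      Finset.univ.image (fun k : Fin 4 => Fin.ofNat (4 * p) (t k)) ⊆ Finset.univ.filter s := by
    intro i hi
    rw [Finset.mem_union] at hi
    rcases hi with hi | hi
    · simp only [Finset.mem_filter, Finset.mem_univ, true_and] at hi ⊢
      exact hi.1
    · rw [Finset.mem_image] at hi
      obtain ⟨k, _, rfl⟩ := hi
      simp only [Finset.mem_filter, Finset.mem_univ, true_and]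
      exact ht3 k
  have hdisj : Disjoint (Finset.univ.filter (fun i => s i ∧ s (i - 1)))
      (Finset.univ.image (fun k : Fin 4 => Fin.ofNat (4 * p) (t k))) := by
    rw [Finset.disjoint_right]
    intro i hi
    rw [Finset.mem_image] at hi
    obtain ⟨k, _, rfl⟩ := hi
    simp only [Finset.mem_filter, Finset.mem_univ, true_and, not_and]
    intro _
    have h1 : (Fin.ofNat (4 * p) (t k)) - 1 = Fin.ofNat (4 * p) (t k - 1) := by
      rw [sub_eq_iff_eq_add]
      have := ht1 k
      apply Fin.ext
      rw [Fin.val_add]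
      simp only [Fin.ofNat, Fin.val_one']
      rw [← Nat.add_mod]
      congr 1
      omega
    rw [h1]
    exact ht4 k
  have := Finset.card_le_card hsub
  rw [Finset.card_union_of_disjoint hdisj, Finset.card_image_of_injective _ hinj] at this
  simpa using this

end FourthPower
end
namespace FourthPower

lemma rot_cons {α : Type} (L : List α) (n : ℕ) (a : α) (ha : L[n % L.length]? = some a) :
    ∃ t, L.rotate n = a :: t ∧ L.rotate (n + 1) = t ++ [a] := by
  have hlt : n % L.length < L.length := (List.getElem?_eq_some_iff.1 ha).1
  have hd : (L.rotate n).head? = some a := by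
    rw [List.head?_eq_getElem?, ← ha, ← List.rotate_mod, List.getElem?_rotate (by omega)]
    simp [Nat.mod_eq_of_lt hlt]
  obtain ⟨t, ht⟩ := List.head?_eq_some_iff.1 hd
  refine ⟨t, ht, ?_⟩
  rw [← List.rotate_rotate, ht]
  simp

lemma cr_rotate {β : Type} (L : List (β × Bool)) (h : FreeGroup.IsCyclicallyReduced L) (n : ℕ) :
    FreeGroup.IsCyclicallyReduced (L.rotate n) := by
  induction n with
  | zero => simpa using h
  | succ n ih =>
    by_cases hL : L = []
    · simp [hL]
    have hp : n % L.length < L.length := Nat.mod_lt _ (List.length_pos_iff.2 hL)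
    obtain ⟨t, h1, h2⟩ := rot_cons L n _ (List.getElem?_eq_getElem hp)
    rw [h1] at ih
    rw [h2]
    generalize L[n % L.length] = a at *
    obtain ⟨i1, i2⟩ := ih
    unfold FreeGroup.IsReduced at i1
    rw [List.isChain_cons] at i1
    constructor
    · unfold FreeGroup.IsReduced
      rw [List.isChain_append]
      refine ⟨i1.2, by simp, ?_⟩
      intro x hx y hy
      simp at hy; subst hy
      apply i2
      · cases t with
        | nil => simp at hx
        | cons b t => simpa [List.getLast?_cons_cons] using hx
      · simp
    · intro x hx y hy
      simp at hx; subst hx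
      cases t with
      | nil => simp at hy; subst hy; simp
      | cons b t =>
        simp at hy; subst hy
        exact i1.1 _ (by simp)

lemma flat_get {α : Type} (L : List α) (k n : ℕ) (hn : n < k * L.length) :
    ((List.replicate k L).flatten)[n]? = L[n % L.length]? := by
  induction k generalizing n with
  | zero => simp at hn
  | succ k ih =>
    rw [List.replicate_succ, List.flatten_cons, List.getElem?_append]
    split_ifs with h
    · rw [Nat.mod_eq_of_lt h]
    · push Not at h
      rw [ih _ (by rw [Nat.succ_mul] at hn; omega), ← Nat.mod_eq_sub_mod h]

lemma rot_mk {β : Type} (L : List (β × Bool)) (n : ℕ) (a : β × Bool)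
    (ha : L[n % L.length]? = some a) :
    FreeGroup.mk (L.rotate (n + 1)) =
      (FreeGroup.mk [a])⁻¹ * FreeGroup.mk (L.rotate n) * FreeGroup.mk [a] := by
  obtain ⟨t, h1, h2⟩ := rot_cons L n a ha
  rw [h1, h2, ← FreeGroup.mul_mk, ← List.singleton_append (x := a) (l := t), ← FreeGroup.mul_mk]
  group

lemma reduced_inj {β : Type} {L L' : List (β × Bool)} (h : FreeGroup.IsReduced L)
    (h' : FreeGroup.IsReduced L') (e : FreeGroup.mk L = FreeGroup.mk L') : L = L' := by
  classical
  rw [← h.reduce_eq, ← h'.reduce_eq]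
  exact FreeGroup.reduce.sound e

/-- Two cyclic positions with mutually inverse letters: rotations differ. -/
lemma rot_ne {β : Type} (L : List (β × Bool)) (h : FreeGroup.IsCyclicallyReduced L) (i j : ℕ)
    (a b : β × Bool) (ha : L[i % L.length]? = some a) (hb : L[j % L.length]? = some b)
    (hab : b = (a.1, !a.2)) :
    FreeGroup.mk (L.rotate (j + 1)) ≠ FreeGroup.mk (L.rotate i) := by
  intro he
  have := reduced_inj (cr_rotate L h _).1 (cr_rotate L h _).1 he
  obtain ⟨t, h1, h2⟩ := rot_cons L i a ha
  obtain ⟨t', h3, h4⟩ := rot_cons L j b hb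
  have hc := (cr_rotate L h i).2 b (by rw [← this, h4]; simp) a (by rw [h1]; simp)
  rw [hab] at hc
  simp at hc

end FourthPower
namespace FourthPower

/-- `hs` as a linear map in the height function. -/
def hsL {E : Type} (L : List (E × Bool)) : (E → ℚ) →ₗ[ℚ] ℚ where
  toFun h := hs h L
  map_add' x y := by
    induction L with
    | nil => simp [hs]
    | cons a L ih => simp only [hs, ih, Pi.add_apply]; split_ifs <;> ring
  map_smul' x y := by
    induction L with
    | nil => simp [hs]
    | cons a L ih =>
      simp only [hs, ih, Pi.smul_apply, smul_eq_mul, RingHom.id_apply]; split_ifs <;> ring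

lemma hs_take_succ {E : Type} (h : E → ℚ) (W : List (E × Bool)) (i : ℕ) (x : E × Bool)
    (hx : W[i]? = some x) :
    hs h (W.take (i + 1)) = hs h (W.take i) + (if x.2 then h x.1 else - h x.1) := by
  rw [List.take_add_one, hx, hs_append]
  simp [hs]

lemma fin_val_succ {N : ℕ} [NeZero N] (f : ℕ → ℚ) (hf : f N = f 0) (i : Fin N) :
    f (i + 1 : Fin N).val = f (i.val + 1) := by
  rw [Fin.val_add, Fin.val_one']
  have := i.2
  by_cases h : i.val + 1 = N
  · have : (i.val + 1 % N) % N = 0 := by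
      rw [Nat.add_mod_mod, h, Nat.mod_self]
    rw [this, h, hf]
  · rw [Nat.add_mod_mod, Nat.mod_eq_of_lt (by omega)]

lemma lin_contra {E : Type} {N : ℕ} [NeZero N] (W : List (E × Bool)) (hN : W.length = N)
    (hnd : W.Nodup) (a b c d : FreeGroup E)
    (hW : FreeGroup.mk W = a⁻¹ * b⁻¹ * a * b * (c⁻¹ * d⁻¹ * c * d))
    (w : Fin N → E × Bool) (hw : ∀ i : Fin N, W[i.val]? = some (w i))
    (τ : Fin N → Fin N) (hτ : ∀ i, τ (τ i) = i) (hτw : ∀ i, w (τ i) = ((w i).1, !(w i).2))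
    {Ω : Type} [LinearOrder Ω] (l : Fin N → Ω) (H1 : ∀ i, l (τ i + 1) ≠ l i)
    (H2 : ∀ i, l i < l (τ i + 1) ↔ l (i + 1) < l (τ i))
    (hcard : 2 * ((Finset.univ.filter
      (fun i : Fin N => l i < l (τ i + 1) ∧ l (i - 1) < l (τ (i - 1) + 1))).card + 4) ≤ N) :
    False := by
  classical
  let T := {i : Fin N // (w i).2 = true}
  let P := {i : Fin N // l i < l (τ i + 1) ∧ l (i - 1) < l (τ (i - 1) + 1)}
  have hT : 2 * Fintype.card T = N := by
    rw [Fintype.card_subtype]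
    exact half_count τ hτ (fun i => (w i).2 = true) (fun i => by simp [hτw])
  have hP : Fintype.card P + 4 ≤ Fintype.card T := by
    have : Fintype.card P = (Finset.univ.filter
      (fun i : Fin N => l i < l (τ i + 1) ∧ l (i - 1) < l (τ (i - 1) + 1))).card :=
      Fintype.card_subtype _
    omega
  have hwinj : Function.Injective w := by
    intro i j hij
    have h1 := hw i
    rw [hij, ← hw j] at h1
    exact Fin.ext ((List.getElem?_inj (by rw [hN]; exact i.2) hnd).1 h1)
  let H : (T → ℚ) →ₗ[ℚ] (E → ℚ) :=
    LinearMap.pi fun e => ∑ t : T, if (w t.1).1 = e then LinearMap.proj t else 0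
  have hH : ∀ g (t : T), H g (w t.1).1 = g t := by
    intro g t
    simp only [H, LinearMap.pi_apply, LinearMap.sum_apply]
    rw [Finset.sum_eq_single t]
    · simp
    · intro s _ hst
      rw [if_neg]
      · simp
      · intro h
        exact hst (Subtype.ext (hwinj (Prod.ext h (by rw [s.2, t.2]))))
    · simp
  let cw : Fin 4 → List (E × Bool) := ![a.toWord, b.toWord, c.toWord, d.toWord]
  let F : ((T → ℚ) × ℚ) →ₗ[ℚ] ((Fin 4 → ℚ) × (P → ℚ)) :=
    LinearMap.prod
      (LinearMap.pi fun k => (hsL (cw k)) ∘ₗ H ∘ₗ LinearMap.fst ℚ _ _)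
      (LinearMap.pi fun i => LinearMap.snd ℚ _ _ +
        (hsL (W.take i.1.val)) ∘ₗ H ∘ₗ LinearMap.fst ℚ _ _)
  have hker : LinearMap.ker F ≠ ⊥ := by
    apply LinearMap.ker_ne_bot_of_finrank_lt
    simp only [Module.finrank_prod, Module.finrank_fintype_fun_eq_card, Module.finrank_self,
      Fintype.card_fin]
    omega
  obtain ⟨⟨g, k⟩, hgk, hne⟩ := (Submodule.ne_bot_iff _).mp hker
  rw [LinearMap.mem_ker] at hgk
  have hF1 : ∀ q, hs (H g) (cw q) = 0 := fun q => congrFun (congrArg Prod.fst hgk) q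
  have hF2 : ∀ i : P, k + hs (H g) (W.take i.1.val) = 0 :=
    fun i => congrFun (congrArg Prod.snd hgk) i
  have hpsi : ∀ x : FreeGroup E, hs (H g) x.toWord = 0 → psi (H g) x = 1 := by
    intro x hx
    rw [← FreeGroup.mk_toWord (x := x), psi_mk, hx]; rfl
  obtain ⟨hA0, hA⟩ := area_lemma (H g) W hnd a b c d (hpsi a (hF1 0)) (hpsi b (hF1 1))
    (hpsi c (hF1 2)) (hpsi d (hF1 3)) hW
  let u : Fin N → ℚ := fun i => k + hs (H g) (W.take i.val)
  have hsucc : ∀ i : Fin N, u (i + 1) = k + hs (H g) (W.take (i.val + 1)) := by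
    intro i
    apply fin_val_succ (fun n => k + hs (H g) (W.take n))
    rw [← hN, List.take_length, hA0]; simp [hs]
  have hu : ∀ i, u (τ i + 1) = u i := by
    intro i
    rw [hsucc]
    have hi := hw i
    have hj := hw (τ i)
    rw [hτw] at hj
    rcases hwi : w i with ⟨e, t⟩
    rw [hwi] at hi hj
    cases t with
    | true =>
      have h := hA e _ _ hi hj
      rw [hs_take_succ _ _ _ _ hi] at h
      rw [hs_take_succ _ _ _ _ hj]
      simp only [u]
      simp at h ⊢
      linarith
    | false =>
      have h := hA e _ _ hj hi
      simp only [u]; rw [h]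
  have hu0 := core_zero τ hτ l H1 H2 u hu (fun i h1 h2 => hF2 ⟨i, h1, h2⟩)
  have hk : k = 0 := by
    have := hu0 0
    simpa [u, hs] using this
  apply hne
  have hg : g = 0 := by
    funext t
    have h1 := hu0 t.1
    have h2 := hu0 (t.1 + 1)
    rw [hsucc, hs_take_succ _ _ _ _ (hw t.1), t.2, hH] at h2
    simp only [u] at h1
    simp at h2 ⊢
    linarith
  rw [hg, hk]; rfl

end FourthPower
namespace FourthPower

lemma main_contra {β : Type} (L : List (β × Bool)) (hL : FreeGroup.IsCyclicallyReduced L)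
    (hne : L ≠ []) (hlift : LiftP ((List.replicate 4 L).flatten)) : False := by
  classical
  obtain ⟨W, a, b, c, d, hWm, hnd, hcl, hW⟩ := hlift
  obtain ⟨Ω, _, ℓ, hinj, hconj⟩ := exists_conj_order β
  obtain ⟨p, hpl⟩ : ∃ p, p = L.length := ⟨_, rfl⟩
  have hp : 0 < p := by rw [hpl]; exact List.length_pos_iff.2 hne
  have : NeZero (4 * p) := ⟨by omega⟩
  have hN : W.length = 4 * p := by
    have := congrArg List.length hWm
    simp at this
    omega
  have hconj' : ∀ g x y, ℓ x < ℓ y ↔ ℓ (g * x * g⁻¹) < ℓ (g * y * g⁻¹) := by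
    intro g x y
    refine ⟨hconj g x y, fun h => ?_⟩
    have := hconj g⁻¹ _ _ h
    simpa [mul_assoc] using this
  let w : Fin (4 * p) → (β × ℕ) × Bool := fun i => W.get (Fin.cast hN.symm i)
  have hw : ∀ i : Fin (4 * p), W[i.val]? = some (w i) := fun i => List.getElem?_eq_getElem _
  have hwL : ∀ i : Fin (4 * p), L[i.val % L.length]? = some ((w i).1.1, (w i).2) := by
    intro i
    rw [← flat_get L 4 i.val (by have := i.2; omega), ← hWm, List.getElem?_map, hw]
    rfl
  have hex : ∀ i, ∃ j, w j = ((w i).1, !(w i).2) := by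
    intro i
    have := hcl (w i).1 (w i).2 (List.mem_of_getElem? (hw i))
    obtain ⟨n, hn, h⟩ := List.mem_iff_getElem.1 this
    exact ⟨⟨n, by omega⟩, h⟩
  choose τ hτw using hex
  have hwinj : Function.Injective w := by
    intro i j hij
    have h1 := hw i
    rw [hij, ← hw j] at h1
    exact Fin.ext ((List.getElem?_inj (by rw [hN]; exact i.2) hnd).1 h1)
  have hτ : ∀ i, τ (τ i) = i := by
    intro i
    apply hwinj
    rw [hτw, hτw]; simp
  let lam : ℕ → Ω := fun n => ℓ (FreeGroup.mk (L.rotate n))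
  have hlam : ∀ m n, m % p = n % p → lam m = lam n := by
    intro m n h
    simp only [lam]
    rw [← List.rotate_mod L m, ← List.rotate_mod L n, ← hpl, h]
  let l : Fin (4 * p) → Ω := fun i => lam i.val
  have hl1 : ∀ i : Fin (4 * p), l (i + 1) = lam (i.val + 1) := by
    intro i
    apply hlam
    rw [Fin.val_add, Fin.val_one', Nat.add_mod_mod, Nat.mod_mul_left_mod]
  have H1 : ∀ i, l (τ i + 1) ≠ l i := by
    intro i h
    rw [hl1] at h
    refine rot_ne L hL i.val (τ i).val _ _ (hwL i) (hwL (τ i)) ?_ (hinj h)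
    rw [hτw]
  have H2 : ∀ i, l i < l (τ i + 1) ↔ l (i + 1) < l (τ i) := by
    intro i
    rw [hl1, hl1]
    simp only [l, lam]
    rw [rot_mk L _ _ (hwL i), rot_mk L _ _ (hwL (τ i)), hτw]
    have hx : FreeGroup.mk [((w i).1.1, !(w i).2)] = (FreeGroup.mk [((w i).1.1, (w i).2)])⁻¹ := by
      rw [FreeGroup.inv_mk]; rfl
    simp only [hx]
    rw [hconj' (FreeGroup.mk [((w i).1.1, (w i).2)])⁻¹]
    simp only [inv_inv, mul_assoc, inv_mul_cancel_left, inv_mul_cancel, mul_one]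
  let s : Fin (4 * p) → Prop := fun i => l i < l (τ i + 1)
  have hsτ : ∀ i, s (τ i) ↔ ¬ s i := by
    intro i
    simp only [s]
    rw [H2 i, hτ, not_lt]
    have := H1 (τ i)
    rw [hτ] at this
    exact ⟨le_of_lt, fun h => lt_of_le_of_ne h this.symm⟩
  let kap : Fin (4 * p) → Ω := fun i => if (w i).2 then lam i.val else lam (i.val + 1)
  have hks : ∀ i, s i ↔ kap i < kap (τ i) := by
    intro i
    cases h : (w i).2 with
    | true =>
      have h' : (w (τ i)).2 = false := by rw [hτw, h]; rfl
      simp only [s, kap, h, h', hl1]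
      simp [l]
    | false =>
      have h' : (w (τ i)).2 = true := by rw [hτw, h]; rfl
      simp only [s, kap, h, h', H2 i]
      simp [l, ← hl1]
  have hkper : ∀ i j : Fin (4 * p), i.val % p = j.val % p →
      kap i = kap j ∧ (w i).1.1 = (w j).1.1 := by
    intro i j h
    have h1 := hwL i
    have h2 := hwL j
    rw [← hpl] at h1 h2
    rw [h, h2] at h1
    simp only [Option.some.injEq, Prod.mk.injEq] at h1
    refine ⟨?_, h1.1.symm⟩
    simp only [kap, h1.2, hlam _ _ h, hlam (i.val + 1) (j.val + 1) (by
      rw [Nat.add_mod, h, ← Nat.add_mod])]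
  let S : Finset (Fin (4 * p)) := Finset.univ.filter (fun i => (w i).1.1 = (w 0).1.1)
  have hS : S.Nonempty := ⟨0, by simp [S]⟩
  have hSτ : ∀ i ∈ S, τ i ∈ S := by
    intro i hi
    simp only [S, Finset.mem_filter, Finset.mem_univ, true_and] at hi ⊢
    rw [hτw]; exact hi
  obtain ⟨i0, hi0, hmin⟩ := S.exists_min_image kap hS
  obtain ⟨j0, hj0, hmax⟩ := S.exists_max_image kap hS
  have hper : ∀ n (i0 : Fin (4 * p)), i0 ∈ S → n % p = i0.val % p →
      kap (Fin.ofNat (4 * p) n) = kap i0 ∧ Fin.ofNat (4 * p) n ∈ S := by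
    intro n i0 hi0 h
    have := hkper (Fin.ofNat (4 * p) n) i0 (by
      rw [← h]; simp [Fin.ofNat])
    refine ⟨this.1, ?_⟩
    simp only [S, Finset.mem_filter, Finset.mem_univ, true_and] at hi0 ⊢
    rw [this.2, hi0]
  have hcc := core_count hp s i0.val j0.val (by
    intro n hn
    obtain ⟨h1, h2⟩ := hper n i0 hi0 hn
    by_contra hns
    rw [← hsτ, hks, hτ, h1] at hns
    exact absurd (hmin _ (hSτ _ h2)) (not_le.2 hns)) (by
    intro n hn hs
    obtain ⟨h1, h2⟩ := hper n j0 hj0 hn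
    rw [hks, h1] at hs
    exact absurd (hmax _ (hSτ _ h2)) (not_le.2 hs))
  have hhalf := half_count τ hτ s hsτ
  refine lin_contra W hN hnd a b c d hW w hw τ hτ hτw l H1 H2 ?_
  have e : (Finset.univ.filter (fun i : Fin (4 * p) => s i ∧ s (i - 1))).card =
    (Finset.univ.filter
      (fun i : Fin (4 * p) => l i < l (τ i + 1) ∧ l (i - 1) < l (τ (i - 1) + 1))).card := by
    congr 1
  rw [← e]
  have e2 : ∀ (x y : ℕ), x + 4 ≤ y → 2 * y = 4 * p → 2 * (x + 4) ≤ 4 * p := by omega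
  refine e2 _ _ ?_ hhalf
  convert hcc

/-- In a free group, a product of two commutators that is a fourth power is trivial. -/
theorem fourth_power {β : Type} (a b c d z : FreeGroup β)
    (h : a⁻¹ * b⁻¹ * a * b * (c⁻¹ * d⁻¹ * c * d) = z ^ 4) : z = 1 := by
  classical
  obtain ⟨L, hLdef⟩ : ∃ L, L = FreeGroup.reduceCyclically z.toWord := ⟨_, rfl⟩
  have hL : FreeGroup.IsCyclicallyReduced L := by
    rw [hLdef]
    exact FreeGroup.reduceCyclically.isCyclicallyReduced FreeGroup.isReduced_toWord
  obtain ⟨g, hg⟩ : ∃ g : FreeGroup β, z = g * FreeGroup.mk L * g⁻¹ := by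
    refine ⟨FreeGroup.mk (FreeGroup.reduceCyclically.conjugator z.toWord), ?_⟩
    rw [hLdef, FreeGroup.inv_mk, FreeGroup.mul_mk, FreeGroup.mul_mk,
      FreeGroup.reduceCyclically.conj_conjugator_reduceCyclically, FreeGroup.mk_toWord]
  by_cases hne : L = []
  · rw [hg, hne, ← FreeGroup.one_eq_mk]; simp
  exfalso
  have key : (g⁻¹ * a * g)⁻¹ * (g⁻¹ * b * g)⁻¹ * (g⁻¹ * a * g) * (g⁻¹ * b * g) *
      ((g⁻¹ * c * g)⁻¹ * (g⁻¹ * d * g)⁻¹ * (g⁻¹ * c * g) * (g⁻¹ * d * g)) =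
      FreeGroup.mk L ^ 4 := by
    have h1 : FreeGroup.mk L ^ 4 = g⁻¹ * z ^ 4 * g := by
      rw [hg, conj_pow]; group
    rw [h1, ← h]; group
  generalize g⁻¹ * a * g = a' at key
  generalize g⁻¹ * b * g = b' at key
  generalize g⁻¹ * c * g = c' at key
  generalize g⁻¹ * d * g = d' at key
  apply main_contra L hL hne
  have hflat : FreeGroup.mk ((List.replicate 4 L).flatten) = FreeGroup.mk L ^ 4 := by
    rw [FreeGroup.pow_mk]
  refine LiftP.red ?_ (LiftP.ofWords a'.toWord b'.toWord c'.toWord d'.toWord)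
  have hr := (hL.flatten_replicate 4).isReduced
  rw [← hr.reduce_eq]
  have : FreeGroup.reduce (List.replicate 4 L).flatten = FreeGroup.reduce
      (FreeGroup.invRev a'.toWord ++ FreeGroup.invRev b'.toWord ++ a'.toWord ++ b'.toWord ++
        (FreeGroup.invRev c'.toWord ++ FreeGroup.invRev d'.toWord ++ c'.toWord ++ d'.toWord)) := by
    apply FreeGroup.reduce.sound
    rw [hflat, ← key]
    simp only [← FreeGroup.mul_mk, ← FreeGroup.inv_mk, FreeGroup.mk_toWord]
  rw [this]
  exact FreeGroup.reduce.red

end FourthPower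

/-- For `G = ⟨a,b,c,d,z ∣ [a,b][c,d] = z⁴⟩`, every homomorphism to a free group
kills `z`; consequently `G` is not residually free. -/
theorem not_residually_free_of_fourth_power_relator :
    (∀ (β : Type) (φ : PresentedGroup surfaceLikeRel →* FreeGroup β),
      φ (PresentedGroup.of 4) = 1) ∧
    ¬ (∀ g : PresentedGroup surfaceLikeRel, g ≠ 1 →
        ∃ (β : Type) (φ : PresentedGroup surfaceLikeRel →* FreeGroup β), φ g ≠ 1) := by
  have part1 : ∀ (β : Type) (φ : PresentedGroup surfaceLikeRel →* FreeGroup β),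
      φ (PresentedGroup.of 4) = 1 := by
    intro β φ
    have h := congrArg φ (PresentedGroup.one_of_mem (rels := surfaceLikeRel) (Set.mem_singleton _))
    rw [map_one] at h
    simp only [map_mul, map_inv, map_pow] at h
    exact FourthPower.fourth_power _ _ _ _ _ (mul_inv_eq_one.1 h)
  refine ⟨part1, fun H => ?_⟩
  let f : Fin 5 → Multiplicative (ZMod 4) := fun i => if i = 4 then Multiplicative.ofAdd 1 else 1
  have hf : ∀ r ∈ surfaceLikeRel, FreeGroup.lift f r = 1 := by
    intro r hr
    rw [Set.mem_singleton_iff.1 hr]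
    simp only [map_mul, map_inv, map_pow, FreeGroup.lift_apply_of, f]
    decide
  have hne : (PresentedGroup.of 4 : PresentedGroup surfaceLikeRel) ≠ 1 := by
    intro h
    have := congrArg (PresentedGroup.toGroup hf) h
    rw [PresentedGroup.toGroup.of, map_one] at this
    simp only [f] at this
    revert this
    decide
  obtain ⟨β, φ, hφ⟩ := H _ hne
  exact hφ (part1 β φ)
end

section
/- Let A and B be locally indicable groups, r a cyclically reduced word in A ∗ B of (free product) length at least 2, and G = (A ∗ B)/⟨⟨r⟩⟩. Then the canonical maps A → G and B → G are injective. -/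
open Monoid

/-- A group is locally indicable if every non-trivial finitely generated subgroup
surjects onto `ℤ`. -/
def LocallyIndicable (G : Type) [Group G] : Prop :=
  ∀ H : Subgroup G, H ≠ ⊥ → H.FG →
    ∃ f : H →* Multiplicative ℤ, Function.Surjective f

/-- An element of a free product `A ∗ B` is a cyclically reduced word of length at
least `2`: it is an alternating product of non-trivial syllables, with first and last
syllables in different factors (hence of even length `2n ≥ 2`). -/
def CyclicallyReducedGE2 {A B : Type} [Group A] [Group B] (r : Coprod A B) : Prop :=
  ∃ n : ℕ, 0 < n ∧
    ((∃ (a : Fin n → A) (b : Fin n → B), (∀ i, a i ≠ 1) ∧ (∀ i, b i ≠ 1) ∧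
        r = (List.ofFn fun i => Coprod.inl (a i) * Coprod.inr (b i)).prod) ∨
     (∃ (a : Fin n → A) (b : Fin n → B), (∀ i, a i ≠ 1) ∧ (∀ i, b i ≠ 1) ∧
        r = (List.ofFn fun i => Coprod.inr (b i) * Coprod.inl (a i)).prod))



namespace FHS

/-- Weak form of local indicability: f.g. nontrivial subgroups have nontrivial maps to `ℤ`. -/
def LI (G : Type) [Group G] : Prop :=
  ∀ H : Subgroup G, H ≠ ⊥ → H.FG → ∃ f : H →* Multiplicative ℤ, f ≠ 1

theorem LI.of_locallyIndicable {G : Type} [Group G] (h : LocallyIndicable G) : LI G := by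
  intro H h1 h2
  obtain ⟨f, hf⟩ := h H h1 h2
  refine ⟨f, ?_⟩
  rintro rfl
  obtain ⟨x, hx⟩ := hf (Multiplicative.ofAdd 1)
  simp at hx
  have := congrArg Multiplicative.toAdd hx
  simp at this

theorem LI.hom_of_map_ne_bot {G P : Type} [Group G] [Group P] (hP : LI P) (f : G →* P)
    (H : Subgroup G) (hH : H.FG) (hm : H.map f ≠ ⊥) : ∃ f : H →* Multiplicative ℤ, f ≠ 1 := by
  obtain ⟨g, hg⟩ := hP (H.map f) hm ((Subgroup.fg_iff_submonoid_fg _).2 (by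
    rw [show (H.map f).toSubmonoid = H.toSubmonoid.map f from rfl]
    exact ((Subgroup.fg_iff_submonoid_fg _).1 hH).map f))
  refine ⟨g.comp (f.subgroupMap H), ?_⟩
  intro h
  apply hg
  ext x
  obtain ⟨y, rfl⟩ := f.subgroupMap_surjective H x
  exact congrArg Multiplicative.toAdd (DFunLike.congr_fun h y)

theorem LI.of_injective {G P : Type} [Group G] [Group P] (hP : LI P) (f : G →* P)
    (hf : Function.Injective f) : LI G := by
  intro H h1 h2
  refine hP.hom_of_map_ne_bot f H h2 ?_
  intro h
  rw [Subgroup.map_eq_bot_iff] at h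
  rw [(MonoidHom.ker_eq_bot_iff f).2 hf] at h
  exact h1 (le_bot_iff.1 h)

theorem LI.subgroup {G : Type} [Group G] (hG : LI G) (H : Subgroup G) : LI H :=
  hG.of_injective H.subtype H.subtype_injective

theorem LI.freeGroup (α : Type) : LI (FreeGroup α) := by
  intro H h1 _
  have : IsFreeGroup H := inferInstance
  by_contra hcon
  push Not at hcon
  apply h1
  have hs : Subsingleton H := by
    have e := IsFreeGroup.toFreeGroup H
    have : IsEmpty (IsFreeGroup.Generators H) := by
      by_contra hne
      rw [not_isEmpty_iff] at hne
      obtain ⟨x⟩ := hne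
      have := hcon (IsFreeGroup.lift (fun _ => Multiplicative.ofAdd (1 : ℤ)))
      have h2 := DFunLike.congr_fun this (IsFreeGroup.of x)
      simp at h2
    exact e.toEquiv.subsingleton
  exact (Subgroup.eq_bot_iff_forall _).2 fun x hx => congrArg Subtype.val (Subsingleton.elim (⟨x, hx⟩ : H) 1)

theorem LI.prod {A B : Type} [Group A] [Group B] (hA : LI A) (hB : LI B) : LI (A × B) := by
  intro H h1 h2
  by_cases h : H.map (MonoidHom.fst A B) = ⊥
  · by_cases h' : H.map (MonoidHom.snd A B) = ⊥
    · exfalso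
      apply h1
      rw [Subgroup.map_eq_bot_iff] at h h'
      rw [eq_bot_iff]
      intro x hx
      exact Prod.ext (h hx) (h' hx)
    · exact hB.hom_of_map_ne_bot _ H h2 h'
  · exact hA.hom_of_map_ne_bot _ H h2 h

theorem LI.semidirect {N P : Type} [Group N] [Group P] (φ : P →* MulAut N) (hN : LI N)
    (hP : LI P) : LI (N ⋊[φ] P) := by
  intro H h1 h2
  by_cases h : H.map (SemidirectProduct.rightHom : N ⋊[φ] P →* P) = ⊥
  · rw [Subgroup.map_eq_bot_iff] at h
    let g : H →* N :=
      { toFun := fun x => x.1.left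
        map_one' := rfl
        map_mul' := by
          intro x y
          have : x.1.right = 1 := h x.2
          simp [this] }
    have hg : Function.Injective g := by
      intro x y hxy
      have hx : x.1.right = 1 := h x.2
      have hy : y.1.right = 1 := h y.2
      exact Subtype.ext (SemidirectProduct.ext hxy (hx.trans hy.symm))
    have hL : LI H := hN.of_injective g hg
    have : Group.FG H := (Group.fg_iff_subgroup_fg H).2 h2
    have hn : (⊤ : Subgroup H) ≠ ⊥ := by
      intro hb
      apply h1
      rw [eq_bot_iff]
      intro x hx
      have : (⟨x, hx⟩ : H) ∈ (⊤ : Subgroup H) := trivial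
      rw [hb, Subgroup.mem_bot] at this
      exact congrArg Subtype.val this
    obtain ⟨f, hf⟩ := hL ⊤ hn this.out
    refine ⟨f.comp (Subgroup.topEquiv (G := H)).symm.toMonoidHom, ?_⟩
    intro h0
    apply hf
    ext x
    exact congrArg Multiplicative.toAdd (DFunLike.congr_fun h0 x.1)
  · exact hP.hom_of_map_ne_bot _ H h2 h

/-- Left translation action on the free group on a group. -/
def transl (P : Type) [Group P] : P →* MulAut (FreeGroup P) where
  toFun p := FreeGroup.freeGroupCongr (Equiv.mulLeft p)
  map_one' := by
    ext x
    simp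
  map_mul' p q := by
    apply MulEquiv.toMonoidHom_injective
    ext x
    simp [mul_assoc]

theorem transl_of (P : Type) [Group P] (p q : P) :
    transl P p (FreeGroup.of q) = FreeGroup.of (p * q) := by
  simp [transl]

section coprod
variable {A B : Type} [Group A] [Group B]

/-- The embedding of `A ∗ B` in `F(A × B) ⋊ (A × B)`. -/
def emb (A B : Type) [Group A] [Group B] :
    Coprod A B →* (FreeGroup (A × B) ⋊[transl (A × B)] (A × B)) :=
  Coprod.lift
    { toFun := fun a => ⟨FreeGroup.of 1 * (FreeGroup.of (a, 1))⁻¹, (a, 1)⟩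
      map_one' := by
        ext <;> simp [← Prod.one_eq_mk]
      map_mul' := by
        intro a a'
        refine SemidirectProduct.ext ?_ ?_
        · rw [SemidirectProduct.mul_left]
          simp [transl_of]
        · rw [SemidirectProduct.mul_right]
          simp }
    (SemidirectProduct.inr.comp (MonoidHom.inr A B))

/-- The value of a list of pairs of syllables. -/
def pairProd (L : List (A × B)) : Coprod A B :=
  (L.map fun x => Coprod.inl x.1 * Coprod.inr x.2).prod

/-- normal form predicate -/
def NF (g : Coprod A B) : Prop :=
  ∃ (b : B) (L : List (A × B)), g = Coprod.inr b * pairProd L ∧ (∀ x ∈ L, x.1 ≠ 1) ∧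
    L.IsChain (fun x _ => x.2 ≠ 1)

theorem NF_inr (b : B) (g : Coprod A B) (h : NF g) : NF (Coprod.inr b * g) := by
  obtain ⟨b0, L, rfl, h1, h2⟩ := h
  exact ⟨b * b0, L, by simp [mul_assoc], h1, h2⟩

theorem NF_inl (a : A) (g : Coprod A B) (h : NF g) : NF (Coprod.inl a * g) := by
  by_cases ha : a = 1
  · subst ha; simpa using h
  obtain ⟨b0, L, rfl, h1, h2⟩ := h
  by_cases hb : b0 = 1
  · subst hb
    cases L with
    | nil => exact ⟨1, [(a, 1)], by simp [pairProd], by simpa using ha, by simp⟩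
    | cons x L =>
      by_cases hx : a * x.1 = 1
      · refine ⟨x.2, L, ?_, fun y hy => h1 y (by simp [hy]), h2.tail⟩
        simp [pairProd]
        rw [← mul_assoc, ← mul_assoc, ← map_mul, hx]
        simp
      · refine ⟨1, (a * x.1, x.2) :: L, ?_, ?_, ?_⟩
        · simp [pairProd, mul_assoc]
        · intro y hy
          rcases List.mem_cons.1 hy with rfl | hy
          · exact hx
          · exact h1 y (by simp [hy])
        · rw [List.isChain_cons] at h2 ⊢
          exact h2
  · refine ⟨1, (a, b0) :: L, by simp [pairProd, mul_assoc], ?_, ?_⟩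
    · intro y hy
      rcases List.mem_cons.1 hy with rfl | hy
      · exact ha
      · exact h1 y hy
    · rw [List.isChain_cons]
      exact ⟨fun _ _ => hb, h2⟩

theorem NF_all (g : Coprod A B) : NF g := by
  suffices ∀ g k : Coprod A B, NF k → NF (g * k) by
    simpa using this g 1 ⟨1, [], by simp [pairProd], by simp, by simp⟩
  intro g
  induction g using Coprod.induction_on with
  | inl a => exact fun k hk => NF_inl a k hk
  | inr b => exact fun k hk => NF_inr b k hk
  | mul x y hx hy =>
    intro k hk
    rw [mul_assoc]
    exact hx _ (hy _ hk)

/-- the free group word of the image of a list -/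
def wordOf : A × B → List (A × B) → List ((A × B) × Bool)
  | _, [] => []
  | p, x :: L => (p, true) :: (p * (x.1, 1), false) :: wordOf (p * x) L

theorem emb_pairProd (L : List (A × B)) (p : A × B) :
    (SemidirectProduct.inr p * emb A B (pairProd L)).left = FreeGroup.mk (wordOf p L) := by
  induction L generalizing p with
  | nil => simp [pairProd, wordOf]; rfl
  | cons x L ih =>
    have h1 : emb A B (pairProd (x :: L)) = 
      SemidirectProduct.inl (FreeGroup.of 1 * (FreeGroup.of (x.1, 1))⁻¹) * 
        (SemidirectProduct.inr x * emb A B (pairProd L)) := by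
      simp [pairProd, emb]
      rw [← mul_assoc]
      congr 1
      ext <;> simp
    have h2 : FreeGroup.mk (wordOf p (x :: L)) = FreeGroup.of p * (FreeGroup.of (p * (x.1, 1)))⁻¹ *
        FreeGroup.mk (wordOf (p * x) L) := by
      simp [wordOf, FreeGroup.of, FreeGroup.invRev]
    rw [h1, h2, ← ih (p * x)]
    rw [SemidirectProduct.mul_left, SemidirectProduct.mul_left, SemidirectProduct.mul_left,
      SemidirectProduct.mul_left]
    simp [transl_of, mul_assoc]

theorem wordOf_reduced (L : List (A × B)) (p : A × B) (h1 : ∀ x ∈ L, x.1 ≠ 1)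
    (h2 : L.IsChain (fun x _ => x.2 ≠ 1)) : FreeGroup.IsReduced (wordOf p L) := by
  induction L generalizing p with
  | nil => simp [wordOf]
  | cons x L ih =>
    have := ih (p * x) (fun y hy => h1 y (by simp [hy])) h2.tail
    cases L with
    | nil => 
      have := h1 x (by simp)
      simp [wordOf, Prod.ext_iff, this]
    | cons y L =>
      have h3 := h1 x (by simp)
      have h4 : x.2 ≠ 1 := (List.isChain_cons_cons.1 h2).1
      simp only [wordOf, FreeGroup.isReduced_cons_cons] at this ⊢
      refine ⟨?_, ?_, this⟩
      · intro h
        simp [Prod.ext_iff] at h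
        exact absurd h h3
      · intro h
        simp [Prod.ext_iff] at h
        exact absurd h.symm h4

theorem emb_injective : Function.Injective (emb A B) := by
  rw [injective_iff_map_eq_one]
  intro g hg
  obtain ⟨b, L, rfl, h1, h2⟩ := NF_all g
  have h3 : (SemidirectProduct.inr (1, b) * emb A B (pairProd L)) = 1 := by
    rw [← hg]; simp [emb]
  have h4 := emb_pairProd L (1, b)
  rw [h3] at h4
  have h5 := wordOf_reduced L (1, b) h1 h2
  have h6 : wordOf (1, b) L = [] := by
    have h7 : FreeGroup.mk (wordOf (1, b) L) = FreeGroup.mk [] := h4.symm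
    obtain ⟨c, hc1, hc2⟩ := FreeGroup.Red.exact.1 h7
    have := h5.red_iff_eq.1 hc1
    subst this
    exact FreeGroup.IsReduced.nil.red_iff_eq.1 hc2
  cases L with
  | nil => 
    have := congrArg SemidirectProduct.right hg
    simp [pairProd, emb] at this
    simp [pairProd, this]
  | cons x L => simp [wordOf] at h6

theorem LI.coprod (hA : LI A) (hB : LI B) : LI (Coprod A B) :=
  ((LI.freeGroup _).semidirect _ (hA.prod hB)).of_injective (emb A B) emb_injective

end coprod

/-- Evaluate a word `∏ e^{ε_i} c_i`. -/
def evj {C Q : Type} [Group C] [Group Q] (j : C →* Q) (e : Q) (w : List (ℤˣ × C)) : Q :=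
  (w.map fun x => e ^ (x.1 : ℤ) * j x.2).prod

/-- Reducedness of adjacent letters. -/
def RR {C : Type} [Group C] (a b : ℤˣ × C) : Prop := a.2 = 1 → a.1 = b.1

/-- Cyclically reduced words. -/
def Cyc {C : Type} [Group C] (w : List (ℤˣ × C)) : Prop := (w ++ w).IsChain RR

/-- Solvability of an equation over a group. -/
def Solv {C : Type} [Group C] (w : List (ℤˣ × C)) : Prop :=
  ∃ (Q : Type) (_ : Group Q) (j : C →* Q) (e : Q), Function.Injective j ∧ evj j e w = 1

/-- The main statement for words of length `< n`. -/
def TT (n : ℕ) : Prop :=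
  ∀ (C : Type) [Group C], LI C → ∀ w : List (ℤˣ × C), w ≠ [] → Cyc w → w.length < n → Solv w

theorem isChain_rotate {α : Type} {R : α → α → Prop} {u v : List α}
    (h : ((u ++ v) ++ (u ++ v)).IsChain R) : ((v ++ u) ++ (v ++ u)).IsChain R := by
  rcases List.eq_nil_or_concat u with rfl | ⟨u', x, rfl⟩
  · simpa using h
  cases v with
  | nil => simpa using h
  | cons y v =>
    rw [List.isChain_append] at h ⊢
    obtain ⟨h1, h2, h3⟩ := h
    rw [List.isChain_append] at h1 ⊢
    obtain ⟨h4, h5, h6⟩ := h1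
    refine ⟨⟨h5, h4, ?_⟩, ⟨h5, h4, ?_⟩, ?_⟩
    · intro a ha b hb
      refine h3 a ?_ b ?_
      · rw [List.getLast?_append, ha]; rfl
      · rw [List.head?_append, hb]; rfl
    · intro a ha b hb
      refine h3 a ?_ b ?_
      · rw [List.getLast?_append, ha]; rfl
      · rw [List.head?_append, hb]; rfl
    · intro a ha b hb
      refine h6 a ?_ b ?_
      · rw [List.getLast?_append] at ha
        simpa using ha
      · simpa using hb

theorem Cyc.rotate {C : Type} [Group C] {u v : List (ℤˣ × C)} (h : Cyc (u ++ v)) :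
    Cyc (v ++ u) := isChain_rotate h

theorem prod_rotate {Q : Type} [Group Q] {a b : Q} (h : a * b = 1) : b * a = 1 := by
  rw [mul_eq_one_iff_eq_inv] at h
  rw [h, mul_inv_cancel]

theorem Solv.rotate {C : Type} [Group C] {u v : List (ℤˣ × C)} (h : Solv (u ++ v)) :
    Solv (v ++ u) := by
  obtain ⟨Q, _, j, e, hj, h⟩ := h
  refine ⟨Q, _, j, e, hj, ?_⟩
  simp only [evj, List.map_append, List.prod_append] at h ⊢
  exact prod_rotate h

theorem hnn_exists {K Q0 : Type} [Group K] [Group Q0] (f g : K →* Q0)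
    (hf : Function.Injective f) (hg : Function.Injective g) :
    ∃ (Q : Type) (_ : Group Q) (i : Q0 →* Q) (t : Q) (deg : Q →* Multiplicative ℤ),
      Function.Injective i ∧ (∀ k, t * i (f k) = i (g k) * t) ∧
      deg t = Multiplicative.ofAdd 1 ∧ ∀ q, deg (i q) = 1 := by
  let φ : f.range ≃* g.range := (MonoidHom.ofInjective hf).symm.trans (MonoidHom.ofInjective hg)
  refine ⟨HNNExtension Q0 f.range g.range φ, inferInstance, HNNExtension.of, HNNExtension.t,
    HNNExtension.lift 1 (Multiplicative.ofAdd 1) (by simp), HNNExtension.of_injective _, ?_, by simp,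
    by simp⟩
  intro k
  have := HNNExtension.t_mul_of (φ := φ) ⟨f k, k, rfl⟩
  rw [this]
  congr 2
  have : (⟨f k, k, rfl⟩ : f.range) = MonoidHom.ofInjective hf k := rfl
  rw [this]
  simp only [φ, MulEquiv.trans_apply, MulEquiv.symm_apply_apply]
  rfl

theorem britton {C : Type} [Group C] (w : List (ℤˣ × C)) (hw : w.IsChain RR) (hn : w ≠ [])
    (c : C) :
    (HNNExtension.of c : HNNExtension C ⊥ ⊥ (MulEquiv.refl _)) *
      evj HNNExtension.of HNNExtension.t w ≠ 1 := by
  intro h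
  let W : HNNExtension.NormalWord.ReducedWord C ⊥ ⊥ :=
    ⟨c, w, by
      refine hw.imp ?_
      intro a b hab h
      apply hab
      have : HNNExtension.toSubgroup (⊥ : Subgroup C) ⊥ a.1 = ⊥ := by
        simp [HNNExtension.toSubgroup]
      rw [this] at h
      exact h⟩
  refine hn (HNNExtension.ReducedWord.toList_eq_nil_of_mem_of_range (MulEquiv.refl _) W ?_)
  have : W.prod (MulEquiv.refl _) = 1 := h
  rw [this]
  exact one_mem _

section labelled
variable {C : Type} [Group C]

/-- Evaluate a labelled word. -/
def lev {Q : Type} [Group Q] (j : C →* Q) (X : ℤ → Q) (W : List (ℤ × (ℤˣ × C))) : Q :=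
  (W.map fun x => X x.1 ^ (x.2.1 : ℤ) * j x.2.2).prod

/-- The free product of `C` with a free group on `ℤ`. -/
abbrev KK (C : Type) [Group C] := Coprod C (FreeGroup ℤ)

/-- generators -/
def XX (C : Type) [Group C] (h : ℤ) : KK C := Coprod.inr (FreeGroup.of h)

/-- Regard a labelled word as a word in the letter with label `μ`. -/
def parse (μ : ℤ) : List (ℤ × (ℤˣ × C)) → KK C × List (ℤˣ × KK C)
  | [] => (1, [])
  | x :: l =>
    if x.1 = μ then (1, (x.2.1, Coprod.inl x.2.2 * (parse μ l).1) :: (parse μ l).2)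
    else (XX C x.1 ^ (x.2.1 : ℤ) * Coprod.inl x.2.2 * (parse μ l).1, (parse μ l).2)

theorem parse_prod {Q : Type} [Group Q] (μ : ℤ) (j : KK C →* Q) (y : Q)
    (l : List (ℤ × (ℤˣ × C))) :
    j (parse μ l).1 * evj j y (parse μ l).2 =
      lev (j.comp Coprod.inl) (fun h => if h = μ then y else j (XX C h)) l := by
  induction l with
  | nil => simp [parse, evj, lev]
  | cons x l ih =>
    by_cases h : x.1 = μ
    · have : lev (j.comp Coprod.inl) (fun h => if h = μ then y else j (XX C h)) (x :: l) =
        y ^ (x.2.1 : ℤ) * j (Coprod.inl x.2.2) *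
        lev (j.comp Coprod.inl) (fun h => if h = μ then y else j (XX C h)) l := by simp [lev, h]
      rw [this, ← ih]
      simp [parse, h, evj, mul_assoc]
    · have : lev (j.comp Coprod.inl) (fun h => if h = μ then y else j (XX C h)) (x :: l) =
        j (XX C x.1) ^ (x.2.1 : ℤ) * j (Coprod.inl x.2.2) *
        lev (j.comp Coprod.inl) (fun h => if h = μ then y else j (XX C h)) l := by simp [lev, h]
      rw [this, ← ih]
      simp [parse, h, mul_assoc]

theorem parse_append (μ : ℤ) (l l' : List (ℤ × (ℤˣ × C))) (h : (parse μ l').1 = 1) :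
    parse μ (l ++ l') = ((parse μ l).1, (parse μ l).2 ++ (parse μ l').2) := by
  induction l with
  | nil => simp [parse, ← h]
  | cons x l ih =>
    by_cases hx : x.1 = μ <;> simp [parse, hx, ih]

theorem parse_length (μ : ℤ) (l : List (ℤ × (ℤˣ × C))) :
    (parse μ l).2.length = (l.filter (fun x => x.1 = μ)).length := by
  induction l with
  | nil => simp [parse]
  | cons x l ih =>
    by_cases hx : x.1 = μ <;> simp [parse, hx, ih]

/-- collapse all labels -/
noncomputable def collapse (C : Type) [Group C] :
    KK C →* HNNExtension C ⊥ ⊥ (MulEquiv.refl _) :=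
  Coprod.lift HNNExtension.of (FreeGroup.lift fun _ => HNNExtension.t)

theorem parse_chain (μ : ℤ) (l : List (ℤ × (ℤˣ × C))) (hl : (l.map Prod.snd).IsChain RR) :
    (parse μ l).2.IsChain RR ∧ ∃ s rest, l = s ++ rest ∧
      collapse C (parse μ l).1 = evj HNNExtension.of HNNExtension.t (s.map Prod.snd) ∧
      (s = [] → (parse μ l).1 = 1) ∧
      ∀ x ∈ (parse μ l).2.head?, ∃ y ∈ rest.head?, y.2.1 = x.1 := by
  induction l with
  | nil => simp [parse, evj]
  | cons x l ih =>
    obtain ⟨ih1, s, rest, hs, ih2, ih3, ih4⟩ := ih hl.tail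
    by_cases hx : x.1 = μ
    · have hp : parse μ (x :: l) =
        (1, (x.2.1, Coprod.inl x.2.2 * (parse μ l).1) :: (parse μ l).2) := by
        simp [parse, hx]
      rw [hp]
      refine ⟨?_, [], x :: l, rfl, by simp [evj], by simp, by simp⟩
      rw [List.isChain_cons]
      refine ⟨?_, ih1⟩
      intro z hz h1
      simp only at h1 ⊢
      by_cases hs0 : s = []
      · rw [ih3 hs0, mul_one] at h1
        have hc : x.2.2 = 1 := Coprod.inl_injective (h1.trans (map_one _).symm)
        obtain ⟨y, hy, hyz⟩ := ih4 z hz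
        rw [← hyz]
        subst hs0
        simp only [List.nil_append] at hs
        subst hs
        rw [List.map_cons, List.isChain_cons] at hl
        refine hl.1 y.2 ?_ hc
        rw [List.head?_map, hy]; rfl
      · exfalso
        have h2 := congrArg (collapse C) h1
        rw [map_mul, ih2, map_one] at h2
        refine britton (s.map Prod.snd) ?_ (by simpa using hs0) x.2.2 h2
        have h3 := hl.tail
        simp only [List.map_cons, List.tail_cons] at h3
        rw [hs, List.map_append] at h3
        exact h3.left_of_append
    · have hp : parse μ (x :: l) =
        (XX C x.1 ^ (x.2.1 : ℤ) * Coprod.inl x.2.2 * (parse μ l).1, (parse μ l).2) := by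
        simp [parse, hx]
      rw [hp]
      refine ⟨ih1, x :: s, rest, by simp [hs], ?_, by simp, ih4⟩
      rw [map_mul, ih2]
      simp [evj, collapse, XX]

theorem map_lev {Q Q' : Type} [Group Q] [Group Q'] (f : Q →* Q') (j : C →* Q) (X : ℤ → Q)
    (W : List (ℤ × (ℤˣ × C))) : f (lev j X W) = lev (f.comp j) (fun h => f (X h)) W := by
  induction W with
  | nil => simp [lev]
  | cons x l ih => 
    simp only [lev, List.map_cons, List.prod_cons, map_mul, map_zpow, MonoidHom.comp_apply] at ih ⊢
    rw [ih]

theorem labelled (n : ℕ) (hT : TT n) (hC : LI C) (W : List (ℤ × (ℤˣ × C)))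
    (hW : Cyc (W.map Prod.snd)) (hn : W.length ≤ n) (μ : ℤ) (h1 : ∃ x ∈ W, x.1 = μ)
    (h2 : ∃ x ∈ W, x.1 ≠ μ) :
    ∃ (Q : Type) (_ : Group Q) (ψ j : KK C →* Q), Function.Injective j ∧
      (∀ c, ψ (Coprod.inl c) = j (Coprod.inl c)) ∧ (∀ h, h ≠ μ → ψ (XX C h) = j (XX C h)) ∧
      ψ (lev Coprod.inl (XX C) W) = 1 := by
  obtain ⟨x, hx, hxμ⟩ := h1
  obtain ⟨u, v, rfl⟩ := List.append_of_mem hx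
  obtain ⟨z, hz, hzμ⟩ := h2
  set W' := (x :: v) ++ u with hW'
  have hp1 : (parse μ W').1 = 1 := by simp [hW', parse, hxμ]
  have hp0 : (parse μ W').2 ≠ [] := by simp [hW', parse, hxμ]
  have hcyc' : Cyc (W'.map Prod.snd) := by
    rw [List.map_append] at hW ⊢
    exact hW.rotate
  have hpc : Cyc (parse μ W').2 := by
    have := (parse_chain μ (W' ++ W') (by rw [List.map_append]; exact hcyc')).1
    rw [parse_append μ W' W' hp1] at this
    exact this
  have hlen : (parse μ W').2.length < n := by
    rw [parse_length]
    refine lt_of_lt_of_le ?_ (show W'.length ≤ n by simp [hW'] at hn ⊢; omega)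
    rw [List.length_filter_lt_length_iff_exists]
    refine ⟨z, ?_, by simpa using hzμ⟩
    simp [hW'] at hz ⊢
    tauto
  obtain ⟨Q, _, j, y, hj, hy⟩ := hT (KK C) (hC.coprod (LI.freeGroup _)) _ hp0 hpc hlen
  refine ⟨Q, _, Coprod.lift (j.comp Coprod.inl)
    (FreeGroup.lift fun h => if h = μ then y else j (XX C h)), j, hj, by simp, ?_, ?_⟩
  · intro h hh
    simp [XX, hh]
  · have h3 := parse_prod μ j y W'
    rw [hp1, hy] at h3
    rw [map_lev]
    simp only [XX, Coprod.lift_comp_inl, Coprod.lift_apply_inr, FreeGroup.lift_apply_of] at h3 ⊢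
    simp only [hW', lev, List.map_append, List.prod_append] at h3 ⊢
    refine prod_rotate ?_
    rw [← h3]
    simp

end labelled
section stepM
variable {C : Type} [Group C]

/-- weight of a letter -/
def wt (φ : C →* Multiplicative ℤ) (p : ℤ) (x : ℤˣ × C) : ℤ := (x.1 : ℤ) * p + (φ x.2).toAdd

/-- labels along a word -/
def lab (φ : C →* Multiplicative ℤ) (p : ℤ) : ℤ → List (ℤˣ × C) → List (ℤ × (ℤˣ × C))
  | _, [] => []
  | H, x :: l => ((if x.1 = 1 then H else H - p), x) :: lab φ p (H + wt φ p x) l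

/-- total weight -/
def tot (φ : C →* Multiplicative ℤ) (p : ℤ) (w : List (ℤˣ × C)) : ℤ := (w.map (wt φ p)).sum

theorem lab_snd (φ : C →* Multiplicative ℤ) (p : ℤ) (H : ℤ) (w : List (ℤˣ × C)) :
    (lab φ p H w).map Prod.snd = w := by
  induction w generalizing H with
  | nil => rfl
  | cons x l ih => simp [lab, ih]

theorem lab_append (φ : C →* Multiplicative ℤ) (p : ℤ) (H : ℤ) (u v : List (ℤˣ × C)) :
    lab φ p H (u ++ v) = lab φ p H u ++ lab φ p (H + tot φ p u) v := by
  induction u generalizing H with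
  | nil => simp [lab, tot]
  | cons x l ih => simp [lab, ih, tot, add_assoc]

theorem lab_ev {Q : Type} [Group Q] (φ : C →* Multiplicative ℤ) (p : ℤ) (jj J : C →* Q)
    (t e0 : Q) (hJ : ∀ c, J c = jj c * t ^ (φ c).toAdd) (hc : ∀ c, Commute t (jj c))
    (w : List (ℤˣ × C)) (H : ℤ) :
    t ^ H * evj J (e0 * t ^ p) w =
      lev jj (fun h => t ^ h * e0 * t ^ (-h)) (lab φ p H w) * t ^ (H + tot φ p w) := by
  induction w generalizing H with
  | nil => simp [evj, lev, lab, tot]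
  | cons x l ih =>
    have h1 : evj J (e0 * t ^ p) (x :: l) =
      (e0 * t ^ p) ^ (x.1 : ℤ) * J x.2 * evj J (e0 * t ^ p) l := by simp [evj]
    have h2 : H + tot φ p (x :: l) = (H + wt φ p x) + tot φ p l := by simp [tot, add_assoc]
    set H' := if x.1 = 1 then H else H - p with hH'
    have h3 : lev jj (fun h => t ^ h * e0 * t ^ (-h)) (lab φ p H (x :: l)) =
      (t ^ H' * e0 * t ^ (-H')) ^ (x.1 : ℤ) * jj x.2 *
       lev jj (fun h => t ^ h * e0 * t ^ (-h)) (lab φ p (H + wt φ p x) l) := by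
      simp only [lev, lab, hH', List.map_cons, List.prod_cons]
    rw [h1, h2, h3, mul_assoc _ _ (t ^ _), ← ih]
    simp only [← mul_assoc]
    congr 1
    rw [hJ]
    have hcc := ((hc x.2).zpow_left (H + x.1 * p)).eq
    have hwt : wt φ p x = x.1 * p + (φ x.2).toAdd := rfl
    rw [hwt, ← add_assoc, zpow_add t (H + x.1 * p), mul_assoc _ (jj x.2), ← mul_assoc (jj x.2),
      ← hcc]
    simp only [← mul_assoc]
    congr 2
    rcases Int.units_eq_one_or x.1 with h | h
    · simp only [h, if_true] at hH'
      rw [hH', h]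
      simp [zpow_add, mul_assoc]
    · simp only [h] at hH'
      have : H' = H - p := by rw [hH']; simp
      rw [this, h]
      simp [zpow_add, zpow_sub, mul_assoc]

/-- shift of labels -/
def shift (C : Type) [Group C] (d : ℤ) : KK C →* KK C :=
  Coprod.lift Coprod.inl (FreeGroup.lift fun h => XX C (h + d))

theorem shift_inl (d : ℤ) (c : C) : shift C d (Coprod.inl c) = Coprod.inl c := by simp [shift]

theorem shift_XX (d h : ℤ) : shift C d (XX C h) = XX C (h + d) := by simp [shift, XX]

theorem shift_injective : Function.Injective (shift C 1) := by
  have : (shift C (-1)).comp (shift C 1) = MonoidHom.id _ := by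
    ext x
    · simp [shift]
    · simp [shift, XX]
  intro a b h
  have h2 := congrArg (shift C (-1)) h
  have h3 := fun x => DFunLike.congr_fun this x
  simp only [MonoidHom.comp_apply, MonoidHom.id_apply] at h3
  rwa [h3, h3] at h2

theorem quot_inj (n : ℕ) (hT : TT n) (hC : LI C) (W : List (ℤ × (ℤˣ × C)))
    (hW : Cyc (W.map Prod.snd)) (hn : W.length ≤ n) (μ : ℤ) (h1 : ∃ x ∈ W, x.1 = μ)
    (h2 : ∃ x ∈ W, x.1 ≠ μ) (S : Subgroup (KK C))
    (hS : S ≤ Subgroup.closure (Set.range Coprod.inl ∪ {x | ∃ h, h ≠ μ ∧ x = XX C h})) :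
    Function.Injective ((QuotientGroup.mk'
      (Subgroup.normalClosure {lev Coprod.inl (XX C) W})).comp S.subtype) := by
  obtain ⟨Q, _, ψ, j, hj, ha, hb, hc⟩ := labelled n hT hC W hW hn μ h1 h2
  have hk : Subgroup.normalClosure {lev Coprod.inl (XX C) W} ≤ ψ.ker :=
    Subgroup.normalClosure_le_normal (by simpa using hc)
  have hS' : S ≤ MonoidHom.eqLocus ψ j := by
    refine hS.trans ?_
    rw [Subgroup.closure_le]
    rintro x (⟨c, rfl⟩ | ⟨h, hh, rfl⟩)
    · exact ha c
    · exact hb h hh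
  rw [injective_iff_map_eq_one]
  intro a h
  have h4 : (a : KK C) ∈ Subgroup.normalClosure {lev Coprod.inl (XX C) W} := by
    simpa using h
  have h5 : ψ a = 1 := hk h4
  have h6 : ψ a = j a := hS' a.2
  have h7 : (a : KK C) = 1 := hj (by rw [← h6, h5, map_one])
  exact Subtype.ext h7

theorem stepM (n : ℕ) (hT : TT n) (hC : LI C) (w : List (ℤˣ × C)) (hw : Cyc w)
    (hn : w.length ≤ n) (φ : C →* Multiplicative ℤ) (p : ℤ) (ht : tot φ p w = 0)
    (hxy : ∃ x ∈ lab φ p 0 w, ∃ y ∈ lab φ p 0 w, x.1 ≠ y.1) : Solv w := by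
  set W := lab φ p 0 w with hWdef
  have hWs : W.map Prod.snd = w := lab_snd _ _ _ _
  have hWl : W.length ≤ n := by rw [← List.length_map (f := Prod.snd), hWs]; exact hn
  have hWc : Cyc (W.map Prod.snd) := by rw [hWs]; exact hw
  obtain ⟨x, hx, y, hy, hxy⟩ := hxy
  let F : Finset ℤ := (W.map Prod.fst).toFinset
  have hmem : ∀ z ∈ W, z.1 ∈ F := fun z hz => by
    simp only [F, List.mem_toFinset, List.mem_map]; exact ⟨z, hz, rfl⟩
  have hne : F.Nonempty := ⟨_, hmem x hx⟩
  obtain ⟨mx, hmx, hm⟩ : ∃ z ∈ W, z.1 = F.min' hne := by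
    have := F.min'_mem hne
    simpa [F] using this
  obtain ⟨Mx, hMx, hM⟩ : ∃ z ∈ W, z.1 = F.max' hne := by
    have := F.max'_mem hne
    simpa [F] using this
  set m := F.min' hne with hmdef
  set M := F.max' hne with hMdef
  have hb : ∀ z ∈ W, m ≤ z.1 ∧ z.1 ≤ M := fun z hz =>
    ⟨F.min'_le _ (hmem z hz), F.le_max' _ (hmem z hz)⟩
  have hmM : m < M := by
    have := hb x hx; have := hb y hy; omega
  clear_value m M
  set N := Subgroup.normalClosure {lev Coprod.inl (XX C) W} with hN
  let π := QuotientGroup.mk' N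
  let S : Subgroup (KK C) := Subgroup.closure
    (Set.range Coprod.inl ∪ {x | ∃ h, (m ≤ h ∧ h < M) ∧ x = XX C h})
  have hinl : ∀ c : C, Coprod.inl c ∈ S := fun c => Subgroup.subset_closure (Or.inl ⟨c, rfl⟩)
  have hXX : ∀ h, m ≤ h → h < M → XX C h ∈ S := fun h h1 h2 =>
    Subgroup.subset_closure (Or.inr ⟨h, ⟨h1, h2⟩, rfl⟩)
  have hf : Function.Injective (π.comp S.subtype) := by
    refine quot_inj n hT hC W hWc hWl M ⟨Mx, hMx, hM⟩ ⟨mx, hmx, by omega⟩ S ?_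
    refine Subgroup.closure_mono ?_
    rintro x (h | ⟨h, hh, rfl⟩)
    · exact Or.inl h
    · exact Or.inr ⟨h, by omega, rfl⟩
  have hg0 := quot_inj n hT hC W hWc hWl m ⟨mx, hmx, hm⟩ ⟨Mx, hMx, by omega⟩ (S.map (shift C 1)) (by
    rw [Subgroup.map_le_iff_le_comap, Subgroup.closure_le]
    rintro x (⟨c, rfl⟩ | ⟨h, hh, rfl⟩)
    · refine Subgroup.subset_closure (Or.inl ⟨c, (shift_inl _ _).symm⟩)
    · refine Subgroup.subset_closure (Or.inr ⟨h + 1, by omega, shift_XX _ _⟩))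
  have hg : Function.Injective ((π.comp (shift C 1)).comp S.subtype) := by
    intro a b hab
    have := @hg0 ⟨shift C 1 a, a, a.2, rfl⟩ ⟨shift C 1 b, b, b.2, rfl⟩ hab
    exact Subtype.ext (shift_injective (congrArg Subtype.val this))
  obtain ⟨Q, _, i, t, deg, hi, hit, hdt, hdi⟩ := hnn_exists _ _ hf hg
  let jj : C →* Q := i.comp (π.comp Coprod.inl)
  let X : ℤ → Q := fun h => i (π (XX C h))
  have hjj : Function.Injective jj := by
    intro a b hab
    have h1 := @hf ⟨Coprod.inl a, hinl a⟩ ⟨Coprod.inl b, hinl b⟩ (hi hab)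
    exact Coprod.inl_injective (congrArg Subtype.val h1)
  have hcomm : ∀ c, Commute t (jj c) := by
    intro c
    have := hit ⟨Coprod.inl c, hinl c⟩
    simp only [MonoidHom.comp_apply, Subgroup.subtype_apply, shift_inl] at this
    exact this
  have hX : ∀ h, m ≤ h → h < M → t * X h = X (h + 1) * t := by
    intro h h1 h2
    have := hit ⟨XX C h, hXX h h1 h2⟩
    simp only [MonoidHom.comp_apply, Subgroup.subtype_apply, shift_XX] at this
    exact this
  let J : C →* Q :=
    { toFun := fun c => jj c * t ^ (φ c).toAdd
      map_one' := by simp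
      map_mul' := fun a b => by
        have := ((hcomm b).zpow_left (φ a).toAdd).eq
        rw [map_mul, map_mul, toAdd_mul, zpow_add, mul_assoc, mul_assoc, ← mul_assoc (t ^ _), this]
        simp only [mul_assoc] }
  have hJinj : Function.Injective J := by
    rw [injective_iff_map_eq_one]
    intro c hc
    have h0 : jj c * t ^ (φ c).toAdd = 1 := hc
    have h1 := congrArg deg h0
    rw [map_mul, map_zpow, hdt, map_one deg] at h1
    have h2 : deg (jj c) = 1 := hdi _
    rw [h2, one_mul, ← ofAdd_zsmul] at h1
    have h3 : (φ c).toAdd = 0 := by simpa using h1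
    rw [h3, zpow_zero, mul_one] at h0
    exact hjj (h0.trans (map_one _).symm)
  let e0 : Q := t ^ (-m) * X m * t ^ m
  have hY : ∀ k : ℕ, m + k ≤ M → t ^ (m + k : ℤ) * e0 * t ^ (-(m + k : ℤ)) = X (m + k) := by
    intro k
    induction k with
    | zero => intro _; simp [e0, ← mul_assoc]
    | succ k ih =>
      intro hk
      push_cast at hk ⊢
      have h1 := ih (by omega)
      have h2 := hX (m + k) (by omega) (by omega)
      rw [← add_assoc]
      have h3 : X (m + k + 1) = t * X (m + k) * t⁻¹ := by rw [h2]; simp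
      rw [h3, ← h1]
      rw [show (m + k + 1 : ℤ) = 1 + (m + k) by ring, zpow_add, neg_add_rev, zpow_add t (-(m+k : ℤ))]
      simp [mul_assoc]
  refine ⟨Q, _, J, e0 * t ^ p, hJinj, ?_⟩
  have h1 := lab_ev φ p jj J t e0 (fun _ => rfl) hcomm w 0
  rw [ht, zpow_zero, one_mul, add_zero, zpow_zero, mul_one] at h1
  rw [h1, ← hWdef]
  have h2 : lev jj (fun h => t ^ h * e0 * t ^ (-h)) W = lev jj X W := by
    unfold lev
    congr 1
    refine List.map_congr_left ?_
    intro z hz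
    have h3 := hb z hz
    have h4 := hY (z.1 - m).toNat (by omega)
    have h5 : m + ((z.1 - m).toNat : ℤ) = z.1 := by omega
    rw [h5] at h4
    simp only [h4]
  rw [h2]
  have h6 := map_lev (i.comp π) Coprod.inl (XX C) W
  have h7 : π (lev Coprod.inl (XX C) W) = 1 := by
    rw [QuotientGroup.mk'_apply, QuotientGroup.eq_one_iff]
    exact Subgroup.subset_normalClosure rfl
  rw [MonoidHom.comp_apply, h7, map_one] at h6
  exact h6.symm

end stepM
section transfer
variable {C : Type} [Group C]

/-- A general cyclic gauge lemma. -/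
theorem chain_gauge {α Q : Type} [Group Q] (g g' P N : α → Q) (R : α → α → Prop)
    (hR : ∀ a b, R a b → N a = P b) (w : List α) (hw : ∀ a ∈ w, P a * g a = g' a * N a) :
    ∀ x : α, (w ++ [x]).IsChain R → ∀ y : α, y ∈ (w ++ [x]).head? →
      P y * (w.map g).prod = (w.map g').prod * P x := by
  induction w with
  | nil =>
    intro x _ y hy
    simp at hy
    simp [hy]
  | cons a l ih =>
    intro x hx y hy
    simp at hy
    subst hy
    rw [List.cons_append, List.isChain_cons] at hx
    obtain ⟨z, hz⟩ : ∃ z, z ∈ (l ++ [x]).head? := by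
      cases l <;> simp
    have h1 := ih (fun a ha => hw a (List.mem_cons_of_mem _ ha)) x hx.2 z hz
    have h2 := hR _ _ (hx.1 z hz)
    rw [List.map_cons, List.map_cons, List.prod_cons, List.prod_cons, ← mul_assoc,
      hw a List.mem_cons_self, h2, mul_assoc, h1, mul_assoc]

theorem cyc_gauge {α Q : Type} [Group Q] (g g' P N : α → Q) (R : α → α → Prop)
    (hR : ∀ a b, R a b → N a = P b) (w : List α) (hw : ∀ a ∈ w, P a * g a = g' a * N a)
    (hc : (w ++ w).IsChain R) (h1 : (w.map g').prod = 1) : (w.map g).prod = 1 := by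
  cases w with
  | nil => simp
  | cons x l =>
    have := chain_gauge g g' P N R hR (x :: l) hw x (by
      have h2 : (x :: l) ++ (x :: l) = ((x :: l) ++ [x]) ++ l := by simp
      rw [h2] at hc
      exact hc.left_of_append) x (by simp)
    rw [h1, one_mul] at this
    simpa using this

theorem solv_subgroup {H : Subgroup C} (w : List (ℤˣ × H)) (h : Solv w) :
    Solv (w.map fun x => (x.1, (x.2 : C))) := by
  obtain ⟨Q0, _, j, e, hj, he⟩ := h
  obtain ⟨Q, _, i, t, -, hi, ht, -⟩ := hnn_exists
    ((Coprod.inr : C →* Coprod Q0 C).comp H.subtype) ((Coprod.inl : Q0 →* Coprod Q0 C).comp j)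
    (Coprod.inr_injective.comp Subtype.val_injective) (Coprod.inl_injective.comp hj)
  refine ⟨Q, _, i.comp Coprod.inr, t⁻¹ * i (Coprod.inl e) * t, hi.comp Coprod.inr_injective, ?_⟩
  rw [evj, List.map_map]
  have hconj : ∀ k : ℤ, (t⁻¹ * i (Coprod.inl e) * t) ^ k = t⁻¹ * i (Coprod.inl e) ^ k * t := by
    intro k
    have := conj_zpow (i := k) (a := t⁻¹) (b := i (Coprod.inl e))
    simpa using this
  refine cyc_gauge _ (fun x => i (Coprod.inl (e ^ (x.1 : ℤ) * j x.2))) (fun _ => t) (fun _ => t)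
    (fun _ _ => True) (fun _ _ _ => rfl) w ?_ ?_ ?_
  · intro a _
    have := ht a.2
    simp only [MonoidHom.comp_apply, Subgroup.subtype_apply] at this
    simp only [Function.comp_apply, hconj, map_mul, map_zpow, MonoidHom.comp_apply]
    simp only [mul_assoc]
    rw [this]
    simp
  · exact (List.pairwise_of_forall (fun _ _ => trivial)).isChain
  · have h2 := congrArg (i.comp Coprod.inl) he
    rw [evj, map_list_prod, List.map_map, map_one] at h2
    exact h2

theorem solv_coprod {A0 B0 : Subgroup C} (w : List (ℤˣ × C)) (f : ℤˣ × C → Coprod A0 B0)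
    (hf1 : ∀ x ∈ w, x.1 = 1 → ∃ h : x.2 ∈ B0, f x = Coprod.inr ⟨x.2, h⟩)
    (hf2 : ∀ x ∈ w, x.1 = -1 → ∃ h : x.2 ∈ A0, f x = Coprod.inl ⟨x.2, h⟩)
    (hw : (w ++ w).IsChain (fun a b => a.1 ≠ b.1))
    (h : Solv (w.map fun x => (x.1, f x))) : Solv w := by
  obtain ⟨Q0, _, j, e, hj, he⟩ := h
  obtain ⟨Q1, _, i1, s, -, hi1, hs, -⟩ := hnn_exists
    ((Coprod.inr : C →* Coprod Q0 C).comp A0.subtype)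
    ((Coprod.inl : Q0 →* Coprod Q0 C).comp (j.comp Coprod.inl))
    (Coprod.inr_injective.comp Subtype.val_injective)
    (Coprod.inl_injective.comp (hj.comp Coprod.inl_injective))
  obtain ⟨Q, _, i2, t, -, hi2, ht, -⟩ := hnn_exists
    (i1.comp ((Coprod.inr : C →* Coprod Q0 C).comp B0.subtype))
    (i1.comp ((Coprod.inl : Q0 →* Coprod Q0 C).comp (j.comp Coprod.inr)))
    (hi1.comp (Coprod.inr_injective.comp Subtype.val_injective))
    (hi1.comp (Coprod.inl_injective.comp (hj.comp Coprod.inr_injective)))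
  have hs' := fun k => congrArg i2 (hs k)
  set jC : C →* Q := (i2.comp i1).comp Coprod.inr with hjC
  set jQ : Q0 →* Q := (i2.comp i1).comp Coprod.inl with hjQ
  simp only [map_mul] at hs'
  replace hs' : ∀ k : A0, i2 s * jC k = jQ (j (Coprod.inl k)) * i2 s := hs'
  replace ht : ∀ k : B0, t * jC k = jQ (j (Coprod.inr k)) * t := ht
  refine ⟨Q, _, jC, (i2 s)⁻¹ * jQ e * t, (hi2.comp hi1).comp Coprod.inr_injective, ?_⟩
  rw [evj]
  refine cyc_gauge _ (fun x => jQ (e ^ (x.1 : ℤ) * j (f x)))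
    (fun x => if x.1 = 1 then i2 s else t) (fun x => if x.1 = 1 then t else i2 s)
    (fun a b => a.1 ≠ b.1) ?_ w ?_ hw ?_
  · intro a b hab
    rcases Int.units_eq_one_or a.1 with h | h <;> rcases Int.units_eq_one_or b.1 with h' | h' <;>
      simp_all
  · intro x hx
    rcases Int.units_eq_one_or x.1 with h | h
    · obtain ⟨h1, h2⟩ := hf1 x hx h
      have := ht ⟨x.2, h1⟩
      simp only at this
      simp only [h, h2, if_true, map_mul, Units.val_one, zpow_one, mul_assoc]
      rw [this]
      simp
    · obtain ⟨h1, h2⟩ := hf2 x hx h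
      have := hs' ⟨x.2, h1⟩
      simp only at this
      have h3 : ¬ ((-1 : ℤˣ) = 1) := by decide
      simp only [h, h2, h3, if_false, map_mul, Units.val_neg, Units.val_one, zpow_neg, zpow_one,
        mul_inv_rev, inv_inv, mul_assoc, map_inv]
      rw [this]
      simp
  · have h2 := congrArg jQ he
    rw [evj, List.map_map, map_list_prod, List.map_map, map_one] at h2
    exact h2

/-- sign of the head, with default -/
def hd (l : List (ℤˣ × C)) (s : ℤˣ) : ℤˣ :=
  match l with
  | [] => s
  | x :: _ => x.1

/-- gauge transform -/
def go (pre post : ℤˣ → C) : List (ℤˣ × C) → ℤˣ → List (ℤˣ × C)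
  | [], _ => []
  | x :: l, s => (x.1, post x.1 * x.2 * pre (hd l s)) :: go pre post l s

theorem go_append (pre post : ℤˣ → C) (u v : List (ℤˣ × C)) (s : ℤˣ) :
    go pre post (u ++ v) s = go pre post u (hd v s) ++ go pre post v s := by
  induction u with
  | nil => simp [go]
  | cons x l ih =>
    have : hd (l ++ v) s = hd l (hd v s) := by cases l <;> rfl
    simp [go, ih, this]

theorem go_fst (pre post : ℤˣ → C) (u : List (ℤˣ × C)) (s : ℤˣ) :
    (go pre post u s).map Prod.fst = u.map Prod.fst := by
  induction u with
  | nil => simp [go]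
  | cons x l ih => simp [go, ih]

theorem go_chain (pre post : ℤˣ → C) (hpp : ∀ ε, post ε * pre (-ε) = 1) (u : List (ℤˣ × C))
    (s : ℤˣ) (hu : u.IsChain RR) : (go pre post u s).IsChain RR := by
  induction u with
  | nil => simp [go]
  | cons x l ih =>
    rw [List.isChain_cons] at hu
    rw [go, List.isChain_cons]
    refine ⟨?_, ih hu.2⟩
    cases l with
    | nil => simp [go]
    | cons y l =>
      intro z hz
      simp [go] at hz
      subst hz
      intro h1
      simp only [hd] at h1 ⊢
      by_contra hne
      have h2 : y.1 = -x.1 := by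
        rcases Int.units_eq_one_or x.1 with h | h <;>
          rcases Int.units_eq_one_or y.1 with h' | h' <;> simp_all
      rw [h2] at h1
      have h3 := hpp x.1
      have h4 : pre (-x.1) = (post x.1)⁻¹ := eq_inv_of_mul_eq_one_right h3
      rw [h4, conj_eq_one_iff] at h1
      exact hne (hu.1 y (by simp) h1)

theorem go_ev {Q : Type} [Group Q] (pre post : ℤˣ → C) (j : C →* Q) (e e' : Q)
    (he : ∀ ε : ℤˣ, e ^ (ε : ℤ) = j (pre ε) * e' ^ (ε : ℤ) * j (post ε)) (u : List (ℤˣ × C))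
    (s : ℤˣ) : evj j e u * j (pre s) = j (pre (hd u s)) * evj j e' (go pre post u s) := by
  induction u with
  | nil => simp [evj, go, hd]
  | cons x l ih =>
    have h1 : evj j e (x :: l) = e ^ (x.1 : ℤ) * j x.2 * evj j e l := by simp [evj]
    have h2 : evj j e' (go pre post (x :: l) s) = e' ^ (x.1 : ℤ) *
      j (post x.1 * x.2 * pre (hd l s)) * evj j e' (go pre post l s) := by simp [evj, go]
    rw [h1, h2, mul_assoc, ih, he]
    simp only [hd, map_mul, mul_assoc]

theorem lift_list {H : Subgroup C} (w : List (ℤˣ × C)) (hw : ∀ x ∈ w, x.2 ∈ H) :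
    ∃ v : List (ℤˣ × H), w = v.map fun x => (x.1, (x.2 : C)) := by
  induction w with
  | nil => exact ⟨[], rfl⟩
  | cons x l ih =>
    obtain ⟨v, hv⟩ := ih (fun y hy => hw y (List.mem_cons_of_mem _ hy))
    exact ⟨(x.1, ⟨x.2, hw x List.mem_cons_self⟩) :: v, by rw [List.map_cons, ← hv]⟩

theorem hom_closure_eq_one {S : Set C} (f : Subgroup.closure S →* Multiplicative ℤ)
    (hf : ∀ x (hx : x ∈ S), f ⟨x, Subgroup.subset_closure hx⟩ = 1) : f = 1 := by
  have key : ∀ x (hx : x ∈ Subgroup.closure S), f ⟨x, hx⟩ = 1 := by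
    intro x hx
    induction hx using Subgroup.closure_induction with
    | mem x hx => exact hf x hx
    | one => exact map_one f
    | mul x y hx hy h1 h2 =>
      have := map_mul f ⟨x, hx⟩ ⟨y, hy⟩
      rw [h1, h2, mul_one] at this
      exact this
    | inv x hx h1 =>
      have := map_inv f ⟨x, hx⟩
      rw [h1, inv_one] at this
      exact this
  ext x
  rw [key x.1 x.2]
  rfl

theorem lab_const (φ : C →* Multiplicative ℤ) (w : List (ℤˣ × C)) (H : ℤ)
    (h1 : ∀ x ∈ lab φ 0 H w, x.1 = H) (h2 : tot φ 0 w = 0) : ∀ x ∈ w, φ x.2 = 1 := by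
  induction w with
  | nil => simp
  | cons x l ih =>
    have hx : φ x.2 = 1 := by
      cases l with
      | nil =>
        simp [tot, wt] at h2
        exact h2
      | cons y l =>
        have := h1 (if y.1 = 1 then H + wt φ 0 x else H + wt φ 0 x - 0, y) (by simp [lab])
        simp [wt] at this
        exact this
    have hwt : wt φ 0 x = 0 := by simp [wt, hx]
    intro y hy
    rcases List.mem_cons.1 hy with rfl | hy
    · exact hx
    · refine ih ?_ ?_ y hy
      · intro z hz
        refine h1 z ?_
        simp only [lab, hwt, add_zero]
        exact List.mem_cons_of_mem _ hz
      · simpa [tot, hwt] using h2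

theorem stepM_zero (n : ℕ) (hT : TT n) (hC : LI C) (w : List (ℤˣ × C)) (hw : Cyc w)
    (hn : w.length ≤ n) (φ : C →* Multiplicative ℤ) (ht : tot φ 0 w = 0)
    (hx : ∃ x ∈ w, φ x.2 ≠ 1) : Solv w := by
  by_contra hcon
  have h1 : ∀ x ∈ lab φ 0 0 w, x.1 = 0 := by
    have h2 : ∀ x ∈ lab φ 0 0 w, ∀ y ∈ lab φ 0 0 w, x.1 = y.1 := by
      intro x hx y hy
      by_contra hne
      exact hcon (stepM n hT hC w hw hn φ 0 ht ⟨x, hx, y, hy, hne⟩)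
    cases w with
    | nil => simp [lab]
    | cons x l =>
      intro z hz
      have := h2 z hz (if x.1 = 1 then 0 else 0 - 0, x) (by simp [lab])
      simpa using this
  obtain ⟨x, hx, hne⟩ := hx
  exact hne (lab_const φ w 0 h1 ht x hx)

end transfer
section main
set_option linter.unusedSectionVars false
variable {C : Type} [Group C]

/-- exponent sum -/
def kk (w : List (ℤˣ × C)) : ℤ := (w.map fun x => (x.1 : ℤ)).sum

theorem tot_eq (φ : C →* Multiplicative ℤ) (p : ℤ) (w : List (ℤˣ × C)) :
    tot φ p w = kk w * p + tot φ 0 w := by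
  induction w with
  | nil => simp [tot, kk]
  | cons x l ih =>
    simp only [tot, kk, List.map_cons, List.sum_cons, wt] at ih ⊢
    rw [ih]; ring

theorem tot_mul (φ ψ : C →* Multiplicative ℤ) (w : List (ℤˣ × C)) :
    tot (φ * ψ) 0 w = tot φ 0 w + tot ψ 0 w := by
  induction w with
  | nil => simp [tot]
  | cons x l ih =>
    simp only [tot, List.map_cons, List.sum_cons, wt, MonoidHom.mul_apply, toAdd_mul] at ih ⊢
    rw [ih]; ring

theorem tot_zpow (φ : C →* Multiplicative ℤ) (k : ℤ) (w : List (ℤˣ × C)) :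
    tot (φ ^ k) 0 w = k * tot φ 0 w := by
  induction w with
  | nil => simp [tot]
  | cons x l ih =>
    have h : ((φ ^ k) x.2).toAdd = k * (φ x.2).toAdd := by
      change ((φ x.2) ^ k).toAdd = _
      simp
    simp only [tot, List.map_cons, List.sum_cons, wt, h] at ih ⊢
    rw [ih]; ring

theorem kk_append (u v : List (ℤˣ × C)) : kk (u ++ v) = kk u + kk v := by simp [kk]

theorem alt_sum (x : ℤˣ × C) (l : List (ℤˣ × C))
    (h : (x :: l).IsChain (fun a b => a.1 ≠ b.1)) :
    ∀ y ∈ (x :: l).getLast?, 2 * kk (x :: l) = (x.1 : ℤ) + (y.1 : ℤ) := by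
  induction l generalizing x with
  | nil =>
    intro y hy
    simp at hy
    subst hy
    simp [kk]; ring
  | cons z l ih =>
    intro y hy
    rw [List.isChain_cons_cons] at h
    have h1 := ih z h.2 y (by simpa using hy)
    have h2 : kk (x :: z :: l) = (x.1 : ℤ) + kk (z :: l) := by simp [kk]
    have h3 := h.1
    have h4 : (z.1 : ℤ) = -(x.1 : ℤ) := by
      rcases Int.units_eq_one_or x.1 with h | h <;>
        rcases Int.units_eq_one_or z.1 with h' | h' <;> simp_all
    rw [h2]; omega

theorem case_zero_nonalt (n : ℕ) (hT : TT n) (hC : LI C) (w : List (ℤˣ × C)) (hw : Cyc w)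
    (hn : w.length ≤ n) (hk : kk w = 0) (h : ¬ w.IsChain (fun a b => a.1 ≠ b.1)) : Solv w := by
  rw [List.isChain_iff_forall_rel_of_append_cons_cons] at h
  push Not at h
  obtain ⟨x, y, u, v, rfl, hxy⟩ := h
  refine stepM n hT hC _ hw hn 1 1 ?_ ?_
  · rw [tot_eq, hk]
    have : ∀ w : List (ℤˣ × C), tot (1 : C →* Multiplicative ℤ) 0 w = 0 := by
      intro w
      induction w with
      | nil => simp [tot]
      | cons x l ih => simpa [tot, wt] using ih
    rw [this]; ring
  · rw [lab_append]
    refine ⟨_, List.mem_append_right _ List.mem_cons_self, _,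
      List.mem_append_right _ (List.mem_cons_of_mem _ List.mem_cons_self), ?_⟩
    simp only [← hxy, wt]
    rcases Int.units_eq_one_or x.1 with h | h <;> simp [h]

theorem li_hom (hC : LI C) {S : Set C} (hS : S.Finite) {x : C} (hx : x ∈ S) (hx1 : x ≠ 1) :
    ∃ f : Subgroup.closure S →* Multiplicative ℤ,
      ∃ y, ∃ hy : y ∈ S, f ⟨y, Subgroup.subset_closure hy⟩ ≠ 1 := by
  obtain ⟨f, hf⟩ := hC (Subgroup.closure S) (by
    intro h
    rw [Subgroup.closure_eq_bot_iff] at h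
    exact hx1 (h hx)) ((Subgroup.fg_iff _).2 ⟨S, rfl, hS⟩)
  refine ⟨f, ?_⟩
  by_contra hcon
  push Not at hcon
  exact hf (hom_closure_eq_one f hcon)

theorem case_zero_alt (n : ℕ) (hT : TT n) (hC : LI C) (w : List (ℤˣ × C)) (hw : Cyc w)
    (hne : w ≠ []) (hn : w.length ≤ n) (h : (w ++ w).IsChain (fun a b => a.1 ≠ b.1)) :
    Solv w := by
  have hnext : ∀ x ∈ w, x.2 ≠ 1 ∧ ∃ y ∈ w, x.1 ≠ y.1 := by
    intro x hx
    obtain ⟨u, v, huv⟩ := List.append_of_mem hx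
    obtain ⟨z, r, hz⟩ : ∃ z r, v ++ w = z :: r := by
      cases hh : v ++ w with
      | nil => simp at hh; exact absurd hh.2 hne
      | cons z r => exact ⟨z, r, rfl⟩
    have h0 : w ++ w = u ++ x :: z :: r := by
      rw [← hz]; conv_lhs => rw [huv]
      simp [huv]
    have h1 := List.isChain_iff_forall_rel_of_append_cons_cons.1 h h0
    have h2 := List.isChain_iff_forall_rel_of_append_cons_cons.1 hw h0
    refine ⟨fun h3 => h1 (h2 h3), z, ?_, h1⟩
    have : z ∈ w ++ w := by rw [h0]; simp
    simpa using this
  let SA : Set C := {c | ((-1 : ℤˣ), c) ∈ w}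
  let SB : Set C := {c | ((1 : ℤˣ), c) ∈ w}
  have hfin : {x | x ∈ w}.Finite := List.finite_toSet w
  have hSA : SA.Finite := (hfin.image Prod.snd).subset (fun c hc => ⟨_, hc, rfl⟩)
  have hSB : SB.Finite := (hfin.image Prod.snd).subset (fun c hc => ⟨_, hc, rfl⟩)
  have hboth : (∃ c, ((-1 : ℤˣ), c) ∈ w) ∧ (∃ c, ((1 : ℤˣ), c) ∈ w) := by
    obtain ⟨⟨ε, c⟩, hx⟩ := List.exists_mem_of_ne_nil w hne
    obtain ⟨-, ⟨δ, d⟩, hy, hxy⟩ := hnext _ hx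
    rcases Int.units_eq_one_or ε with rfl | rfl <;> rcases Int.units_eq_one_or δ with rfl | rfl
    · simp at hxy
    · exact ⟨⟨d, hy⟩, ⟨c, hx⟩⟩
    · exact ⟨⟨c, hx⟩, ⟨d, hy⟩⟩
    · simp at hxy
  obtain ⟨⟨a0, ha0⟩, ⟨b0, hb0⟩⟩ := hboth
  obtain ⟨α, a1, ha1, hα⟩ := li_hom hC hSA (x := a0) ha0 (hnext _ ha0).1
  obtain ⟨β, b1, hb1, hβ⟩ := li_hom hC hSB (x := b0) hb0 (hnext _ hb0).1
  classical
  let A0 := Subgroup.closure SA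
  let B0 := Subgroup.closure SB
  let f : ℤˣ × C → Coprod A0 B0 := fun x =>
    if x.1 = 1 then (if h : x.2 ∈ B0 then Coprod.inr ⟨x.2, h⟩ else 1)
    else (if h : x.2 ∈ A0 then Coprod.inl ⟨x.2, h⟩ else 1)
  have hf1 : ∀ x ∈ w, x.1 = 1 → ∃ h : x.2 ∈ B0, f x = Coprod.inr ⟨x.2, h⟩ := by
    rintro ⟨ε, c⟩ hx rfl
    have : c ∈ B0 := Subgroup.subset_closure hx
    exact ⟨this, by simp [f, this]⟩
  have hf2 : ∀ x ∈ w, x.1 = -1 → ∃ h : x.2 ∈ A0, f x = Coprod.inl ⟨x.2, h⟩ := by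
    rintro ⟨ε, c⟩ hx rfl
    have : c ∈ A0 := Subgroup.subset_closure hx
    exact ⟨this, by simp [f, this]⟩
  refine solv_coprod w f hf1 hf2 h ?_
  set w2 := w.map fun x => (x.1, f x) with hw2
  have hLI : LI (Coprod A0 B0) := (hC.subgroup A0).coprod (hC.subgroup B0)
  have hcyc : Cyc w2 := by
    rw [Cyc, hw2, ← List.map_append, List.isChain_map]
    rw [List.isChain_iff_forall_rel_of_append_cons_cons] at h ⊢
    intro x y u v huv h1
    exfalso
    have hx : x ∈ w := by
      have : x ∈ w ++ w := by rw [huv]; simp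
      simpa using this
    simp only at h1
    rcases Int.units_eq_one_or x.1 with h3 | h3
    · obtain ⟨h4, h5⟩ := hf1 x hx h3
      rw [h5] at h1
      have := Coprod.inr_injective (h1.trans (map_one _).symm)
      exact (hnext x hx).1 (congrArg Subtype.val this)
    · obtain ⟨h4, h5⟩ := hf2 x hx h3
      rw [h5] at h1
      have := Coprod.inl_injective (h1.trans (map_one _).symm)
      exact (hnext x hx).1 (congrArg Subtype.val this)
  have hlen : w2.length ≤ n := by simpa [hw2] using hn
  let hα' : Coprod A0 B0 →* Multiplicative ℤ := Coprod.lift α 1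
  let hβ' : Coprod A0 B0 →* Multiplicative ℤ := Coprod.lift 1 β
  by_cases ha : tot hα' 0 w2 = 0
  · refine stepM_zero n hT hLI w2 hcyc hlen hα' ha ⟨_, List.mem_map_of_mem ha1, ?_⟩
    obtain ⟨h4, h5⟩ := hf2 _ ha1 rfl
    simp only [h5, hα', Coprod.lift_apply_inl]
    exact hα
  · refine stepM_zero n hT hLI w2 hcyc hlen (hα' ^ (tot hβ' 0 w2) * hβ' ^ (- tot hα' 0 w2)) ?_
      ⟨_, List.mem_map_of_mem hb1, ?_⟩
    · rw [tot_mul, tot_zpow, tot_zpow]; ring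
    · obtain ⟨h4, h5⟩ := hf1 _ hb1 rfl
      simp only [h5]
      have h6 : hα' (Coprod.inr ⟨b1, h4⟩) = 1 := by simp [hα']
      have h7 : hβ' (Coprod.inr ⟨b1, h4⟩) = β ⟨b1, h4⟩ := by simp [hβ']
      rw [MonoidHom.mul_apply]
      change hα' (Coprod.inr ⟨b1, h4⟩) ^ (tot hβ' 0 w2) *
        hβ' (Coprod.inr ⟨b1, h4⟩) ^ (- tot hα' 0 w2) ≠ 1
      rw [h6, h7, one_zpow, one_mul]
      intro h8
      have h9 := congrArg Multiplicative.toAdd h8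
      rw [toAdd_zpow, toAdd_one, smul_eq_mul, mul_eq_zero] at h9
      rcases h9 with h9 | h9
      · exact ha (neg_eq_zero.1 h9)
      · exact hβ (Multiplicative.toAdd.injective h9)

theorem case_normalized (n : ℕ) (hT : TT n) (hC : LI C) (w : List (ℤˣ × C)) (hw : Cyc w)
    (hn : w.length ≤ n) (hk : kk w ≠ 0) (s : ℤˣ) (c1 : C) (h1 : (s, c1) ∈ w.head?)
    (h2 : (s, (1 : C)) ∈ w.getLast?) : Solv w := by
  by_cases hall : ∀ x ∈ w, x.2 = 1
  · refine ⟨C, _, MonoidHom.id C, 1, fun _ _ h => h, ?_⟩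
    rw [evj]
    refine List.prod_eq_one ?_
    simp only [List.mem_map]
    rintro y ⟨x, hx, rfl⟩
    simp [hall x hx]
  push Not at hall
  obtain ⟨x0, hx0, hx1⟩ := hall
  let S : Set C := Prod.snd '' {x | x ∈ w}
  have hS : S.Finite := (List.finite_toSet w).image _
  obtain ⟨α, y, ⟨y0, hy0, rfl⟩, hα⟩ := li_hom hC hS (x := x0.2) ⟨x0, hx0, rfl⟩ hx1
  obtain ⟨v, hv⟩ := lift_list (H := Subgroup.closure S) w
    (fun x hx => Subgroup.subset_closure ⟨x, hx, rfl⟩)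
  have hy1 : y0 ∈ w := hy0
  rw [hv] at hw hn hk h1 h2 hy1 ⊢
  refine solv_subgroup v ?_
  have hcyc : Cyc v := by
    rw [Cyc, ← List.map_append, List.isChain_map] at hw
    refine hw.imp ?_
    intro a b hab h
    exact hab (by simp [h])
  have hlen : v.length ≤ n := by simpa using hn
  have hLI := hC.subgroup (Subgroup.closure S)
  have hkv : kk v ≠ 0 := by simpa [kk, Function.comp_def] using hk
  have hαv : ∃ x ∈ v, α x.2 ≠ 1 := by
    obtain ⟨z, hz, hz2⟩ := List.mem_map.1 hy1
    refine ⟨z, hz, ?_⟩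
    have : z.2 = ⟨y0.2, Subgroup.subset_closure ⟨y0, hy0, rfl⟩⟩ := by
      exact Subtype.ext (congrArg Prod.snd hz2)
    rw [this]; exact hα
  by_cases hp : tot α 0 v = 0
  · exact stepM_zero n hT hLI v hcyc hlen α hp hαv
  · refine stepM n hT hLI v hcyc hlen (α ^ kk v) (- tot α 0 v) ?_ ?_
    · rw [tot_eq, tot_zpow]; ring
    · rcases List.eq_nil_or_concat v with rfl | ⟨v', z, rfl⟩
      · simp [kk] at hkv
      simp only [List.concat_eq_append] at *
      have hz : z = (s, 1) := by
        simp at h2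
        ext1
        · exact h2.1
        · exact h2.2
      have htot : tot (α ^ kk (v' ++ [z])) (- tot α 0 (v' ++ [z])) (v' ++ [z]) = 0 := by
        rw [tot_eq, tot_zpow]; ring
      generalize tot α 0 (v' ++ [z]) = q at *
      generalize α ^ kk (v' ++ [z]) = φ at *
      have hsplit : tot φ (-q) (v' ++ [z]) = tot φ (-q) v' + wt φ (-q) z := by simp [tot]
      rw [hsplit] at htot
      have hwz : wt φ (-q) z = (s : ℤ) * (-q) := by rw [hz]; simp [wt]
      cases v' with
      | nil =>
        simp [tot, hwz] at htot
        exact absurd htot hp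
      | cons x l =>
        have hx : x.1 = s := by
          simp at h1
          exact h1.1
        rw [lab_append]
        refine ⟨_, List.mem_append_left _ List.mem_cons_self, _,
          List.mem_append_right _ List.mem_cons_self, ?_⟩
        rw [hwz] at htot
        simp only [hx, hz]
        rcases Int.units_eq_one_or s with rfl | rfl
        · simp at htot ⊢
          omega
        · simp at htot ⊢
          omega

theorem case_samesign (n : ℕ) (hT : TT n) (hC : LI C) (w : List (ℤˣ × C)) (hw : Cyc w)
    (hn : w.length ≤ n) (hk : kk w ≠ 0) (s : ℤˣ) (c1 c0 : C) (h1 : (s, c1) ∈ w.head?)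
    (h2 : (s, c0) ∈ w.getLast?) : Solv w := by
  let pre : ℤˣ → C := fun ε => if ε = s then 1 else c0
  let post : ℤˣ → C := fun ε => if ε = s then c0⁻¹ else 1
  have hs1 : -s ≠ s := by rcases Int.units_eq_one_or s with rfl | rfl <;> decide
  have hεs : ∀ ε, ε ≠ s → ε = -s := by
    intro ε h
    rcases Int.units_eq_one_or s with rfl | rfl <;>
      rcases Int.units_eq_one_or ε with rfl | rfl <;> simp_all
  have hpp : ∀ ε, post ε * pre (-ε) = 1 := by
    intro ε
    by_cases h : ε = s
    · simp [pre, post, h, hs1]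
    · have := hεs ε h
      subst this
      simp [pre, post, hs1]
  have hhd : hd w s = s := by
    cases w with
    | nil => rfl
    | cons x l =>
      simp at h1
      simp [hd, h1]
  have hcyc : Cyc (go pre post w s) := by
    have h3 := go_chain pre post hpp (w ++ w) s hw
    rw [go_append, hhd] at h3
    exact h3
  have hfst := go_fst pre post w s
  have hlen : (go pre post w s).length ≤ n := by
    rw [← List.length_map (f := Prod.fst), hfst]; simpa using hn
  have hkg : kk (go pre post w s) = kk w := by
    have h3 : ∀ u : List (ℤˣ × C), kk u = ((u.map Prod.fst).map fun x : ℤˣ => (x : ℤ)).sum := by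
      intro u; simp [kk, Function.comp_def]
    rw [h3, hfst, h3]
  have hhead : ∃ c, (s, c) ∈ (go pre post w s).head? := by
    cases w with
    | nil => simp at h1
    | cons x l =>
      simp at h1
      simp [go, h1]
  have hlast : (s, (1 : C)) ∈ (go pre post w s).getLast? := by
    rcases List.eq_nil_or_concat w with rfl | ⟨v, z, rfl⟩
    · simp at h2
    simp only [List.concat_eq_append] at *
    simp at h2
    rw [go_append]
    subst h2
    simp [go, hd, pre, post]
  obtain ⟨c, hc⟩ := hhead
  obtain ⟨Q, _, j, e, hj, he⟩ := case_normalized n hT hC _ hcyc hlen (by rw [hkg]; exact hk) s c hc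
    hlast
  let e1 : Q := (e ^ (s : ℤ) * j c0⁻¹) ^ (s : ℤ)
  have hss : ∀ g : Q, (g ^ (s : ℤ)) ^ (s : ℤ) = g := by
    intro g
    rcases Int.units_eq_one_or s with rfl | rfl <;> simp
  refine ⟨Q, _, j, e1, hj, ?_⟩
  have h4 := go_ev pre post j e1 e (by
    intro ε
    by_cases h : ε = s
    · subst h
      simp only [e1, hss, pre, post, if_true, map_one, one_mul]
    · have := hεs ε h
      subst this
      have h5 : ∀ g : Q, g ^ (((-s : ℤˣ)) : ℤ) = (g ^ (s : ℤ))⁻¹ := by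
        intro g; rw [Units.val_neg, zpow_neg]
      simp only [e1, h5, hss, pre, post, hs1, if_false, map_one, mul_one, mul_inv_rev, map_inv,
        inv_inv]) w s
  rw [he, hhd, mul_one] at h4
  simpa using h4

theorem main_step (n : ℕ) (hT : TT n) (hC : LI C) (w : List (ℤˣ × C)) (hw : Cyc w)
    (hne : w ≠ []) (hn : w.length ≤ n) : Solv w := by
  by_cases halt : w.IsChain (fun a b => a.1 ≠ b.1)
  · obtain ⟨x, l, rfl⟩ := List.exists_cons_of_ne_nil hne
    obtain ⟨y, hy⟩ : ∃ y, y ∈ (x :: l).getLast? := ⟨_, List.getLast?_eq_some_getLast (by simp)⟩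
    have h1 := alt_sum x l halt y hy
    by_cases hxy : x.1 = y.1
    · refine case_samesign n hT hC _ hw hn ?_ x.1 x.2 y.2 (by simp) (by rw [hxy]; exact hy)
      intro h0
      rw [h0, ← hxy] at h1
      rcases Int.units_eq_one_or x.1 with h | h <;> simp [h] at h1
    · refine case_zero_alt n hT hC _ hw hne hn ?_
      rw [List.isChain_append]
      refine ⟨halt, halt, ?_⟩
      intro a ha b hb
      have hay : a = y := by
        have := ha.symm.trans hy
        simpa using this
      simp at hb
      subst hay hb
      exact fun h => hxy h.symm
  · by_cases hk : kk w = 0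
    · exact case_zero_nonalt n hT hC w hw hn hk halt
    · rw [List.isChain_iff_forall_rel_of_append_cons_cons] at halt
      push Not at halt
      obtain ⟨x, y, u, v, rfl, hxy⟩ := halt
      have h0 : u ++ x :: y :: v = (u ++ [x]) ++ (y :: v) := by simp
      rw [h0] at hw hn hk ⊢
      refine Solv.rotate (case_samesign n hT hC _ hw.rotate ?_ ?_ x.1 y.2 x.2 ?_ ?_)
      · simp at hn ⊢; omega
      · rw [kk_append] at hk ⊢
        rwa [add_comm]
      · simp [hxy]
      · rw [List.getLast?_append]; simp

theorem TT_all (n : ℕ) : TT n := by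
  induction n with
  | zero =>
    intro C _ _ w _ _ h
    omega
  | succ n ih =>
    intro C _ hC w hne hw hl
    exact main_step n ih hC w hw hne (by omega)

theorem solv_all (hC : LI C) (w : List (ℤˣ × C)) (hw : Cyc w) (hne : w ≠ []) : Solv w :=
  TT_all (w.length + 1) C hC w hne hw (by omega)

end main
section final

theorem ofFn_pair {A B Q : Type} [Group A] [Group B] [Group Q] (n : ℕ)
    (a : Fin n → A) (b : Fin n → B) (j : Coprod A B →* Q) (e : Q) :
    evj j e (List.ofFn fun i => [((1 : ℤˣ), (Coprod.inr (b i) : Coprod A B)),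
      ((-1 : ℤˣ), Coprod.inl (a i))]).flatten =
    (List.ofFn fun i => e * j (Coprod.inr (b i)) * e⁻¹ * j (Coprod.inl (a i))).prod := by
  induction n with
  | zero => simp [evj]
  | succ n ih =>
    have := ih (fun i => a i.succ) (fun i => b i.succ)
    rw [List.ofFn_succ, List.ofFn_succ, List.flatten_cons, List.prod_cons, ← this]
    simp [evj, mul_assoc]

theorem ofFn_pair' {A B Q : Type} [Group A] [Group B] [Group Q] (n : ℕ)
    (a : Fin n → A) (b : Fin n → B) (j : Coprod A B →* Q) (e : Q) :
    evj j e (List.ofFn fun i => [((-1 : ℤˣ), (Coprod.inl (a i) : Coprod A B)),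
      ((1 : ℤˣ), Coprod.inr (b i))]).flatten =
    e⁻¹ * (List.ofFn fun i => j (Coprod.inl (a i)) * (e * j (Coprod.inr (b i)) * e⁻¹)).prod * e := by
  induction n with
  | zero => simp [evj]
  | succ n ih =>
    have := ih (fun i => a i.succ) (fun i => b i.succ)
    rw [List.ofFn_succ, List.ofFn_succ, List.flatten_cons, List.prod_cons, evj, List.map_append,
      List.prod_append, ← evj, ← evj, this]
    simp [evj, mul_assoc]

theorem final {A B : Type} [Group A] [Group B] (hA : LI A) (hB : LI B)
    (r : Coprod A B) (hr : CyclicallyReducedGE2 r) :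
    ∃ (Q : Type) (_ : Group Q) (F : Coprod A B →* Q), F r = 1 ∧
      Function.Injective (F.comp Coprod.inl) ∧ Function.Injective (F.comp Coprod.inr) := by
  have hC := hA.coprod hB
  have hcyc : ∀ w : List (ℤˣ × Coprod A B), (∀ x ∈ w, x.2 ≠ 1) → Cyc w := by
    intro w h
    rw [Cyc, List.isChain_iff_forall_rel_of_append_cons_cons]
    intro x y u v huv h1
    refine absurd h1 (h x ?_)
    have : x ∈ w ++ w := by rw [huv]; simp
    simpa using this
  have hl : ∀ a : A, a ≠ 1 → (Coprod.inl a : Coprod A B) ≠ 1 := fun a h h1 =>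
    h (Coprod.inl_injective (h1.trans (map_one _).symm))
  have hrr : ∀ b : B, b ≠ 1 → (Coprod.inr b : Coprod A B) ≠ 1 := fun a h h1 =>
    h (Coprod.inr_injective (h1.trans (map_one _).symm))
  have key : ∀ (Q : Type) (_ : Group Q) (j : Coprod A B →* Q) (e : Q), Function.Injective j →
      ∃ F : Coprod A B →* Q, (∀ a, F (Coprod.inl a) = j (Coprod.inl a)) ∧
        (∀ b, F (Coprod.inr b) = e * j (Coprod.inr b) * e⁻¹) ∧
        Function.Injective (F.comp Coprod.inl) ∧ Function.Injective (F.comp Coprod.inr) := by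
    intro Q _ j e hj
    refine ⟨Coprod.lift (j.comp Coprod.inl)
      ((MulAut.conj e).toMonoidHom.comp (j.comp Coprod.inr)), by simp, by simp, ?_, ?_⟩
    · rw [Coprod.lift_comp_inl]
      exact hj.comp Coprod.inl_injective
    · rw [Coprod.lift_comp_inr]
      exact (MulAut.conj e).injective.comp (hj.comp Coprod.inr_injective)
  obtain ⟨n, hn, ⟨a, b, ha, hb, rfl⟩ | ⟨a, b, ha, hb, rfl⟩⟩ := hr
  · obtain ⟨Q, _, j, e, hj, he⟩ := solv_all hC
      (List.ofFn fun i => [((-1 : ℤˣ), (Coprod.inl (a i) : Coprod A B)),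
      ((1 : ℤˣ), Coprod.inr (b i))]).flatten (hcyc _ (by
        intro x hx
        simp only [List.mem_flatten, List.mem_ofFn] at hx
        obtain ⟨l, ⟨i, rfl⟩, hx⟩ := hx
        simp at hx
        rcases hx with rfl | rfl
        · exact hl _ (ha i)
        · exact hrr _ (hb i))) (by
        obtain ⟨m, rfl⟩ := Nat.exists_eq_succ_of_ne_zero hn.ne'
        rw [List.ofFn_succ]; simp)
    obtain ⟨F, h1, h2, h3, h4⟩ := key Q _ j e hj
    refine ⟨Q, _, F, ?_, h3, h4⟩
    rw [ofFn_pair'] at he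
    rw [map_list_prod, List.map_ofFn]
    simp only [Function.comp_def, map_mul, h1, h2]
    have h5 : (List.ofFn fun i => j (Coprod.inl (a i)) * (e * j (Coprod.inr (b i)) * e⁻¹)).prod * e
      = e := by
      rw [mul_assoc, inv_mul_eq_one] at he
      exact he.symm
    simpa using h5
  · obtain ⟨Q, _, j, e, hj, he⟩ := solv_all hC
      (List.ofFn fun i => [((1 : ℤˣ), (Coprod.inr (b i) : Coprod A B)),
      ((-1 : ℤˣ), Coprod.inl (a i))]).flatten (hcyc _ (by
        intro x hx
        simp only [List.mem_flatten, List.mem_ofFn] at hx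
        obtain ⟨l, ⟨i, rfl⟩, hx⟩ := hx
        simp at hx
        rcases hx with rfl | rfl
        · exact hrr _ (hb i)
        · exact hl _ (ha i))) (by
        obtain ⟨m, rfl⟩ := Nat.exists_eq_succ_of_ne_zero hn.ne'
        rw [List.ofFn_succ]; simp)
    obtain ⟨F, h1, h2, h3, h4⟩ := key Q _ j e hj
    refine ⟨Q, _, F, ?_, h3, h4⟩
    rw [ofFn_pair] at he
    rw [map_list_prod, List.map_ofFn]
    simp only [Function.comp_def, map_mul, h1, h2]
    exact he

theorem final_inj {A B X : Type} [Group A] [Group B] [Group X] (r : Coprod A B) {Q : Type} [Group Q]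
    (F : Coprod A B →* Q) (hF : F r = 1) (i : X →* Coprod A B)
    (hi : Function.Injective (F.comp i)) :
    Function.Injective ((QuotientGroup.mk' (Subgroup.normalClosure {r})).comp i) := by
  rw [injective_iff_map_eq_one] at hi ⊢
  intro x hx
  refine hi x ?_
  have h1 : i x ∈ Subgroup.normalClosure {r} := by simpa using hx
  have h2 : Subgroup.normalClosure {r} ≤ F.ker :=
    Subgroup.normalClosure_le_normal (by simpa using hF)
  exact h2 h1

end final

end FHS

/-- **Freiheitssatz for locally indicable groups** (Howie, Brodskii, Short). -/
theorem freiheitssatz_locally_indicable {A B : Type} [Group A] [Group B]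
    (hA : LocallyIndicable A) (hB : LocallyIndicable B)
    (r : Coprod A B) (hr : CyclicallyReducedGE2 r) :
    Function.Injective
      ((QuotientGroup.mk' (Subgroup.normalClosure {r})).comp (Coprod.inl : A →* Coprod A B)) ∧
    Function.Injective
      ((QuotientGroup.mk' (Subgroup.normalClosure {r})).comp (Coprod.inr : B →* Coprod A B)) := by
  obtain ⟨Q, _, F, hF, h1, h2⟩ := FHS.final (FHS.LI.of_locallyIndicable hA)
    (FHS.LI.of_locallyIndicable hB) r hr
  exact ⟨FHS.final_inj r F hF _ h1, FHS.final_inj r F hF _ h2⟩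
end
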